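/- arXiv:1608.07021 — 5 statements merged into one kernel-verified Lean document; each statement's English description precedes it below -/
import Mathlib

section
/- Every M♮-concave function f : 2^N → ℝ ∪ {-∞} has the multiple exchange property (M♮-EXC_m): for any X, Y ⊆ N and any I ⊆ X \ Y, there exists J ⊆ Y \ X such that f(X) + f(Y) ≤ f((X \ I) ∪ J) + f((Y \ J) ∪ I). -/
open Finset

/-- (M♮-EXC): exchange property for set functions into ℝ ∪ {-∞}. -/
def MExc {N : Type*} [DecidableEq N] (f : Finset N → WithBot ℝ) : Prop :=
  ∀ X Y : Finset N, ∀ i ∈ X \ Y,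
    f X + f Y ≤ max (f (X.erase i) + f (insert i Y))
      ((Y \ X).sup fun j => f (insert j (X.erase i)) + f ((insert i Y).erase j))

/-- (M♮-EXC_m): multiple exchange property for set functions. -/
def MExcM {N : Type*} [DecidableEq N] (f : Finset N → WithBot ℝ) : Prop :=
  ∀ X Y : Finset N, ∀ I ⊆ X \ Y, ∃ J ⊆ Y \ X,
    f X + f Y ≤ f ((X \ I) ∪ J) + f ((Y \ J) ∪ I)

/-- Every coordinate vector `e i` is, modulo `U`, either zero or equal to another `e j`. -/
def PairsCoords {ι : Type*} [DecidableEq ι] (U : Submodule ℝ (ι → ℝ)) : Prop :=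
  ∀ i, Pi.single i 1 ∈ U ∨ ∃ j, j ≠ i ∧ Pi.single i (1 : ℝ) - Pi.single j 1 ∈ U

open Classical in
lemma PairsCoords.two_mul_finrank_quotient_le {ι : Type*} [Fintype ι] [DecidableEq ι]
    {U : Submodule ℝ (ι → ℝ)} (hU : PairsCoords U) :
    2 * Module.finrank ℝ ((ι → ℝ) ⧸ U) ≤
      #(univ.filter fun i => Pi.single i (1 : ℝ) ∉ U) := by
  set A := univ.filter fun i => Pi.single i (1 : ℝ) ∉ U with hA
  set v : ι → (ι → ℝ) ⧸ U := fun i => U.mkQ (Pi.single i 1) with hv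
  have hcard : 2 * #(A.image v) ≤ #A := by
    refine mul_card_image_le_card A 2 fun b hb => ?_
    obtain ⟨i, hi, rfl⟩ := mem_image.1 hb
    have hi' : Pi.single i (1 : ℝ) ∉ U := (mem_filter.1 hi).2
    obtain ⟨j, hji, hj⟩ := (hU i).resolve_left hi'
    have hvj : v j = v i := by
      simp only [hv, Submodule.mkQ_apply]
      exact ((Submodule.Quotient.eq U).2 hj).symm
    have hj' : Pi.single j (1 : ℝ) ∉ U := fun h => hi' <| by
      simpa using U.add_mem hj h
    rw [← card_pair hji]
    refine card_le_card fun k hk => ?_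
    rcases mem_insert.1 hk with rfl | hk
    · simp [hA, hj', hvj]
    · rw [mem_singleton.1 hk]
      simp [hA, hi']
  have hspan : Submodule.span ℝ (A.image v : Set ((ι → ℝ) ⧸ U)) = ⊤ := by
    rw [eq_top_iff]
    intro y _
    obtain ⟨x, rfl⟩ := U.mkQ_surjective y
    rw [pi_eq_sum_univ' x, map_sum]
    refine Submodule.sum_mem _ fun i _ => ?_
    rw [map_smul]
    refine Submodule.smul_mem _ (x i) (?_ : v i ∈ _)
    by_cases hi : Pi.single i (1 : ℝ) ∈ U
    · have : v i = 0 := by simpa [hv] using hi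
      rw [this]
      exact Submodule.zero_mem _
    · exact Submodule.subset_span (mem_coe.2 (mem_image_of_mem v (by simp [hA, hi])))
  have hle := finrank_span_finset_le_card (R := ℝ) (A.image v)
  rw [Set.finrank, hspan, finrank_top] at hle
  omega

lemma PairsCoords.two_mul_finrank_quotient_le_card {ι : Type*} [Fintype ι] [DecidableEq ι]
    {U : Submodule ℝ (ι → ℝ)} (hU : PairsCoords U) :
    2 * Module.finrank ℝ ((ι → ℝ) ⧸ U) ≤ Fintype.card ι :=
  hU.two_mul_finrank_quotient_le.trans (card_le_univ _)

lemma PairsCoords.two_mul_finrank_quotient_lt_card {ι : Type*} [Fintype ι] [DecidableEq ι]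
    {U : Submodule ℝ (ι → ℝ)} (hU : PairsCoords U) {i : ι}
    (hi : Pi.single i (1 : ℝ) ∈ U) :
    2 * Module.finrank ℝ ((ι → ℝ) ⧸ U) < Fintype.card ι := by
  classical
  refine hU.two_mul_finrank_quotient_le.trans_lt (card_lt_univ_of_notMem (x := i) ?_)
  simp [hi]

/-- Two such subspaces meet nontrivially: if one contains a coordinate vector then its dimension
is more than half, and otherwise both can be cut down to the zero-sum hyperplane. -/
lemma PairsCoords.inf_ne_bot {ι : Type*} [Fintype ι] [DecidableEq ι] [Nonempty ι]
    {U V : Submodule ℝ (ι → ℝ)} (hU : PairsCoords U) (hV : PairsCoords V) : U ⊓ V ≠ ⊥ := by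
  by_cases h : ∃ i, Pi.single i (1 : ℝ) ∈ U ∨ Pi.single i (1 : ℝ) ∈ V
  · intro hbot
    have h1 := Submodule.finrank_sup_add_finrank_inf_eq U V
    rw [hbot, finrank_bot] at h1
    have h2 := U.finrank_quotient_add_finrank
    have h3 := V.finrank_quotient_add_finrank
    have h4 := (U ⊔ V).finrank_le
    have h5 := hU.two_mul_finrank_quotient_le_card
    have h6 := hV.two_mul_finrank_quotient_le_card
    rw [Module.finrank_fintype_fun_eq_card] at h2 h3 h4
    obtain ⟨i, hi | hi⟩ := h
    · have := hU.two_mul_finrank_quotient_lt_card hi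
      omega
    · have := hV.two_mul_finrank_quotient_lt_card hi
      omega
  · push Not at h
    let H : Submodule ℝ (ι → ℝ) := LinearMap.ker (∑ i, LinearMap.proj i : (ι → ℝ) →ₗ[ℝ] ℝ)
    have hdiff (i j : ι) : Pi.single i (1 : ℝ) - Pi.single j 1 ∈ H := by
      simp [H]
    have hUH : PairsCoords (U ⊓ H) := fun i => by
      obtain ⟨j, hji, hj⟩ := (hU i).resolve_left (h i).1
      exact Or.inr ⟨j, hji, hj, hdiff i j⟩
    have hVH : PairsCoords (V ⊓ H) := fun i => by
      obtain ⟨j, hji, hj⟩ := (hV i).resolve_left (h i).2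
      exact Or.inr ⟨j, hji, hj, hdiff i j⟩
    have hH : H ≠ ⊤ := fun htop => by
      obtain ⟨i⟩ := ‹Nonempty ι›
      have : Pi.single i (1 : ℝ) ∈ H := htop ▸ Submodule.mem_top
      simp [H] at this
    intro hbot
    have hbot' : (U ⊓ H) ⊓ (V ⊓ H) = ⊥ :=
      le_bot_iff.1 ((inf_le_inf inf_le_left inf_le_left).trans hbot.le)
    have h1 := Submodule.finrank_sup_add_finrank_inf_eq (U ⊓ H) (V ⊓ H)
    rw [hbot', finrank_bot] at h1
    have h2 := (U ⊓ H).finrank_quotient_add_finrank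
    have h3 := (V ⊓ H).finrank_quotient_add_finrank
    have h4 : Module.finrank ℝ ↥((U ⊓ H) ⊔ (V ⊓ H)) ≤ Module.finrank ℝ H :=
      Submodule.finrank_mono (sup_le inf_le_right inf_le_right)
    have h5 := hUH.two_mul_finrank_quotient_le_card
    have h6 := hVH.two_mul_finrank_quotient_le_card
    have h7 := Submodule.finrank_lt hH
    rw [Module.finrank_fintype_fun_eq_card] at h2 h3 h7
    omega

/-- (M♮-EXC) for a real-valued function on a family `D` of sets. -/
def ExchangeOn {N : Type*} [DecidableEq N] (D : Set (Finset N)) (g : Finset N → ℝ) : Prop :=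
  ∀ X ∈ D, ∀ Y ∈ D, ∀ i ∈ X \ Y,
    (X.erase i ∈ D ∧ insert i Y ∈ D ∧ g X + g Y ≤ g (X.erase i) + g (insert i Y)) ∨
    ∃ j ∈ Y \ X, insert j (X.erase i) ∈ D ∧ (insert i Y).erase j ∈ D ∧
      g X + g Y ≤ g (insert j (X.erase i)) + g ((insert i Y).erase j)

section Distributions

variable {N : Type*} [Fintype N]

/-- The probability distributions on `Finset N` supported on `D`. -/
def distOn (D : Set (Finset N)) : Set (Finset N → ℝ) :=
  {μ | μ ∈ stdSimplex ℝ (Finset N) ∧ ∀ J, J ∉ D → μ J = 0}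

lemma isCompact_distOn (D : Set (Finset N)) : IsCompact (distOn D) := by
  have : distOn D = stdSimplex ℝ (Finset N) ∩ ⋂ J ∈ Dᶜ, {μ | μ J = 0} := by
    ext μ
    simp [distOn]
  rw [this]
  exact (isCompact_stdSimplex ℝ _).inter_right <| isClosed_biInter fun J _ =>
    isClosed_eq (continuous_apply J) continuous_const

lemma convex_distOn (D : Set (Finset N)) : Convex ℝ (distOn D) := by
  intro μ hμ ν hν a b ha hb hab
  refine ⟨convex_stdSimplex ℝ _ hμ.1 hν.1 ha hb hab, fun J hJ => ?_⟩
  simp [hμ.2 J hJ, hν.2 J hJ]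

/-- The directions along which one can move from `μ` within `distOn D`. -/
def FeasibleDir (D : Set (Finset N)) (μ Δ : Finset N → ℝ) : Prop :=
  ∑ J, Δ J = 0 ∧ ∀ J, 0 < μ J ∨ 0 ≤ Δ J ∧ (J ∉ D → Δ J = 0)

lemma FeasibleDir.zero (D : Set (Finset N)) (μ : Finset N → ℝ) : FeasibleDir D μ 0 := by
  simp [FeasibleDir]

lemma FeasibleDir.add {D : Set (Finset N)} {μ Δ Δ' : Finset N → ℝ} (h : FeasibleDir D μ Δ)
    (h' : FeasibleDir D μ Δ') : FeasibleDir D μ (Δ + Δ') := by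
  refine ⟨by simp [sum_add_distrib, h.1, h'.1], fun J => ?_⟩
  rcases h.2 J with hJ | hJ
  · exact Or.inl hJ
  rcases h'.2 J with hJ' | hJ'
  · exact Or.inl hJ'
  exact Or.inr ⟨add_nonneg hJ.1 hJ'.1, fun hD => by simp [hJ.2 hD, hJ'.2 hD]⟩

lemma FeasibleDir.smul {D : Set (Finset N)} {μ Δ : Finset N → ℝ} (h : FeasibleDir D μ Δ)
    {r : ℝ} (hr : 0 ≤ r) : FeasibleDir D μ (r • Δ) := by
  refine ⟨by simp [← mul_sum, h.1], fun J => (h.2 J).imp_right fun hJ => ?_⟩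
  exact ⟨mul_nonneg hr hJ.1, fun hD => by simp [hJ.2 hD]⟩

lemma FeasibleDir.eventually_mem {D : Set (Finset N)} {μ Δ : Finset N → ℝ}
    (hμ : μ ∈ distOn D) (h : FeasibleDir D μ Δ) :
    ∀ᶠ ε : ℝ in nhdsWithin 0 (Set.Ioi 0), μ + ε • Δ ∈ distOn D := by
  have hnonneg : ∀ᶠ ε : ℝ in nhdsWithin 0 (Set.Ioi 0), ∀ J, 0 ≤ μ J + ε * Δ J := by
    refine Filter.eventually_all.2 fun J => ?_
    rcases h.2 J with hJ | hJ
    · have hlim : Filter.Tendsto (fun ε : ℝ => μ J + ε * Δ J) (nhdsWithin 0 (Set.Ioi 0))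
          (nhds (μ J)) := by
        refine Filter.Tendsto.mono_left ?_ nhdsWithin_le_nhds
        exact Continuous.tendsto' (by fun_prop) _ _ (by simp)
      exact (hlim.eventually (lt_mem_nhds hJ)).mono fun ε hε => hε.le
    · filter_upwards [self_mem_nhdsWithin] with ε hε
      exact add_nonneg (hμ.1.1 J) (mul_nonneg (le_of_lt hε) hJ.1)
  filter_upwards [hnonneg] with ε hε
  refine ⟨⟨fun J => by simpa using hε J, ?_⟩, fun J hJ => ?_⟩
  · simp [sum_add_distrib, ← mul_sum, h.1, hμ.1.2]
  · have hμJ := hμ.2 J hJ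
    rcases h.2 J with hpos | hΔ
    · exact absurd hμJ hpos.ne'
    · simp [hμJ, hΔ.2 hJ]

variable [DecidableEq N]

/-- The real indicator vector of a finite set. -/
def indVec (J : Finset N) : N → ℝ := fun i => if i ∈ J then 1 else 0

/-- The barycenter of the indicator vectors under the weights `μ`. -/
noncomputable def bary : (Finset N → ℝ) →ₗ[ℝ] (N → ℝ) := Fintype.linearCombination ℝ indVec

/-- The integral of `g` under the weights `μ`. -/
noncomputable def meanVal (g : Finset N → ℝ) : (Finset N → ℝ) →ₗ[ℝ] ℝ :=
  Fintype.linearCombination ℝ g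

lemma bary_single (J : Finset N) : bary (Pi.single J 1) = indVec J := by
  simp [bary, Fintype.linearCombination_apply_single]

lemma meanVal_single (g : Finset N → ℝ) (J : Finset N) : meanVal g (Pi.single J 1) = g J := by
  simp [meanVal, Fintype.linearCombination_apply_single]

lemma bary_apply (μ : Finset N → ℝ) (i : N) : bary μ i = ∑ J with i ∈ J, μ J := by
  simp [bary, Fintype.linearCombination_apply, indVec, sum_filter]

lemma single_mem_distOn {D : Set (Finset N)} {J : Finset N} (hJ : J ∈ D) :
    Pi.single J 1 ∈ distOn D := by
  refine ⟨single_mem_stdSimplex ℝ J, fun K hK => ?_⟩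
  rw [Pi.single_apply, if_neg]
  rintro rfl
  exact hK hJ

lemma apply_le_bary {D : Set (Finset N)} {μ : Finset N → ℝ} (hμ : μ ∈ distOn D) {J : Finset N}
    {i : N} (hi : i ∈ J) : μ J ≤ bary μ i := by
  rw [bary_apply]
  exact single_le_sum (f := μ) (fun K _ => hμ.1.1 K) (by simp [hi])

lemma one_sub_bary {D : Set (Finset N)} {μ : Finset N → ℝ} (hμ : μ ∈ distOn D) (i : N) :
    1 - bary μ i = ∑ J with i ∉ J, μ J := by
  rw [bary_apply, ← hμ.1.2, ← sum_filter_add_sum_filter_not univ (fun J => i ∈ J) μ]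
  ring

lemma apply_le_one_sub_bary {D : Set (Finset N)} {μ : Finset N → ℝ} (hμ : μ ∈ distOn D)
    {J : Finset N} {i : N} (hi : i ∉ J) : μ J ≤ 1 - bary μ i := by
  rw [one_sub_bary hμ]
  exact single_le_sum (f := μ) (fun K _ => hμ.1.1 K) (by simp [hi])

lemma exists_mem_support_of_bary_pos {D : Set (Finset N)} {μ : Finset N → ℝ}
    (hμ : μ ∈ distOn D) {i : N} (hi : 0 < bary μ i) : ∃ J ∈ D, i ∈ J ∧ 0 < μ J := by
  rw [bary_apply] at hi
  obtain ⟨J, hJ, hpos⟩ := exists_lt_of_sum_lt (f := fun _ => (0 : ℝ)) (by simpa using hi)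
  exact ⟨J, by_contra fun h => hpos.ne' (hμ.2 J h), (mem_filter.1 hJ).2, hpos⟩

lemma exists_mem_support_of_bary_lt_one {D : Set (Finset N)} {μ : Finset N → ℝ}
    (hμ : μ ∈ distOn D) {i : N} (hi : bary μ i < 1) : ∃ J ∈ D, i ∉ J ∧ 0 < μ J := by
  rw [← sub_pos, one_sub_bary hμ] at hi
  obtain ⟨J, hJ, hpos⟩ := exists_lt_of_sum_lt (f := fun _ => (0 : ℝ)) (by simpa using hi)
  exact ⟨J, by_contra fun h => hpos.ne' (hμ.2 J h), (mem_filter.1 hJ).2, hpos⟩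

/-- A distribution whose barycenter is a 0/1 vector is a point mass. -/
lemma exists_eq_single_of_bary {D : Set (Finset N)} {μ : Finset N → ℝ} (hμ : μ ∈ distOn D)
    {K : Finset N} (hK : bary μ = indVec K) : K ∈ D ∧ μ = Pi.single K 1 := by
  have hzero (J : Finset N) (hJ : J ≠ K) : μ J = 0 := by
    refine le_antisymm ?_ (hμ.1.1 J)
    by_contra! hpos
    refine hJ (ext fun i => ⟨fun hi => ?_, fun hi => ?_⟩)
    · have := apply_le_bary hμ hi
      by_contra hiK
      simp [hK, indVec, hiK] at this
      linarith
    · by_contra hiJ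
      have := apply_le_one_sub_bary hμ hiJ
      simp [hK, indVec, hi] at this
      linarith
  have hone : μ K = 1 := by
    rw [← hμ.1.2]
    exact (sum_eq_single K (fun J _ hJ => hzero J hJ) (by simp)).symm
  refine ⟨by_contra fun h => ?_, ?_⟩
  · simp [hμ.2 K h] at hone
  · ext J
    rcases eq_or_ne J K with rfl | hJ
    · simp [hone]
    · simp [hzero J hJ, hJ]

lemma feasibleDir_single_sub_single {D : Set (Finset N)} {μ : Finset N → ℝ} {J K : Finset N}
    (hJ : J ∈ D) (hK : 0 < μ K) : FeasibleDir D μ (Pi.single J 1 - Pi.single K 1) := by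
  refine ⟨by simp, fun L => ?_⟩
  rcases eq_or_ne L K with rfl | hL
  · exact Or.inl hK
  refine Or.inr ⟨?_, fun hD => ?_⟩
  · simp only [Pi.sub_apply, Pi.single_apply, hL, if_false, sub_zero]
    positivity
  · have : L ≠ J := by
      rintro rfl
      exact hD hJ
    simp [hL, this]

/-- Vectors `d` such that the barycenter of `μ` can be moved along both `d` and `-d` with no total
loss in the value of `g`. -/
noncomputable def reversibleDirs (D : Set (Finset N)) (g μ : Finset N → ℝ) :
    Submodule ℝ (N → ℝ) where
  carrier := {d | ∃ Δ Δ', FeasibleDir D μ Δ ∧ FeasibleDir D μ Δ' ∧ bary Δ = d ∧ bary Δ' = -d ∧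
    0 ≤ meanVal g Δ + meanVal g Δ'}
  add_mem' := by
    rintro d e ⟨Δ₁, Δ₁', h₁, h₁', hb₁, hb₁', hv₁⟩ ⟨Δ₂, Δ₂', h₂, h₂', hb₂, hb₂', hv₂⟩
    refine ⟨Δ₁ + Δ₂, Δ₁' + Δ₂', h₁.add h₂, h₁'.add h₂', by simp [hb₁, hb₂], ?_, ?_⟩
    · rw [map_add, hb₁', hb₂', neg_add]
    · simp only [map_add]
      linarith
  zero_mem' := ⟨0, 0, FeasibleDir.zero D μ, FeasibleDir.zero D μ, by simp, by simp, by simp⟩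
  smul_mem' := by
    rintro r d ⟨Δ, Δ', h, h', hb, hb', hv⟩
    rcases le_total 0 r with hr | hr
    · refine ⟨r • Δ, r • Δ', h.smul hr, h'.smul hr, by simp [hb], by simp [hb'], ?_⟩
      rw [map_smul, map_smul, ← smul_add]
      exact mul_nonneg hr hv
    · have hr' : 0 ≤ -r := neg_nonneg.2 hr
      refine ⟨-r • Δ', -r • Δ, h'.smul hr', h.smul hr', ?_, ?_, ?_⟩
      · rw [map_smul, hb', smul_neg, neg_smul, neg_neg]
      · rw [map_smul, hb, neg_smul]
      · rw [map_smul, map_smul, ← smul_add, add_comm]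
        exact mul_nonneg hr' hv

/-- Exchanging an element that is fractional in the barycenter gives a reversible direction. -/
lemma ExchangeOn.exists_reversibleDir {D : Set (Finset N)} {g μ : Finset N → ℝ}
    (hD : ExchangeOn D g) (hμ : μ ∈ distOn D) {i : N} (h0 : 0 < bary μ i) (h1 : bary μ i < 1) :
    Pi.single i 1 ∈ reversibleDirs D g μ ∨
      ∃ j, j ≠ i ∧ (0 < bary μ j ∧ bary μ j < 1) ∧
        Pi.single i (1 : ℝ) - Pi.single j 1 ∈ reversibleDirs D g μ := by
  obtain ⟨Z, hZ, hiZ, hZpos⟩ := exists_mem_support_of_bary_pos hμ h0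
  obtain ⟨Z', hZ', hiZ', hZpos'⟩ := exists_mem_support_of_bary_lt_one hμ h1
  rcases hD Z hZ Z' hZ' i (mem_sdiff.2 ⟨hiZ, hiZ'⟩) with ⟨hA, hB, hle⟩ | ⟨j, hj, hA, hB, hle⟩
  · refine Or.inl ⟨_, _, feasibleDir_single_sub_single hB hZpos',
      feasibleDir_single_sub_single hA hZpos, ?_, ?_, ?_⟩
    · rw [map_sub, bary_single, bary_single]
      ext k
      by_cases hk : k = i <;> simp [indVec, hk, hiZ']
    · rw [map_sub, bary_single, bary_single]
      ext k
      by_cases hk : k = i <;> simp [indVec, hk, hiZ]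
    · simp only [map_sub, meanVal_single]
      linarith
  · obtain ⟨hjZ', hjZ⟩ := mem_sdiff.1 hj
    have hji : j ≠ i := by
      rintro rfl
      exact hiZ' hjZ'
    have hj0 := apply_le_bary hμ hjZ'
    have hj1 := apply_le_one_sub_bary hμ hjZ
    refine Or.inr ⟨j, hji, ⟨by linarith, by linarith⟩, _, _,
      feasibleDir_single_sub_single hB hZpos', feasibleDir_single_sub_single hA hZpos, ?_, ?_, ?_⟩
    · rw [map_sub, bary_single, bary_single]
      ext k
      by_cases hki : k = i <;> by_cases hkj : k = j <;>
        simp_all [indVec]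
    · rw [map_sub, bary_single, bary_single]
      ext k
      by_cases hki : k = i <;> by_cases hkj : k = j <;>
        simp_all [indVec]
    · simp only [map_sub, meanVal_single]
      linarith

/-- At an extreme optimal barycenter no coordinate is fractional: otherwise the reversible
directions of the two functions would meet nontrivially. -/
lemma exists_common_of_bary_eq {D₁ D₂ : Set (Finset N)} {g₁ g₂ : Finset N → ℝ}
    (h₁ : ExchangeOn D₁ g₁) (h₂ : ExchangeOn D₂ g₂) {ν₁ ν₂ : Finset N → ℝ}
    (hν₁ : ν₁ ∈ distOn D₁) (hν₂ : ν₂ ∈ distOn D₂) (hν : bary ν₁ = bary ν₂) :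
    ∃ K, K ∈ D₁ ∧ K ∈ D₂ ∧ meanVal g₁ ν₁ + meanVal g₂ ν₂ ≤ g₁ K + g₂ K := by
  have hbary : Continuous (bary (N := N)) := LinearMap.continuous_of_finiteDimensional _
  have hval (g : Finset N → ℝ) : Continuous (meanVal g) :=
    LinearMap.continuous_of_finiteDimensional _
  set P : Set ((Finset N → ℝ) × (Finset N → ℝ)) :=
    (distOn D₁ ×ˢ distOn D₂) ∩ {p | bary p.1 = bary p.2} with hP
  have hPc : IsCompact P := ((isCompact_distOn D₁).prod (isCompact_distOn D₂)).inter_right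
    (isClosed_eq (by fun_prop) (by fun_prop))
  set val : (Finset N → ℝ) × (Finset N → ℝ) → ℝ := fun p => meanVal g₁ p.1 + meanVal g₂ p.2
    with hvaldef
  have hvalc : Continuous val := by
    have := hval g₁
    have := hval g₂
    fun_prop
  obtain ⟨m, hmP, hm⟩ := hPc.exists_isMaxOn ⟨(ν₁, ν₂), ⟨hν₁, hν₂⟩, hν⟩ hvalc.continuousOn
  have hmax : ∀ p ∈ P, val p ≤ val m := fun p hp => hm hp
  set Q : Set (N → ℝ) := (fun p => bary p.1) '' (P ∩ {p | val m ≤ val p}) with hQ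
  have hQc : IsCompact Q := (hPc.inter_right (isClosed_le continuous_const hvalc)).image
    (by fun_prop)
  obtain ⟨x, hx⟩ := hQc.extremePoints_nonempty ⟨_, m, ⟨hmP, le_refl (val m)⟩, rfl⟩
  obtain ⟨hxQ, hext⟩ := mem_extremePoints.1 hx
  obtain ⟨⟨μ₁, μ₂⟩, ⟨⟨⟨hμ₁, hμ₂⟩, hμ⟩, hopt⟩, hxμ⟩ := hxQ
  simp only [Set.mem_ofPred_eq] at hμ hopt hμ₁ hμ₂ hxμ
  have hint : ∀ d ∈ reversibleDirs D₁ g₁ μ₁ ⊓ reversibleDirs D₂ g₂ μ₂, d = 0 := by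
    rintro d ⟨⟨Δ₁, Δ₁', hf₁, hf₁', hb₁, hb₁', hv₁⟩, ⟨Δ₂, Δ₂', hf₂, hf₂', hb₂, hb₂', hv₂⟩⟩
    obtain ⟨ε, he₁, he₁', he₂, he₂', hε⟩ := ((hf₁.eventually_mem hμ₁).and
      ((hf₁'.eventually_mem hμ₁).and ((hf₂.eventually_mem hμ₂).and
        ((hf₂'.eventually_mem hμ₂).and self_mem_nhdsWithin)))).exists
    have hε : 0 < ε := hε
    have hp : (μ₁ + ε • Δ₁, μ₂ + ε • Δ₂) ∈ P :=
      ⟨⟨he₁, he₂⟩, by simp [hμ, hb₁, hb₂]⟩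
    have hp' : (μ₁ + ε • Δ₁', μ₂ + ε • Δ₂') ∈ P :=
      ⟨⟨he₁', he₂'⟩, by simp [hμ, hb₁', hb₂']⟩
    have hle := hmax _ hp
    have hle' := hmax _ hp'
    have hsum : val (μ₁, μ₂) + val (μ₁, μ₂) ≤
        val (μ₁ + ε • Δ₁, μ₂ + ε • Δ₂) + val (μ₁ + ε • Δ₁', μ₂ + ε • Δ₂') := by
      simp only [hvaldef, map_add, map_smul, smul_eq_mul]
      nlinarith [mul_nonneg hε.le hv₁, mul_nonneg hε.le hv₂]
    have hq : x + ε • d ∈ Q := by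
      refine ⟨_, ⟨hp, ?_⟩, by simp [hb₁, hxμ]⟩
      simp only [Set.mem_ofPred_eq]
      linarith
    have hq' : x - ε • d ∈ Q := by
      refine ⟨_, ⟨hp', ?_⟩, by simp [hb₁', hxμ, sub_eq_add_neg]⟩
      simp only [Set.mem_ofPred_eq]
      linarith
    have hseg : x ∈ openSegment ℝ (x + ε • d) (x - ε • d) := by
      refine ⟨1 / 2, 1 / 2, by norm_num, by norm_num, by norm_num, ?_⟩
      module
    have := (hext _ hq _ hq' hseg).1
    simpa [hε.ne'] using this
  have hxμ₂ : bary μ₂ = x := hμ ▸ hxμ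
  have hfrac : ∀ i, ¬ (0 < x i ∧ x i < 1) := by
    by_contra! hne
    obtain ⟨i₀, hi₀⟩ := hne
    let F := {i // 0 < x i ∧ x i < 1}
    have : Nonempty F := ⟨⟨i₀, hi₀⟩⟩
    let E : (F → ℝ) →ₗ[ℝ] (N → ℝ) :=
      Fintype.linearCombination ℝ fun i : F => Pi.single (i : N) (1 : ℝ)
    have hE (i : F) : E (Pi.single i 1) = Pi.single (i : N) 1 := by
      simp [E, Fintype.linearCombination_apply_single]
    have hpairs {D : Set (Finset N)} {g μ : Finset N → ℝ} (hD : ExchangeOn D g)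
        (hμD : μ ∈ distOn D) (hμx : bary μ = x) :
        PairsCoords ((reversibleDirs D g μ).comap E) := by
      rintro ⟨i, hi⟩
      subst hμx
      rcases hD.exists_reversibleDir hμD hi.1 hi.2 with h | ⟨j, hji, hj, h⟩
      · exact Or.inl (by simpa [hE] using h)
      · exact Or.inr ⟨⟨j, hj⟩, fun h => hji (congrArg Subtype.val h), by simpa [hE] using h⟩
    obtain ⟨y, hy, hy0⟩ := Submodule.exists_mem_ne_zero_of_ne_bot
      ((hpairs h₁ hμ₁ hxμ).inf_ne_bot (hpairs h₂ hμ₂ hxμ₂))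
    refine hy0 (funext fun i => ?_)
    have := congrFun (hint (E y) hy) i
    simpa [E, Fintype.linearCombination_apply, Pi.single_apply, Subtype.coe_inj] using this
  have hxK : x = indVec (univ.filter fun i => 0 < x i) := by
    ext i
    have h0 : 0 ≤ x i := by
      rw [← hxμ, bary_apply]
      exact sum_nonneg fun J _ => hμ₁.1.1 J
    have h1 : 0 ≤ 1 - x i := by
      rw [← hxμ, one_sub_bary hμ₁]
      exact sum_nonneg fun J _ => hμ₁.1.1 J
    by_cases hpos : 0 < x i
    · have := not_lt.1 fun h => hfrac i ⟨hpos, h⟩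
      simp only [indVec, mem_filter, mem_univ, hpos, and_self, if_true]
      linarith
    · simp only [indVec, mem_filter, mem_univ, hpos, and_false, if_false]
      linarith
  obtain ⟨hK₁, hs₁⟩ := exists_eq_single_of_bary hμ₁ (hxμ.trans hxK)
  obtain ⟨hK₂, hs₂⟩ := exists_eq_single_of_bary hμ₂ (hxμ₂.trans hxK)
  refine ⟨_, hK₁, hK₂, ?_⟩
  have hν' := hmax (ν₁, ν₂) ⟨⟨hν₁, hν₂⟩, hν⟩
  have := hν'.trans hopt
  simpa only [hvaldef, hs₁, hs₂, meanVal_single] using this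

/-- If a linear perturbation never pushes the separate maxima of `g₁` and `g₂` below `c`, then the
concave closures of `g₁` and `g₂` sum to at least `c` at some common point. -/
lemma exists_dist_of_forall_linear {D₁ D₂ : Set (Finset N)} {g₁ g₂ : Finset N → ℝ} {c : ℝ}
    (h : ∀ l : (N → ℝ) →ₗ[ℝ] ℝ, ∃ J₁ ∈ D₁, ∃ J₂ ∈ D₂,
      c ≤ g₁ J₁ + g₂ J₂ + l (indVec J₂ - indVec J₁)) :
    ∃ μ₁ ∈ distOn D₁, ∃ μ₂ ∈ distOn D₂, bary μ₁ = bary μ₂ ∧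
      c ≤ meanVal g₁ μ₁ + meanVal g₂ μ₂ := by
  by_contra! hne
  let L : (Finset N → ℝ) × (Finset N → ℝ) →ₗ[ℝ] (N → ℝ) × ℝ :=
    (bary.comp (LinearMap.snd ℝ _ _) - bary.comp (LinearMap.fst ℝ _ _)).prod
      ((meanVal g₁).comp (LinearMap.fst ℝ _ _) + (meanVal g₂).comp (LinearMap.snd ℝ _ _))
  have hL (p) : L p = (bary p.2 - bary p.1, meanVal g₁ p.1 + meanVal g₂ p.2) := rfl
  have hdisj : Disjoint (L '' (distOn D₁ ×ˢ distOn D₂)) ({0} ×ˢ Set.Ici c) := by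
    rw [Set.disjoint_left]
    rintro _ ⟨⟨μ₁, μ₂⟩, ⟨hμ₁, hμ₂⟩, rfl⟩ ⟨h0, hc⟩
    simp only [hL, Set.mem_singleton_iff, sub_eq_zero, Set.mem_Ici] at h0 hc
    exact absurd hc (not_le.2 (hne _ hμ₁ _ hμ₂ h0.symm))
  obtain ⟨f, u, v, hfu, huv, hfv⟩ := geometric_hahn_banach_compact_closed
    (((convex_distOn D₁).prod (convex_distOn D₂)).linear_image L)
    (((isCompact_distOn D₁).prod (isCompact_distOn D₂)).image
      (LinearMap.continuous_of_finiteDimensional L))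
    ((convex_singleton 0).prod (convex_Ici c)) (isClosed_singleton.prod isClosed_Ici) hdisj
  let l : (N → ℝ) →ₗ[ℝ] ℝ := (f : (N → ℝ) × ℝ →ₗ[ℝ] ℝ).comp (LinearMap.inl ℝ _ _)
  set τ := f (0, 1) with hτ
  have hf (x : N → ℝ) (t : ℝ) : f (x, t) = l x + τ * t := by
    have : (x, t) = (x, 0) + t • ((0 : N → ℝ), (1 : ℝ)) := by simp
    rw [this, map_add, map_smul, smul_eq_mul, mul_comm]
    rfl
  have hupper {J₁ J₂ : Finset N} (hJ₁ : J₁ ∈ D₁) (hJ₂ : J₂ ∈ D₂) :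
      l (indVec J₂ - indVec J₁) + τ * (g₁ J₁ + g₂ J₂) < u := by
    have := hfu _ ⟨(Pi.single J₁ 1, Pi.single J₂ 1),
      ⟨single_mem_distOn hJ₁, single_mem_distOn hJ₂⟩, rfl⟩
    simpa only [hL, hf, bary_single, meanVal_single] using this
  have hlower {t : ℝ} (ht : c ≤ t) : v < τ * t := by
    have := hfv (0, t) ⟨rfl, ht⟩
    simpa only [hf, map_zero, zero_add] using this
  rcases lt_trichotomy τ 0 with hneg | hzero | hpos
  · have := hlower (le_max_left c (v / τ))
    have h2 := mul_le_mul_of_nonpos_left (le_max_right c (v / τ)) hneg.le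
    rw [mul_div_cancel₀ v hneg.ne] at h2
    linarith
  · have hv : v < 0 := by simpa [hzero] using hlower le_rfl
    obtain ⟨M, hM⟩ := (Set.finite_range fun p : Finset N × Finset N => g₁ p.1 + g₂ p.2).bddAbove
    set s := max 1 ((M - c) / (-v)) with hs
    obtain ⟨J₁, hJ₁, J₂, hJ₂, hle⟩ := h (s • l)
    have h1 := hupper hJ₁ hJ₂
    have h2 : g₁ J₁ + g₂ J₂ ≤ M := hM ⟨(J₁, J₂), rfl⟩
    have h3 : M - c ≤ s * (-v) := (div_le_iff₀ (by linarith)).1 (le_max_right _ _)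
    have h4 : 1 ≤ s := le_max_left _ _
    rw [hzero, zero_mul, add_zero] at h1
    rw [LinearMap.smul_apply, smul_eq_mul] at hle
    nlinarith
  · obtain ⟨J₁, hJ₁, J₂, hJ₂, hle⟩ := h (τ⁻¹ • l)
    have h1 := hupper hJ₁ hJ₂
    have h2 := hlower le_rfl
    have h3 := mul_le_mul_of_nonneg_left hle hpos.le
    rw [LinearMap.smul_apply, smul_eq_mul, mul_add, mul_inv_cancel_left₀ hpos.ne'] at h3
    linarith

end Distributions

lemma ExchangeOn.add_linear {N : Type*} [DecidableEq N] {D : Set (Finset N)}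
    {g : Finset N → ℝ} (hD : ExchangeOn D g) (l : (N → ℝ) →ₗ[ℝ] ℝ) :
    ExchangeOn D fun Z => g Z + l (indVec Z) := by
  intro X hX Y hY i hi
  obtain ⟨hiX, hiY⟩ := mem_sdiff.1 hi
  rcases hD X hX Y hY i hi with ⟨hA, hB, hle⟩ | ⟨j, hj, hA, hB, hle⟩
  · refine Or.inl ⟨hA, hB, ?_⟩
    have hind : (indVec X + indVec Y : N → ℝ) = indVec (X.erase i) + indVec (insert i Y) := by
      ext k
      by_cases hk : k = i <;> simp [indVec, hk, hiX, hiY]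
    have := congrArg l hind
    rw [map_add, map_add] at this
    linarith
  · refine Or.inr ⟨j, hj, hA, hB, ?_⟩
    obtain ⟨hjY, hjX⟩ := mem_sdiff.1 hj
    have hind : (indVec X + indVec Y : N → ℝ) =
        indVec (insert j (X.erase i)) + indVec ((insert i Y).erase j) := by
      ext k
      by_cases hki : k = i <;> by_cases hkj : k = j <;> simp_all [indVec]
    have := congrArg l hind
    rw [map_add, map_add] at this
    linarith

/-- Maximizing out the elements of `B` yields a submodular function of the remaining elements. -/
lemma ExchangeOn.exists_sdiff_trace {N : Type*} [Fintype N] [DecidableEq N]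
    {D : Set (Finset N)} {g : Finset N → ℝ} (hD : ExchangeOn D g) (B : Finset N)
    {X Y : Finset N} (hX : X ∈ D) (hY : Y ∈ D) (hYX : Y \ B ⊆ X \ B) {I : Finset N}
    (hI : I ⊆ (X \ B) \ (Y \ B)) :
    ∃ Z₁ ∈ D, ∃ Z₂ ∈ D, Z₁ \ B = (X \ B) \ I ∧ Z₂ \ B = (Y \ B) ∪ I ∧
      g X + g Y ≤ g Z₁ + g Z₂ := by
  have hmax : ∀ S : Finset N, ∃ v : ℝ, (∃ Z ∈ D, Z \ B = S) →
      (∃ Z ∈ D, Z \ B = S ∧ g Z = v) ∧ ∀ Z ∈ D, Z \ B = S → g Z ≤ v := by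
    intro S
    by_cases h : ∃ Z ∈ D, Z \ B = S
    · obtain ⟨Z, hZ, hZS⟩ := h
      obtain ⟨W, ⟨hW, hWS⟩, hmaxW⟩ := Set.exists_max_image {Z | Z ∈ D ∧ Z \ B = S} g
        (Set.toFinite _) ⟨Z, hZ, hZS⟩
      exact ⟨g W, fun _ => ⟨⟨W, hW, hWS, rfl⟩, fun Z hZ hZS => hmaxW Z ⟨hZ, hZS⟩⟩⟩
    · exact ⟨0, fun h' => absurd h' h⟩
  choose γ hγ using hmax
  have hstep (S T : Finset N) (hS : ∃ Z ∈ D, Z \ B = S) (hT : ∃ Z ∈ D, Z \ B = T)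
      (hTS : T ⊆ S) (i : N) (hiS : i ∈ S) (hiT : i ∉ T) :
      (∃ Z ∈ D, Z \ B = S.erase i) ∧ (∃ Z ∈ D, Z \ B = insert i T) ∧
        γ S + γ T ≤ γ (S.erase i) + γ (insert i T) := by
    obtain ⟨⟨Z, hZ, rfl, hZv⟩, -⟩ := hγ S hS
    obtain ⟨⟨W, hW, rfl, hWv⟩, -⟩ := hγ T hT
    obtain ⟨hiZ, hiB⟩ := mem_sdiff.1 hiS
    have hiW : i ∉ W := fun h => hiT (mem_sdiff.2 ⟨h, hiB⟩)
    rw [← hZv, ← hWv]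
    have key {Z' W' : Finset N} (hZ' : Z' ∈ D) (hW' : W' ∈ D) (hZs : Z' \ B = (Z \ B).erase i)
        (hWs : W' \ B = insert i (W \ B)) (hle : g Z + g W ≤ g Z' + g W') :
        (∃ Z' ∈ D, Z' \ B = (Z \ B).erase i) ∧ (∃ W' ∈ D, W' \ B = insert i (W \ B)) ∧
          g Z + g W ≤ γ ((Z \ B).erase i) + γ (insert i (W \ B)) :=
      ⟨⟨Z', hZ', hZs⟩, ⟨W', hW', hWs⟩, hle.trans
        (add_le_add ((hγ _ ⟨Z', hZ', hZs⟩).2 Z' hZ' hZs) ((hγ _ ⟨W', hW', hWs⟩).2 W' hW' hWs))⟩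
    rcases hD Z hZ W hW i (mem_sdiff.2 ⟨hiZ, hiW⟩) with ⟨hA, hC, hle⟩ | ⟨j, hj, hA, hC, hle⟩
    · refine key hA hC ?_ ?_ hle
      · grind
      · grind
    · obtain ⟨hjW, hjZ⟩ := mem_sdiff.1 hj
      have hjB : j ∈ B := by
        by_contra hjB
        exact hjZ (mem_sdiff.1 (hTS (mem_sdiff.2 ⟨hjW, hjB⟩))).1
      refine key hA hC ?_ ?_ hle
      · grind
      · grind
  have hmulti (A : Finset N) : ∀ S T : Finset N, (∃ Z ∈ D, Z \ B = S) →
      (∃ Z ∈ D, Z \ B = T) → T ⊆ S → A ⊆ S \ T →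
      (∃ Z ∈ D, Z \ B = S \ A) ∧ (∃ Z ∈ D, Z \ B = T ∪ A) ∧
        γ S + γ T ≤ γ (S \ A) + γ (T ∪ A) := by
    induction A using Finset.induction_on with
    | empty =>
      intro S T hS hT _ _
      simpa using ⟨hS, hT⟩
    | insert i A hiA ih =>
      intro S T hS hT hTS hAS
      obtain ⟨hiS, hiT⟩ := mem_sdiff.1 (hAS (mem_insert_self i A))
      obtain ⟨hS', -, -⟩ := hstep S T hS hT hTS i hiS hiT
      have hTS' : T ⊆ S.erase i := fun x hx => mem_erase.2 ⟨fun h => hiT (h ▸ hx), hTS hx⟩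
      have hAS' : A ⊆ S.erase i \ T := fun x hx => by
        obtain ⟨hxS, hxT⟩ := mem_sdiff.1 (hAS (mem_insert_of_mem hx))
        exact mem_sdiff.2 ⟨mem_erase.2 ⟨fun h => hiA (h ▸ hx), hxS⟩, hxT⟩
      have hTA : T ∪ A ⊆ S := union_subset hTS fun x hx =>
        mem_of_mem_erase (mem_sdiff.1 (hAS' hx)).1
      obtain ⟨hA, hC, hle⟩ := ih (S.erase i) T hS' hT hTS' hAS'
      obtain ⟨-, hC', hle'⟩ := hstep S (T ∪ A) hS hC hTA i hiS (by simp [hiT, hiA])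
      rw [show S.erase i \ A = S \ insert i A by ext x; simp; tauto] at hA hle
      rw [← union_insert] at hC' hle'
      exact ⟨hA, hC', by linarith⟩
  obtain ⟨hA, hC, hle⟩ := hmulti I (X \ B) (Y \ B) ⟨X, hX, rfl⟩ ⟨Y, hY, rfl⟩ hYX hI
  obtain ⟨⟨Z₁, hZ₁, hZ₁s, hZ₁v⟩, -⟩ := hγ _ hA
  obtain ⟨⟨Z₂, hZ₂, hZ₂s, hZ₂v⟩, -⟩ := hγ _ hC
  refine ⟨Z₁, hZ₁, Z₂, hZ₂, hZ₁s, hZ₂s, ?_⟩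
  have h1 := (hγ _ ⟨X, hX, rfl⟩).2 X hX rfl
  have h2 := (hγ _ ⟨Y, hY, rfl⟩).2 Y hY rfl
  linarith

/-- Multiple exchange for real-valued functions on a family of sets. -/
lemma ExchangeOn.multiple_exchange {N : Type*} [Fintype N] [DecidableEq N]
    {D : Set (Finset N)} {g : Finset N → ℝ} (hD : ExchangeOn D g) {X Y : Finset N} (hX : X ∈ D)
    (hY : Y ∈ D) {I : Finset N} (hI : I ⊆ X \ Y) :
    ∃ J ⊆ Y \ X, (X \ I) ∪ J ∈ D ∧ (Y \ J) ∪ I ∈ D ∧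
      g X + g Y ≤ g ((X \ I) ∪ J) + g ((Y \ J) ∪ I) := by
  have h₁ : ExchangeOn {J | J ⊆ Y \ X ∧ (X \ I) ∪ J ∈ D} fun J => g ((X \ I) ∪ J) := by
    rintro J ⟨hJ, hJD⟩ K ⟨hK, hKD⟩ i hi
    have hi' : i ∈ (X \ I ∪ J) \ (X \ I ∪ K) := by grind
    rcases hD _ hJD _ hKD i hi' with ⟨hA, hC, hle⟩ | ⟨j, hj, hA, hC, hle⟩
    · rw [show (X \ I ∪ J).erase i = X \ I ∪ J.erase i by grind] at hA hle
      rw [show insert i (X \ I ∪ K) = X \ I ∪ insert i K by grind] at hC hle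
      exact Or.inl ⟨⟨by grind, hA⟩, ⟨by grind, hC⟩, hle⟩
    · rw [show insert j ((X \ I ∪ J).erase i) = X \ I ∪ insert j (J.erase i) by grind] at hA hle
      rw [show (insert i (X \ I ∪ K)).erase j = X \ I ∪ (insert i K).erase j by grind] at hC hle
      exact Or.inr ⟨j, by grind, ⟨by grind, hA⟩, ⟨by grind, hC⟩, hle⟩
  have h₂ : ExchangeOn {J | J ⊆ Y \ X ∧ (Y \ J) ∪ I ∈ D} fun J => g ((Y \ J) ∪ I) := by
    rintro J ⟨hJ, hJD⟩ K ⟨hK, hKD⟩ i hi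
    have hi' : i ∈ (Y \ K ∪ I) \ (Y \ J ∪ I) := by grind
    rcases hD _ hKD _ hJD i hi' with ⟨hA, hC, hle⟩ | ⟨j, hj, hA, hC, hle⟩
    · rw [show (Y \ K ∪ I).erase i = Y \ insert i K ∪ I by grind] at hA hle
      rw [show insert i (Y \ J ∪ I) = Y \ J.erase i ∪ I by grind] at hC hle
      exact Or.inl ⟨⟨by grind, hC⟩, ⟨by grind, hA⟩, by linarith⟩
    · rw [show insert j ((Y \ K ∪ I).erase i) = Y \ (insert i K).erase j ∪ I by grind] at hA hle
      rw [show (insert i (Y \ J ∪ I)).erase j = Y \ insert j (J.erase i) ∪ I by grind] at hC hle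
      exact Or.inr ⟨j, by grind, ⟨by grind, hC⟩, ⟨by grind, hA⟩, by linarith⟩
  have hlin (l : (N → ℝ) →ₗ[ℝ] ℝ) : ∃ J₁ ∈ {J | J ⊆ Y \ X ∧ (X \ I) ∪ J ∈ D},
      ∃ J₂ ∈ {J | J ⊆ Y \ X ∧ (Y \ J) ∪ I ∈ D},
      g X + g Y ≤ g ((X \ I) ∪ J₁) + g ((Y \ J₂) ∪ I) + l (indVec J₂ - indVec J₁) := by
    obtain ⟨Z₁, hZ₁, Z₂, hZ₂, hs₁, hs₂, hle⟩ := (hD.add_linear (-l)).exists_sdiff_trace (Y \ X)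
      hX hY (by grind) (I := I) (by grind)
    have he₁ : X \ I ∪ (Z₁ ∩ (Y \ X)) = Z₁ := by
      ext k
      have := congrArg (k ∈ ·) hs₁
      grind
    have he₂ : Y \ ((Y \ X) \ Z₂) ∪ I = Z₂ := by
      ext k
      have := congrArg (k ∈ ·) hs₂
      grind
    refine ⟨Z₁ ∩ (Y \ X), ⟨inter_subset_right, (congrArg (· ∈ D) he₁).mpr hZ₁⟩, (Y \ X) \ Z₂,
      ⟨sdiff_subset, (congrArg (· ∈ D) he₂).mpr hZ₂⟩, ?_⟩
    rw [he₁, he₂]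
    have hind : indVec ((Y \ X) \ Z₂) - indVec (Z₁ ∩ (Y \ X)) =
        (indVec X + indVec Y - indVec Z₁ - indVec Z₂ : N → ℝ) := by
      ext k
      have h1 := congrArg (k ∈ ·) hs₁
      have h2 := congrArg (k ∈ ·) hs₂
      have h3 : k ∈ I → k ∈ X \ Y := fun h => hI h
      simp only [mem_sdiff, mem_union] at h1 h2 h3
      by_cases hkX : k ∈ X <;> by_cases hkY : k ∈ Y <;> by_cases hkI : k ∈ I <;>
        by_cases hk1 : k ∈ Z₁ <;> by_cases hk2 : k ∈ Z₂ <;> simp_all [indVec]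
    rw [hind]
    simp only [LinearMap.neg_apply] at hle
    simp only [map_add, map_sub]
    linarith
  obtain ⟨μ₁, hμ₁, μ₂, hμ₂, hμ, hle⟩ := exists_dist_of_forall_linear hlin
  obtain ⟨J, hJ₁, hJ₂, hJ⟩ := exists_common_of_bary_eq h₁ h₂ hμ₁ hμ₂ hμ
  exact ⟨J, hJ₁.1, hJ₁.2, hJ₂.2, hle.trans hJ⟩

lemma MExc.exchangeOn {N : Type*} [DecidableEq N] {f : Finset N → WithBot ℝ} (hf : MExc f) :
    ExchangeOn {X | f X ≠ ⊥} fun X => (f X).unbotD 0 := by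
  have key {A B C D : WithBot ℝ} (hA : A ≠ ⊥) (hB : B ≠ ⊥) (h : A + B ≤ C + D) :
      C ≠ ⊥ ∧ D ≠ ⊥ ∧ A.unbotD 0 + B.unbotD 0 ≤ C.unbotD 0 + D.unbotD 0 := by
    lift A to ℝ using hA
    lift B to ℝ using hB
    have hCD : C + D ≠ ⊥ := fun hbot => by
      rw [hbot, ← WithBot.coe_add] at h
      exact WithBot.coe_ne_bot (le_bot_iff.1 h)
    obtain ⟨hC, hD⟩ := WithBot.add_ne_bot.1 hCD
    lift C to ℝ using hC
    lift D to ℝ using hD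
    exact ⟨WithBot.coe_ne_bot, WithBot.coe_ne_bot, by exact_mod_cast h⟩
  intro X hX Y hY i hi
  rcases le_max_iff.1 (hf X Y i hi) with h | h
  · exact Or.inl (key hX hY h)
  · have hbot : (⊥ : WithBot ℝ) < f X + f Y :=
      bot_lt_iff_ne_bot.2 (WithBot.add_ne_bot.2 ⟨hX, hY⟩)
    obtain ⟨j, hj, hle⟩ := (Finset.le_sup_iff hbot).1 h
    exact Or.inr ⟨j, hj, key hX hY hle⟩

theorem mnat_concave_multiple_exchange {N : Type*} [Fintype N] [DecidableEq N]
    (f : Finset N → WithBot ℝ) (hdom : ∃ X, f X ≠ ⊥) (hf : MExc f) :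
    MExcM f := by
  intro X Y I hI
  by_cases hX : f X = ⊥
  · exact ⟨∅, empty_subset _, by simp [hX]⟩
  by_cases hY : f Y = ⊥
  · exact ⟨∅, empty_subset _, by simp [hY]⟩
  obtain ⟨J, hJ, hA, hC, hle⟩ := hf.exchangeOn.multiple_exchange hX hY hI
  refine ⟨J, hJ, ?_⟩
  have key {A B C D : WithBot ℝ} (hA : A ≠ ⊥) (hB : B ≠ ⊥) (hC : C ≠ ⊥) (hD : D ≠ ⊥)
      (h : A.unbotD 0 + B.unbotD 0 ≤ C.unbotD 0 + D.unbotD 0) : A + B ≤ C + D := by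
    lift A to ℝ using hA
    lift B to ℝ using hB
    lift C to ℝ using hC
    lift D to ℝ using hD
    exact_mod_cast h
  exact key hX hY hA hC hle
end

section
/- For a set function f : 2^N → ℝ ∪ {-∞} with dom f ≠ ∅, the multiple exchange property (M♮-EXC_m) implies the exchange property (M♮-EXC). -/
open Finset

section Matroidal

variable {E : Type*} [DecidableEq E]

lemma exists_real_between {a b : WithBot ℝ} {x y : ℝ} (h : b + a < (x : WithBot ℝ) + y) :
    ∃ q : ℝ, a < ((y + q : ℝ) : WithBot ℝ) ∧ b + q ≤ x := by
  induction b with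
  | bot =>
    induction a with
    | bot => exact ⟨0, by simp [WithBot.bot_lt_coe], by simp⟩
    | coe a => exact ⟨a - y + 1, by norm_cast; linarith, by simp⟩
  | coe b =>
    refine ⟨x - b, ?_, by norm_cast; linarith⟩
    induction a with
    | bot => simp [WithBot.bot_lt_coe]
    | coe a => norm_cast at h ⊢; linarith

lemma local_exchange_insert_erase {g : Finset E → WithBot ℝ}
    (hloc : ∀ (C : Finset E) (x y z w : E), x ∉ C → y ∉ C → z ∉ C → w ∉ C →
      x ≠ y → x ≠ z → x ≠ w → y ≠ z → y ≠ w → z ≠ w →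
      g (insert x (insert y C)) + g (insert z (insert w C)) ≤
        max (g (insert x (insert z C)) + g (insert y (insert w C)))
          (g (insert x (insert w C)) + g (insert y (insert z C))))
    {Y : Finset E} {u u₀ v v₀ : E} (hu : u ∉ Y) (hu₀ : u₀ ∉ Y) (hv : v ∈ Y) (hv₀ : v₀ ∈ Y)
    (hne : u₀ ≠ u) (hvv : v ≠ v₀) :
    g (insert u ((insert u₀ (Y.erase v₀)).erase v)) + g Y ≤
      max (g (insert u₀ (Y.erase v)) + g (insert u (Y.erase v₀)))
        (g (insert u₀ (Y.erase v₀)) + g (insert u (Y.erase v))) := by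
  have huv : u ≠ v := fun h => hu (h ▸ hv)
  have huv₀ : u ≠ v₀ := fun h => hu (h ▸ hv₀)
  have hu₀v : u₀ ≠ v := fun h => hu₀ (h ▸ hv)
  have hu₀v₀ : u₀ ≠ v₀ := fun h => hu₀ (h ▸ hv₀)
  have hl := hloc ((Y.erase v).erase v₀) u₀ u v₀ v (by simp [hu₀]) (by simp [hu]) (by simp)
    (by simp) hne hu₀v₀ hu₀v huv₀ huv hvv.symm
  clear hloc
  have e1 : insert u₀ (insert u ((Y.erase v).erase v₀)) =
      insert u ((insert u₀ (Y.erase v₀)).erase v) := by ext t; grind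
  have e2 : insert v₀ (insert v ((Y.erase v).erase v₀)) = Y := by ext t; grind
  have e3 : insert u₀ (insert v₀ ((Y.erase v).erase v₀)) = insert u₀ (Y.erase v) := by
    ext t; grind
  have e4 : insert u (insert v ((Y.erase v).erase v₀)) = insert u (Y.erase v₀) := by
    ext t; grind
  have e5 : insert u₀ (insert v ((Y.erase v).erase v₀)) = insert u₀ (Y.erase v₀) := by
    ext t; grind
  have e6 : insert u (insert v₀ ((Y.erase v).erase v₀)) = insert u (Y.erase v) := by
    ext t; grind
  rwa [e1, e2, e3, e4, e5, e6] at hl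

lemma insert_erase_of_sdiff_eq_singleton {X Y : Finset E} {u v : E} (hu : X \ Y = {u})
    (hv : Y \ X = {v}) : insert v (X.erase u) = Y := by
  ext t
  have := Finset.ext_iff.1 hu t
  have := Finset.ext_iff.1 hv t
  have := Finset.ext_iff.1 hv v
  grind

lemma insert_erase_sdiff {X Y : Finset E} {u v : E} (hu : u ∈ X) :
    insert u (Y.erase v) \ X = (Y \ X).erase v := by
  ext t
  grind

lemma exchange_of_local_exchange (g : Finset E → WithBot ℝ) (n : ℕ)
    (hcard : ∀ X, g X ≠ ⊥ → #X = n)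
    (hbase : ∀ X Y, g X ≠ ⊥ → g Y ≠ ⊥ → ∀ u ∈ X \ Y, ∃ v ∈ Y \ X,
      g (insert u (Y.erase v)) ≠ ⊥)
    (hloc : ∀ (C : Finset E) (x y z w : E), x ∉ C → y ∉ C → z ∉ C → w ∉ C →
      x ≠ y → x ≠ z → x ≠ w → y ≠ z → y ≠ w → z ≠ w →
      g (insert x (insert y C)) + g (insert z (insert w C)) ≤
        max (g (insert x (insert z C)) + g (insert y (insert w C)))
          (g (insert x (insert w C)) + g (insert y (insert z C))))
    (X Y : Finset E) (hX : g X ≠ ⊥) (hY : g Y ≠ ⊥) (u : E) (hu : u ∈ X \ Y) :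
    ∃ v ∈ Y \ X, g X + g Y ≤ g (insert v (X.erase u)) + g (insert u (Y.erase v)) := by
  induction hm : #(Y \ X) using Nat.strong_induction_on generalizing Y with
  | _ m ih =>
  by_contra! hfail
  have hXY : #(X \ Y) = #(Y \ X) :=
    Finset.card_sdiff_comm ((hcard X hX).trans (hcard Y hY).symm)
  obtain ⟨u₀, hu₀, hne⟩ : ∃ u₀ ∈ X \ Y, u₀ ≠ u := by
    by_contra! h
    have h1 : X \ Y = {u} := Finset.eq_singleton_iff_unique_mem.2 ⟨hu, h⟩
    rw [h1, Finset.card_singleton] at hXY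
    obtain ⟨v, hv⟩ := Finset.card_eq_one.1 hXY.symm
    have hvm : v ∈ Y \ X := by simp [hv]
    have e1 := insert_erase_of_sdiff_eq_singleton h1 hv
    have e2 := insert_erase_of_sdiff_eq_singleton hv h1
    have := hfail v hvm
    rw [e1, e2, add_comm] at this
    exact lt_irrefl _ this
  obtain ⟨x, hx⟩ := WithBot.ne_bot_iff_exists.1 hX
  obtain ⟨y, hy⟩ := WithBot.ne_bot_iff_exists.1 hY
  have hq : ∀ v : E, ∃ q : ℝ, v ∈ Y \ X →
      g (insert u (Y.erase v)) < ((y + q : ℝ) : WithBot ℝ) ∧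
        g (insert v (X.erase u)) + q ≤ x := by
    intro v
    by_cases hv : v ∈ Y \ X
    · have := hfail v hv
      rw [← hx, ← hy] at this
      obtain ⟨q, hq⟩ := exists_real_between this
      exact ⟨q, fun _ => hq⟩
    · exact ⟨0, fun h => absurd h hv⟩
  choose q hq using hq
  obtain ⟨v₁, hv₁, hv₁'⟩ := hbase X Y hX hY u₀ hu₀
  obtain ⟨v₀, hv₀, hmax⟩ := Finset.exists_max_image (Y \ X)
    (fun v => g (insert u₀ (Y.erase v)) + ((-q v : ℝ) : WithBot ℝ)) ⟨v₁, hv₁⟩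
  have hY' : g (insert u₀ (Y.erase v₀)) ≠ ⊥ := by
    intro h
    have := hmax v₁ hv₁
    rw [h, WithBot.bot_add, le_bot_iff, WithBot.add_eq_bot] at this
    exact this.elim hv₁' (by simp)
  simp only [Finset.mem_sdiff] at hu hu₀ hv₀ hv₁
  have hsd := insert_erase_sdiff (Y := Y) (v := v₀) hu₀.1
  obtain ⟨v, hv, hle⟩ := ih _ (by
      rw [hsd, ← hm]
      exact Finset.card_erase_lt_of_mem (by simp [hv₀])) (insert u₀ (Y.erase v₀)) hY'
    (by simp [hu, hne.symm]) rfl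
  rw [hsd] at hv
  obtain ⟨hvv, hv⟩ := Finset.mem_erase.1 hv
  obtain ⟨y', hy'⟩ := WithBot.ne_bot_iff_exists.1 hY'
  simp only [Finset.mem_sdiff] at hv
  have hl := local_exchange_insert_erase hloc hu.2 hu₀.2 hv.1 hv₀.1 hne hvv
  have hmv := hmax v (by simp [hv])
  obtain ⟨ha, hb⟩ := hq v (by simp [hv])
  obtain ⟨ha₀, -⟩ := hq v₀ (by simp [hv₀])
  rw [← hx, ← hy'] at hle
  simp only [← hy, ← hy'] at hl hmv
  generalize g (insert u ((insert u₀ (Y.erase v₀)).erase v)) = a at *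
  generalize g (insert v (X.erase u)) = b at *
  generalize g (insert u (Y.erase v)) = c at *
  generalize g (insert u (Y.erase v₀)) = d at *
  generalize g (insert u₀ (Y.erase v)) = e at *
  induction a with
  | bot => simp at hle
  | coe a =>
  induction b with
  | bot => simp at hle
  | coe b =>
  norm_cast at hle hb
  clear ih hfail hloc hbase hcard hmax hq
  rcases le_max_iff.1 hl with h | h
  · induction e with
    | bot => simp at h
    | coe e =>
    induction d with
    | bot => simp at h
    | coe d => norm_cast at *; linarith
  · induction c with
    | bot => simp at h
    | coe c => norm_cast at *; linarith

end Matroidal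

section Local

variable {N : Type*} [DecidableEq N] {f : Finset N → WithBot ℝ}

lemma MExcM.submodular (hf : MExcM f) {C : Finset N} {x y : N} (hx : x ∉ C)
    (hxy : x ≠ y) :
    f (insert x (insert y C)) + f C ≤ f (insert x C) + f (insert y C) := by
  obtain ⟨J, hJ, h⟩ := hf (insert x (insert y C)) C {x} (by grind)
  have hJ0 : J = ∅ := by grind
  subst hJ0
  convert h using 1
  rw [add_comm]
  congr 2 <;> ext t <;> grind

lemma MExcM.exchange_pair_singleton (hf : MExcM f) {C : Finset N} {x y z : N} (hx : x ∉ C)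
    (hz : z ∉ C) (hxy : x ≠ y) (hxz : x ≠ z) :
    f (insert x (insert y C)) + f (insert z C) ≤
      max (f (insert x (insert z C)) + f (insert y C))
        (f (insert y (insert z C)) + f (insert x C)) := by
  obtain ⟨J, hJ, h⟩ := hf (insert x (insert y C)) (insert z C) {x} (by grind)
  have hJ' : J = ∅ ∨ J = {z} := by
    rw [← Finset.subset_singleton_iff]; grind
  refine h.trans ?_
  rcases hJ' with rfl | rfl
  · refine le_max_of_le_left (le_of_eq ?_)
    rw [add_comm]
    congr 2 <;> ext t <;> grind
  · refine le_max_of_le_right (le_of_eq ?_)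
    congr 2 <;> ext t <;> grind

lemma MExcM.exchange_triple_singleton (hf : MExcM f) {C : Finset N} {x y z w : N} (hx : x ∉ C)
    (hy : y ∉ C) (hxy : x ≠ y) (hyz : y ≠ z) (hyw : y ≠ w) :
    f (insert x C) + f (insert y (insert z (insert w C))) ≤
      max (f (insert x (insert y C)) + f (insert z (insert w C)))
        (f (insert y C) + f (insert x (insert z (insert w C)))) := by
  obtain ⟨J, hJ, h⟩ := hf (insert y (insert z (insert w C))) (insert x C) {y} (by grind)
  have hJ' : J = ∅ ∨ J = {x} := by
    rw [← Finset.subset_singleton_iff]; grind (ematch := 10)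
  rw [add_comm]
  refine h.trans ?_
  rcases hJ' with rfl | rfl
  · refine le_max_of_le_left (le_of_eq ?_)
    rw [add_comm]
    congr 2 <;> ext t <;> grind
  · refine le_max_of_le_right (le_of_eq ?_)
    rw [add_comm]
    congr 2 <;> ext t <;> grind

lemma MExcM.pair_pair_le (hf : MExcM f) {C : Finset N} {x y z w : N} (hx : x ∉ C)
    (hz : z ∉ C) (hxy : x ≠ y) (hxz : x ≠ z) (hxw : x ≠ w) (hzw : z ≠ w) {s : WithBot ℝ}
    (hs : s = f (insert x (insert y C)) + f (insert z (insert w C))) :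
    s ≤ f (insert x (insert z C)) + f (insert y (insert w C)) ∨
    s ≤ f (insert x (insert w C)) + f (insert y (insert z C)) ∨
    s ≤ f (insert x C) + f (insert y (insert z (insert w C))) ∨
    s ≤ f (insert y C) + f (insert x (insert z (insert w C))) := by
  obtain ⟨J, hJ, h⟩ := hf (insert x (insert y C)) (insert z (insert w C)) {x} (by grind)
  have hJ' : J = ∅ ∨ J = {z} ∨ J = {w} ∨ J = {z, w} := by
    have : (J : Set N) ⊆ {z, w} := by
      intro t ht
      have := hJ ht
      grind
    rw [Set.subset_pair_iff_eq] at this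
    exact_mod_cast this
  rw [← hs] at h
  rcases hJ' with rfl | rfl | rfl | rfl
  · refine Or.inr (Or.inr (Or.inr (h.trans_eq ?_)))
    congr 2 <;> ext t <;> grind
  · refine Or.inr (Or.inl (h.trans_eq ?_))
    rw [add_comm]
    congr 2 <;> ext t <;> grind
  · refine Or.inl (h.trans_eq ?_)
    rw [add_comm]
    congr 2 <;> ext t <;> grind
  · refine Or.inr (Or.inr (Or.inl (h.trans_eq ?_)))
    rw [add_comm]
    congr 2 <;> ext t <;> grind

/-- If the maximum weight is attained twice on every triangle and on every star of `K₄`, then some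
edge pair dominates a given perfect matching. -/
lemma matching_le_of_max_attained_twice {α : Type*} [LinearOrder α] {xy zw xz yw xw yz : α}
    (t₁ : xy ≤ max xz yz) (t₂ : xz ≤ max xy yz) (t₃ : yz ≤ max xy xz)
    (t₄ : xy ≤ max xw yw) (t₅ : yw ≤ max xy xw) (t₆ : zw ≤ max xz xw)
    (t₇ : yz ≤ max yw zw) (t₈ : zw ≤ max yz yw)
    (s₁ : xz ≤ max xy xw) (s₂ : yw ≤ max xy yz) (s₃ : yw ≤ max xw zw) :
    (xy ≤ xz ∧ zw ≤ yw) ∨ (xy ≤ xw ∧ zw ≤ yz) := by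
  simp only [le_max_iff] at *
  grind

lemma add_coe_le_max_of_shift {P Q R : WithBot ℝ} {r s t r' s' t' : ℝ}
    (h : P + (r : WithBot ℝ) ≤ max (Q + (s : WithBot ℝ)) (R + (t : WithBot ℝ))) (k : ℝ)
    (hr : r' = r + k) (hs : s' = s + k) (ht : t' = t + k) :
    P + (r' : WithBot ℝ) ≤ max (Q + (s' : WithBot ℝ)) (R + (t' : WithBot ℝ)) := by
  subst hr hs ht
  rcases le_max_iff.1 h with h | h
  · refine le_max_of_le_left ?_
    push_cast
    rw [← add_assoc, ← add_assoc]
    gcongr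
  · refine le_max_of_le_right ?_
    push_cast
    rw [← add_assoc, ← add_assoc]
    gcongr

lemma add_le_add_of_shift {P Q R S : WithBot ℝ} {p q r s : ℝ}
    (h₁ : P + (p : WithBot ℝ) ≤ R + (r : WithBot ℝ))
    (h₂ : Q + (q : WithBot ℝ) ≤ S + (s : WithBot ℝ)) (h : p + q = r + s) :
    P + Q ≤ R + S := by
  induction P with
  | bot => simp
  | coe P =>
  induction Q with
  | bot => simp
  | coe Q =>
  induction R with
  | bot => simp at h₁
  | coe R =>
  induction S with
  | bot => simp at h₂
  | coe S =>
  norm_cast at *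
  linarith

lemma MExcM.exchange_pair_pair (hf : MExcM f) {C : Finset N} {x y z w : N} (hx : x ∉ C)
    (hy : y ∉ C) (hz : z ∉ C) (hw : w ∉ C) (hxy : x ≠ y) (hxz : x ≠ z) (hxw : x ≠ w)
    (hyz : y ≠ z) (hyw : y ≠ w) (hzw : z ≠ w) :
    f (insert x (insert y C)) + f (insert z (insert w C)) ≤
      max (f (insert x (insert z C)) + f (insert y (insert w C)))
        (f (insert x (insert w C)) + f (insert y (insert z C))) := by
  by_contra! hlt
  obtain ⟨hlt₁, hlt₂⟩ := max_lt_iff.1 hlt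
  have hS := hf.pair_pair_le hx hz hxy hxz hxw hzw rfl
  have hSne : f (insert x (insert y C)) + f (insert z (insert w C)) ≠ ⊥ :=
    (bot_le.trans_lt hlt).ne'
  have hxz' := hf.exchange_triple_singleton hx hz hxz hyz.symm hzw
  have hzx' := hf.exchange_triple_singleton hz hx hxz.symm hxy hxw
  have hxw' := hf.exchange_triple_singleton hx hw hxw hyw.symm hzw.symm
  have hwx' := hf.exchange_triple_singleton hw hx hxw.symm hxy hxz
  have hyz' := hf.exchange_triple_singleton hy hz hyz hxz.symm hzw
  have hzy' := hf.exchange_triple_singleton hz hy hyz.symm hxy.symm hyw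
  have t₁ := hf.exchange_pair_singleton hx hz hxy hxz
  have t₂ := hf.exchange_pair_singleton hx hy hxz hxy
  have t₃ := hf.exchange_pair_singleton hy hx hyz hxy.symm
  have t₄ := hf.exchange_pair_singleton hx hw hxy hxw
  have t₅ := hf.exchange_pair_singleton hy hx hyw hxy.symm
  have t₆ := hf.exchange_pair_singleton hz hx hzw hxz.symm
  have t₇ := hf.exchange_pair_singleton hy hw hyz hyw
  have t₈ := hf.exchange_pair_singleton hz hy hzw hyz.symm
  have s₁ := hf.exchange_pair_singleton (C := insert x C) (x := y) (y := w) (z := z)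
    (by simp [*, Ne.symm]) (by simp [*, Ne.symm]) hyw hyz
  have s₂ := hf.exchange_pair_singleton (C := insert y C) (x := x) (y := z) (z := w)
    (by simp [*, Ne.symm]) (by simp [*, Ne.symm]) hxz hxw
  have s₃ := hf.exchange_pair_singleton (C := insert w C) (x := x) (y := z) (z := y)
    (by simp [*, Ne.symm]) (by simp [*, Ne.symm]) hxz hxy
  simp only [Finset.insert_comm y x, Finset.insert_comm z x, Finset.insert_comm w x,
    Finset.insert_comm z y, Finset.insert_comm w y, Finset.insert_comm w z] at *
  generalize f (insert x (insert y C)) = xy at *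
  generalize f (insert x (insert z C)) = xz at *
  generalize f (insert x (insert w C)) = xw at *
  generalize f (insert y (insert z C)) = yz at *
  generalize f (insert y (insert w C)) = yw at *
  generalize f (insert z (insert w C)) = zw at *
  generalize f (insert x (insert y (insert z C))) = xyz at *
  generalize f (insert x (insert y (insert w C))) = xyw at *
  generalize f (insert x (insert z (insert w C))) = xzw at *
  generalize f (insert y (insert z (insert w C))) = yzw at *
  generalize f (insert x C) = a at *
  generalize f (insert y C) = b at *
  generalize f (insert z C) = c at *
  generalize f (insert w C) = d at *
  rw [or_iff_right hlt₁.not_ge, or_iff_right hlt₂.not_ge] at hS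
  rw [add_comm yz] at hyz' hzy'
  have step : ∀ {P Q R S : WithBot ℝ}, S ≤ P → P ≤ max R Q → R < S → P ≤ Q := by
    intro P Q R S h₁ h₂ h₃
    rcases le_max_iff.1 h₂ with h | h
    · exact absurd (h₁.trans h) h₃.not_ge
    · exact h
  have hc : xy + zw ≤ c + xyw := hS.elim (fun h => h.trans (step h hxz' hlt₁))
    (fun h => h.trans (step h hyz' hlt₂))
  have hca := step hc hzx' hlt₁
  have hcb := step hc hzy' hlt₂
  have ha := hc.trans hca
  have eac := hca.antisymm (step ha hxz' hlt₁)
  have ebc := hcb.antisymm (step (hc.trans hcb) hyz' hlt₂)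
  have had := step ha hxw' hlt₂
  have ead := had.antisymm (step (ha.trans had) hwx' hlt₂)
  have hcne : c + xyw ≠ ⊥ := fun h => hSne (le_bot_iff.1 (h ▸ hc))
  have hane := eac ▸ hcne
  have hbne := ebc ▸ hcne
  have hdne := ead ▸ hane
  simp only [ne_eq, WithBot.add_eq_bot, not_or] at hane hbne hcne hdne
  lift a to ℝ using hane.1
  lift b to ℝ using hbne.1
  lift c to ℝ using hcne.1
  lift d to ℝ using hdne.1
  lift yzw to ℝ using hane.2
  lift xzw to ℝ using hbne.2
  lift xyw to ℝ using hcne.2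
  lift xyz to ℝ using hdne.2
  norm_cast at eac ebc ead
  rw [add_comm] at s₁ s₂ s₃
  rw [add_comm _ xw, add_comm _ xy] at s₁
  rw [add_comm _ yz, add_comm _ xy] at s₂
  rw [add_comm _ zw, add_comm _ xw] at s₃
  rcases matching_le_of_max_attained_twice
    (add_coe_le_max_of_shift (r' := -a - b) (s' := -a - c) (t' := -b - c) t₁ (-a - b - c)
      (by ring) (by ring) (by ring))
    (add_coe_le_max_of_shift t₂ (-a - b - c) (by ring) (by ring) (by ring))
    (add_coe_le_max_of_shift t₃ (-a - b - c) (by ring) (by ring) (by ring))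
    (add_coe_le_max_of_shift (s' := -a - d) (t' := -b - d) t₄ (-a - b - d)
      (by ring) (by ring) (by ring))
    (add_coe_le_max_of_shift t₅ (-a - b - d) (by ring) (by ring) (by ring))
    (add_coe_le_max_of_shift (r' := -c - d) t₆ (-a - c - d) (by ring) (by ring) (by ring))
    (add_coe_le_max_of_shift t₇ (-b - c - d) (by ring) (by ring) (by ring))
    (add_coe_le_max_of_shift t₈ (-b - c - d) (by ring) (by ring) (by ring))
    ((add_coe_le_max_of_shift s₁ (-a - c - xyw) (by linarith) (by linarith) (by linarith)).trans_eq
      (max_comm _ _))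
    ((add_coe_le_max_of_shift s₂ (-b - d - xyz) (by linarith) (by linarith) (by linarith)).trans_eq
      (max_comm _ _))
    ((add_coe_le_max_of_shift s₃ (-b - d - xzw) (by linarith) (by linarith) (by linarith)).trans_eq
      (max_comm _ _)) with ⟨h₁, h₂⟩ | ⟨h₁, h₂⟩
  · exact hlt₁.not_ge (add_le_add_of_shift h₁ h₂ (by ring))
  · exact hlt₂.not_ge (add_le_add_of_shift h₁ h₂ (by ring))

end Local

section Domain

variable {N : Type*} [DecidableEq N] {f : Finset N → WithBot ℝ}

lemma MExcM.exists_ne_bot (hf : MExcM f) {X Y I : Finset N} (hX : f X ≠ ⊥) (hY : f Y ≠ ⊥)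
    (hI : I ⊆ X \ Y) :
    ∃ J ⊆ Y \ X, f ((X \ I) ∪ J) ≠ ⊥ ∧ f ((Y \ J) ∪ I) ≠ ⊥ := by
  obtain ⟨J, hJ, h⟩ := hf X Y I hI
  refine ⟨J, hJ, ?_, ?_⟩ <;>
  · intro h0
    rw [h0] at h
    simp [hX, hY] at h

lemma MExcM.exists_insert_erase_of_insert_sdiff (hf : MExcM f) {Y : Finset N} {u : N}
    (hY : f Y ≠ ⊥) (hu : u ∉ Y) (J : Finset N) (hJY : J ⊆ Y) (hJ : J.Nonempty)
    (h : f (insert u (Y \ J)) ≠ ⊥) : ∃ j ∈ J, f (insert u (Y.erase j)) ≠ ⊥ := by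
  induction hm : #J using Nat.strong_induction_on generalizing J with
  | _ m ih =>
  obtain ⟨j, hj⟩ := hJ
  have hjY := hJY hj
  obtain ⟨J', hJ', h₁, h₂⟩ := hf.exists_ne_bot (I := J.erase j) hY h (by
    clear hf ih; intro t; have := @hJY t; simp; grind)
  have hJ'' : J' = ∅ ∨ J' = {u} := by
    rw [← Finset.subset_singleton_iff]
    clear hf ih; intro t ht; have := hJ' ht; simp at this; grind
  rcases hJ'' with rfl | rfl
  · refine ⟨j, hj, ?_⟩
    convert h₂ using 2
    clear hf ih; ext t; have := @hJY t; simp; grind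
  · have he : Y \ J.erase j ∪ {u} = insert u (Y \ J.erase j) := by simp
    rw [he] at h₁
    rcases (J.erase j).eq_empty_or_nonempty with h0 | h0
    · refine ⟨j, hj, ?_⟩
      convert h using 2
      have : J = {j} := by rw [← Finset.insert_erase hj, h0]; rfl
      rw [this, Finset.sdiff_singleton_eq_erase]
    · obtain ⟨k, hk, hk'⟩ := ih _ (hm ▸ Finset.card_erase_lt_of_mem hj) (J.erase j)
        ((Finset.erase_subset _ _).trans hJY) h0 h₁ rfl
      exact ⟨k, Finset.mem_of_mem_erase hk, hk'⟩

lemma MExcM.exists_insert_erase_of_erase_union (hf : MExcM f) {Z : Finset N} {v : N}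
    (hZ : f Z ≠ ⊥) (hv : v ∈ Z) (J : Finset N) (hJZ : Disjoint J Z) (hJ : J.Nonempty)
    (h : f (Z.erase v ∪ J) ≠ ⊥) : ∃ j ∈ J, f (insert j (Z.erase v)) ≠ ⊥ := by
  induction hm : #J using Nat.strong_induction_on generalizing J with
  | _ m ih =>
  obtain ⟨j, hj⟩ := hJ
  rw [Finset.disjoint_left] at hJZ
  have hjZ := hJZ hj
  obtain ⟨J', hJ', h₁, h₂⟩ := hf.exists_ne_bot (I := J.erase j) h hZ (by
    clear hf ih; intro t; have := @hJZ t; simp; grind)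
  have hJ'' : J' = ∅ ∨ J' = {v} := by
    rw [← Finset.subset_singleton_iff]
    clear hf ih; intro t ht; have := hJ' ht; simp at this; grind
  rcases hJ'' with rfl | rfl
  · refine ⟨j, hj, ?_⟩
    convert h₁ using 2
    clear hf ih; ext t; have := @hJZ t; simp; grind
  · rw [Finset.sdiff_singleton_eq_erase] at h₂
    rcases (J.erase j).eq_empty_or_nonempty with h0 | h0
    · refine ⟨j, hj, ?_⟩
      convert h using 2
      have : J = {j} := by rw [← Finset.insert_erase hj, h0]; rfl
      rw [this, Finset.union_singleton]
    · obtain ⟨k, hk, hk'⟩ := ih _ (hm ▸ Finset.card_erase_lt_of_mem hj) (J.erase j)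
        (Finset.disjoint_left.2 fun t ht => hJZ (Finset.mem_of_mem_erase ht)) h0 h₂ rfl
      exact ⟨k, Finset.mem_of_mem_erase hk, hk'⟩

lemma MExcM.insert_ne_bot_or_exists (hf : MExcM f) {X Y : Finset N} {u : N} (hX : f X ≠ ⊥)
    (hY : f Y ≠ ⊥) (hu : u ∈ X \ Y) :
    f (insert u Y) ≠ ⊥ ∨ ∃ v ∈ Y \ X, f (insert u (Y.erase v)) ≠ ⊥ := by
  obtain ⟨J, hJ, -, h⟩ := hf.exists_ne_bot (I := {u}) hX hY (by simpa using hu)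
  rw [Finset.union_singleton] at h
  rcases J.eq_empty_or_nonempty with rfl | hne
  · exact Or.inl (by simpa using h)
  · obtain ⟨j, hj, hj'⟩ := hf.exists_insert_erase_of_insert_sdiff hY (Finset.mem_sdiff.1 hu).2 J
      (hJ.trans Finset.sdiff_subset) hne h
    exact Or.inr ⟨j, hJ hj, hj'⟩

lemma MExcM.exists_erase_ne_bot (hf : MExcM f) {X Z : Finset N} (hX : f X ≠ ⊥)
    (hZ : f Z ≠ ⊥) (hlt : #X < #Z) : ∃ v ∈ Z \ X, f (Z.erase v) ≠ ⊥ := by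
  induction hm : #(X \ Z) using Nat.strong_induction_on generalizing Z with
  | _ m ih =>
  obtain ⟨v, hvZ, hvX⟩ := Finset.exists_mem_notMem_of_card_lt_card hlt
  obtain ⟨J, hJ, h, -⟩ := hf.exists_ne_bot (I := {v}) hZ hX (by simp [hvZ, hvX])
  rw [Finset.sdiff_singleton_eq_erase] at h
  rcases J.eq_empty_or_nonempty with rfl | hne
  · exact ⟨v, by simp [hvZ, hvX], by simpa using h⟩
  obtain ⟨j, hj, hW⟩ := hf.exists_insert_erase_of_erase_union hZ hvZ J
    (Finset.disjoint_left.2 fun t ht => (Finset.mem_sdiff.1 (hJ ht)).2) hne h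
  obtain ⟨hjX, hjZ⟩ := Finset.mem_sdiff.1 (hJ hj)
  have hcard : #(insert j (Z.erase v)) = #Z := by
    rw [Finset.card_insert_of_notMem (by simp [hjZ]), Finset.card_erase_add_one hvZ]
  obtain ⟨v₁, hv₁, hD⟩ := ih #(X \ insert j (Z.erase v)) (by
    rw [← hm]
    refine Finset.card_lt_card ⟨?_, ?_⟩
    · clear hf ih; intro t; simp; grind
    · intro hs
      simpa using hs (hJ hj)) hW (by rwa [hcard]) rfl
  have hjv₁ : j ≠ v₁ := by
    rintro rfl
    exact (Finset.mem_sdiff.1 hv₁).2 hjX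
  have hv₁' : v₁ ∈ Z ∧ v₁ ∉ X ∧ v₁ ≠ v := by
    clear hf ih; simp at hv₁; grind
  obtain ⟨J', hJ', h₁, h₂⟩ := hf.exists_ne_bot (I := {v}) hZ hD (by
    clear hf ih; simp; grind)
  have hJ'' : J' = ∅ ∨ J' = {j} := by
    rw [← Finset.subset_singleton_iff]
    clear hf ih; intro t ht; have := hJ' ht; simp at this; grind
  rcases hJ'' with rfl | rfl
  · refine ⟨v, by simp [hvZ, hvX], ?_⟩
    rwa [Finset.union_empty, Finset.sdiff_singleton_eq_erase] at h₁
  · refine ⟨v₁, by simp [hv₁'], ?_⟩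
    convert h₂ using 2
    clear hf ih; ext t; simp; grind

end Domain

section Lift

variable {N : Type*} {f : Finset N → WithBot ℝ}

/-- The homogenization of a set function: pad every set by dummy elements to cardinality `n`. -/
def padded (f : Finset N → WithBot ℝ) (n : ℕ) (A : Finset (N ⊕ N)) : WithBot ℝ :=
  if #A = n then f A.toLeft else ⊥

lemma padded_of_card_eq {n : ℕ} {A : Finset (N ⊕ N)} (h : #A = n) :
    padded f n A = f A.toLeft := if_pos h

lemma card_eq_of_padded_ne_bot {n : ℕ} {A : Finset (N ⊕ N)} (h : padded f n A ≠ ⊥) : #A = n := by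
  by_contra h0
  exact h (if_neg h0)

lemma padded_le {n : ℕ} (A : Finset (N ⊕ N)) : padded f n A ≤ f A.toLeft := by
  unfold padded
  split_ifs <;> simp

variable [DecidableEq N]

lemma toLeft_erase_inl (A : Finset (N ⊕ N)) (x : N) :
    (A.erase (Sum.inl x)).toLeft = A.toLeft.erase x := by ext; simp

lemma toLeft_erase_inr (A : Finset (N ⊕ N)) (x : N) :
    (A.erase (Sum.inr x)).toLeft = A.toLeft := by ext; simp

lemma MExcM.padded_local_exchange (hf : MExcM f) (n : ℕ) (C : Finset (N ⊕ N)) (x y z w : N ⊕ N)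
    (hx : x ∉ C) (hy : y ∉ C) (hz : z ∉ C) (hw : w ∉ C) (hxy : x ≠ y) (hxz : x ≠ z)
    (hxw : x ≠ w) (hyz : y ≠ z) (hyw : y ≠ w) (hzw : z ≠ w) :
    padded f n (insert x (insert y C)) + padded f n (insert z (insert w C)) ≤
      max (padded f n (insert x (insert z C)) + padded f n (insert y (insert w C)))
        (padded f n (insert x (insert w C)) + padded f n (insert y (insert z C))) := by
  have hcard : ∀ {s t : N ⊕ N}, s ∉ C → t ∉ C → s ≠ t → #(insert s (insert t C)) = #C + 2 := by
    intro s t hs ht hst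
    rw [Finset.card_insert_of_notMem (by simp [hs, hst]), Finset.card_insert_of_notMem ht]
  by_cases hn : #C + 2 = n
  swap
  · have h0 : padded f n (insert x (insert y C)) = ⊥ := if_neg (by rwa [hcard hx hy hxy])
    simp [h0]
  rw [padded_of_card_eq ((hcard hx hy hxy).trans hn),
    padded_of_card_eq ((hcard hz hw hzw).trans hn),
    padded_of_card_eq ((hcard hx hz hxz).trans hn),
    padded_of_card_eq ((hcard hy hw hyw).trans hn),
    padded_of_card_eq ((hcard hx hw hxw).trans hn),
    padded_of_card_eq ((hcard hy hz hyz).trans hn)]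
  rcases x with x | x <;> rcases y with y | y <;> rcases z with z | z <;> rcases w with w | w <;>
    simp only [Finset.toLeft_insert_inl, Finset.toLeft_insert_inr]
  all_goals
    try simp only [← Finset.mem_toLeft] at hx hy hz hw
    try replace hxy := fun h => hxy (congrArg Sum.inl h)
    try replace hxz := fun h => hxz (congrArg Sum.inl h)
    try replace hxw := fun h => hxw (congrArg Sum.inl h)
    try replace hyz := fun h => hyz (congrArg Sum.inl h)
    try replace hyw := fun h => hyw (congrArg Sum.inl h)
    try replace hzw := fun h => hzw (congrArg Sum.inl h)
    first
    | exact hf.exchange_pair_pair hx hy hz hw hxy hxz hxw hyz hyw hzw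
    | exact le_max_of_le_left (add_comm _ _).le
    | exact le_max_of_le_right (add_comm _ _).le
    | exact le_max_left _ _
    | exact le_max_right _ _
    | simpa only [add_comm, Finset.insert_comm, max_comm] using
        hf.exchange_pair_singleton hx hz hxy hxz
    | simpa only [add_comm, Finset.insert_comm, max_comm] using
        hf.exchange_pair_singleton hx hw hxy hxw
    | simpa only [add_comm, Finset.insert_comm, max_comm] using
        hf.exchange_pair_singleton hz hx hzw (Ne.symm hxz)
    | simpa only [add_comm, Finset.insert_comm, max_comm] using
        hf.exchange_pair_singleton hz hy hzw (Ne.symm hyz)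
    | simpa only [max_self] using hf.submodular hx hxy
    | simpa only [max_self, add_comm] using hf.submodular hz hzw

lemma MExcM.padded_base_exchange (hf : MExcM f) (n : ℕ) (A B : Finset (N ⊕ N))
    (hA : padded f n A ≠ ⊥) (hB : padded f n B ≠ ⊥) (u : N ⊕ N) (hu : u ∈ A \ B) :
    ∃ v ∈ B \ A, padded f n (insert u (B.erase v)) ≠ ⊥ := by
  have hAn := card_eq_of_padded_ne_bot hA
  have hBn := card_eq_of_padded_ne_bot hB
  rw [padded_of_card_eq hAn] at hA
  rw [padded_of_card_eq hBn] at hB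
  rw [Finset.mem_sdiff] at hu
  suffices ∃ v ∈ B \ A, f (insert u (B.erase v)).toLeft ≠ ⊥ by
    obtain ⟨v, hv, h⟩ := this
    refine ⟨v, hv, ?_⟩
    rwa [padded_of_card_eq]
    rw [Finset.card_insert_of_notMem (by simp [hu.2]),
      Finset.card_erase_add_one (Finset.mem_sdiff.1 hv).1, hBn]
  have hcA := Finset.card_toLeft_add_card_toRight (u := A)
  have hcB := Finset.card_toLeft_add_card_toRight (u := B)
  by_cases hq : ∃ q, Sum.inr q ∈ B \ A
  · obtain ⟨q, hq⟩ := hq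
    rcases u with u | u
    · rcases hf.insert_ne_bot_or_exists (u := u) hA hB (by simpa using hu) with h | ⟨v, hv, h⟩
      · exact ⟨_, hq, by rwa [Finset.toLeft_insert_inl, toLeft_erase_inr]⟩
      · exact ⟨Sum.inl v, by simpa using hv, by rwa [Finset.toLeft_insert_inl, toLeft_erase_inl]⟩
    · exact ⟨_, hq, by rwa [Finset.toLeft_insert_inr, toLeft_erase_inr]⟩
  · have hsub : B.toRight ⊆ A.toRight := by
      intro q hqB
      by_contra hqA
      exact hq ⟨q, by simpa using ⟨Finset.mem_toRight.1 hqB, fun h => hqA (by simpa using h)⟩⟩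
    rcases u with u | u
    · rcases hf.insert_ne_bot_or_exists (u := u) hA hB (by simpa using hu) with h | ⟨v, hv, h⟩
      · have hle := Finset.card_le_card hsub
        have huB : u ∉ B.toLeft := by simpa using hu.2
        obtain ⟨v, hv, hv'⟩ := hf.exists_erase_ne_bot hA h (by
          rw [Finset.card_insert_of_notMem huB]; omega)
        have hvu : u ≠ v := by
          rintro rfl
          exact (Finset.mem_sdiff.1 hv).2 (by simpa using hu.1)
        refine ⟨Sum.inl v, by simpa [hvu.symm] using hv, ?_⟩
        rwa [Finset.toLeft_insert_inl, toLeft_erase_inl, ← Finset.erase_insert_of_ne hvu]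
      · exact ⟨Sum.inl v, by simpa using hv, by rwa [Finset.toLeft_insert_inl, toLeft_erase_inl]⟩
    · have hlt : #B.toRight < #A.toRight := Finset.card_lt_card
        ⟨hsub, fun h => hu.2 (Finset.mem_toRight.1 (h (by simpa using hu.1)))⟩
      obtain ⟨v, hv, hv'⟩ := hf.exists_erase_ne_bot hA hB (by omega)
      exact ⟨Sum.inl v, by simpa using hv, by rwa [Finset.toLeft_insert_inr, toLeft_erase_inl]⟩

end Lift

theorem multiple_exchange_implies_exchange {N : Type*} [Fintype N] [DecidableEq N]
    (f : Finset N → WithBot ℝ) (hdom : ∃ X, f X ≠ ⊥) (hf : MExcM f) :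
    MExc f := by
  intro X Y i hi
  by_cases hX : f X = ⊥
  · simp [hX]
  by_cases hY : f Y = ⊥
  · simp [hY]
  have pad : ∀ Z : Finset N, ∃ P : Finset N, #(Z.disjSum P) = Fintype.card N := by
    intro Z
    obtain ⟨P, -, hP⟩ := Finset.exists_subset_card_eq
      (s := (Finset.univ : Finset N)) (n := Fintype.card N - #Z) (by simp)
    refine ⟨P, ?_⟩
    have := Finset.card_le_univ Z
    rw [Finset.card_disjSum]
    omega
  obtain ⟨P, hP⟩ := pad X
  obtain ⟨Q, hQ⟩ := pad Y
  have eX : padded f (Fintype.card N) (X.disjSum P) = f X := by simp [padded_of_card_eq hP]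
  have eY : padded f (Fintype.card N) (Y.disjSum Q) = f Y := by simp [padded_of_card_eq hQ]
  obtain ⟨v, hv, h⟩ := exchange_of_local_exchange (padded f (Fintype.card N)) (Fintype.card N)
    (fun _ => card_eq_of_padded_ne_bot) (hf.padded_base_exchange _)
    (hf.padded_local_exchange _) (X.disjSum P) (Y.disjSum Q) (by rwa [eX]) (by rwa [eY])
    (Sum.inl i) (by simpa using hi)
  rw [eX, eY] at h
  replace h := h.trans (add_le_add (padded_le _) (padded_le _))
  rcases v with v | v
  · simp only [Finset.toLeft_insert_inl, toLeft_erase_inl, Finset.toLeft_disjSum] at h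
    have hvm : v ∈ Y \ X := by simpa using hv
    have hvi : i ≠ v := by
      rintro rfl
      exact (Finset.mem_sdiff.1 hvm).2 (Finset.mem_sdiff.1 hi).1
    rw [← Finset.erase_insert_of_ne hvi] at h
    exact h.trans (le_max_of_le_right (Finset.le_sup
      (f := fun j => f (insert j (X.erase i)) + f ((insert i Y).erase j)) hvm))
  · simp only [Finset.toLeft_insert_inl, Finset.toLeft_insert_inr, toLeft_erase_inl,
      toLeft_erase_inr, Finset.toLeft_disjSum] at h
    exact h.trans (le_max_left _ _)
end

section
/- A set function f : 2^N → ℝ ∪ {-∞} with dom f ≠ ∅ is M♮-concave if and only if it has the multiple exchange property (M♮-EXC_m). -/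
open Finset

/-- The single exchange property for a real-valued function `v` with effective domain `D`. -/
def SingleExchange {N : Type*} [DecidableEq N] (D : Finset N → Prop) (v : Finset N → ℝ) : Prop :=
  ∀ X Y : Finset N, ∀ i ∈ X \ Y, D X → D Y → ∃ E ⊆ Y \ X, E.card ≤ 1 ∧
    D (X.erase i ∪ E) ∧ D (insert i Y \ E) ∧
    v X + v Y ≤ v (X.erase i ∪ E) + v (insert i Y \ E)

/-- The multiple exchange property for a real-valued function `v` with effective domain `D`. -/
def MultiExchange {N : Type*} [DecidableEq N] (D : Finset N → Prop) (v : Finset N → ℝ) : Prop :=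
  ∀ X Y : Finset N, ∀ I ⊆ X \ Y, D X → D Y → ∃ J ⊆ Y \ X,
    D ((X \ I) ∪ J) ∧ D ((Y \ J) ∪ I) ∧ v X + v Y ≤ v ((X \ I) ∪ J) + v ((Y \ J) ∪ I)

section MultiToSingle

variable {N : Type*} [DecidableEq N] {D : Finset N → Prop} {v : Finset N → ℝ}

lemma MultiExchange.contract (h : MultiExchange D v) (Z : Finset N) :
    MultiExchange (fun S => D (Z ∪ S)) (fun S => v (Z ∪ S)) := by
  intro X Y I hI hX hY
  obtain ⟨J, hJ, h1, h2, h3⟩ := h (Z ∪ X) (Z ∪ Y) (I \ Z) (by grind) hX hY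
  have e1 : (Z ∪ X) \ (I \ Z) ∪ J = Z ∪ (X \ I ∪ J) := by ext; grind
  have e2 : (Z ∪ Y) \ J ∪ I \ Z = Z ∪ (Y \ J ∪ I) := by ext; grind
  rw [e1] at h1 h3
  rw [e2] at h2 h3
  exact ⟨J, by grind, h1, h2, h3⟩

/-- Exchanging an element of `T` against the singleton `{i}`. -/
lemma MultiExchange.move_to_singleton (h : MultiExchange D v) {i x : N} {T : Finset N}
    (hi : D {i}) (hT : D T) (hiT : i ∉ T) (hx : x ∈ T) :
    (D (T.erase x) ∧ D {i, x} ∧ v {i} + v T ≤ v (T.erase x) + v {i, x}) ∨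
    (D (insert i (T.erase x)) ∧ D {x} ∧ v {i} + v T ≤ v {x} + v (insert i (T.erase x))) := by
  obtain ⟨J, hJ, h1, h2, h3⟩ := h T {i} {x} (by grind) hT hi
  by_cases hiJ : i ∈ J
  · right
    have e1 : T \ {x} ∪ J = insert i (T.erase x) := by ext; grind
    have e2 : {i} \ J ∪ {x} = {x} := by ext; grind
    rw [e1] at h1 h3
    rw [e2] at h2 h3
    exact ⟨h1, h2, by linarith⟩
  · left
    have e1 : T \ {x} ∪ J = T.erase x := by ext; grind
    have e2 : {i} \ J ∪ {x} = {i, x} := by ext; grind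
    rw [e1] at h1 h3
    rw [e2] at h2 h3
    exact ⟨h1, h2, by linarith⟩

lemma exists_separating_price {P Q : Prop} {a b x y : ℝ} (h : P → Q → a + b < x + y) :
    ∃ p : ℝ, (P → a + p < x) ∧ (Q → b - p < y) := by
  by_cases hP : P
  · by_cases hQ : Q
    · have := h hP hQ
      exact ⟨((x - a) + (b - y)) / 2, fun _ => by linarith, fun _ => by linarith⟩
    · exact ⟨x - a - 1, fun _ => by linarith, fun h => absurd h hQ⟩
  · exact ⟨b - y + 1, fun h => absurd h hP, fun _ => by linarith⟩

lemma MultiExchange.swap_singleton_pair (h : MultiExchange D v) {i j k : N}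
    (hi : D {i}) (hT : D {j, k}) (hij : i ≠ j) (hik : i ≠ k) (hjk : j ≠ k) :
    (D {j} ∧ D {i, k} ∧ v {i} + v {j, k} ≤ v {j} + v {i, k}) ∨
    (D {k} ∧ D {i, j} ∧ v {i} + v {j, k} ≤ v {k} + v {i, j}) := by
  have e : ({j, k} : Finset N).erase j = {k} := by ext; grind
  have := h.move_to_singleton (x := j) hi hT (by grind) (by grind)
  rw [e] at this
  tauto

/-- The unique element of a one-element set can be swapped with an element of any nonempty
disjoint set. -/
lemma MultiExchange.swap_singleton (n : ℕ) : ∀ {D : Finset N → Prop} {v : Finset N → ℝ}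
    (_ : MultiExchange D v) {i : N} {T : Finset N}, D {i} → D T → i ∉ T → T.card = n + 1 →
    ∃ k ∈ T, D {k} ∧ D (insert i (T.erase k)) ∧
      v {i} + v T ≤ v {k} + v (insert i (T.erase k)) := by
  classical
  induction n with
  | zero =>
    intro D v h i T hi hT hiT hc
    obtain ⟨k, rfl⟩ := Finset.card_eq_one.1 hc
    refine ⟨k, by simp, hT, by simpa using hi, ?_⟩
    simp [add_comm]
  | succ n ih =>
    intro D v h i T hi hT hiT hc
    rcases Nat.eq_zero_or_pos n with rfl | hn
    · obtain ⟨j, k, hjk, rfl⟩ := Finset.card_eq_two.1 hc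
      have e1 : ({j, k} : Finset N).erase j = {k} := by ext; grind
      have e2 : ({j, k} : Finset N).erase k = {j} := by ext; grind
      rcases h.swap_singleton_pair hi hT (by grind) (by grind) hjk with h | h
      · exact ⟨j, by simp, by rwa [e1]⟩
      · exact ⟨k, by simp, by rwa [e2]⟩
    by_contra hcon
    push Not at hcon
    choose! p hp1 hp2 using fun k hk => exists_separating_price (hcon k hk)
    set q : N → ℝ := fun k => if k = i then 0 else p k with hq
    obtain ⟨j, hj⟩ : T.Nonempty := Finset.card_pos.1 (by omega)
    have hij : D {i, j} := by
      rcases h.move_to_singleton hi hT hiT hj with h | h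
      · exact h.2.1
      · exact absurd h.2.2 (not_le.2 (hcon j hj h.2.1 h.1))
    obtain ⟨P, hP, hmax⟩ := Finset.exists_max_image
      (((insert i T).powersetCard 2).filter D) (fun P => v P + ∑ k ∈ P, q k)
      ⟨{i, j}, by
        simp only [mem_filter, mem_powersetCard]
        exact ⟨⟨by grind, Finset.card_pair (by grind)⟩, hij⟩⟩
    simp only [mem_filter, mem_powersetCard] at hP hmax
    obtain ⟨⟨hPT, hP2⟩, hPD⟩ := hP
    by_cases hiP : i ∈ P
    · obtain ⟨k, hk⟩ : ∃ k, P.erase i = {k} :=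
        Finset.card_eq_one.1 (by rw [Finset.card_erase_of_mem hiP]; omega)
      have hkP : k ∈ P.erase i := by rw [hk]; simp
      have hPe : P = {i, k} := by rw [← Finset.insert_erase hiP, hk]
      subst hPe
      have hkT : k ∈ T := by grind
      have hki : k ≠ i := by grind
      obtain ⟨l, hl, h1, h2, h3⟩ := ih (h.contract {k}) (i := i) (T := T.erase k)
        (by convert hPD using 1; ext; grind)
        (by convert hT using 1; ext; grind) (by grind)
        (by rw [Finset.card_erase_of_mem hkT]; omega)
      have e1 : {k} ∪ {i} = ({i, k} : Finset N) := by ext; grind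
      have e2 : {k} ∪ T.erase k = T := by ext; grind
      have e3 : {k} ∪ insert i ((T.erase k).erase l) = insert i (T.erase l) := by ext; grind
      have e4 : {k} ∪ {l} = ({k, l} : Finset N) := by ext; grind
      simp only [e1, e2, e3, e4] at h1 h2 h3
      have hkl : k ≠ l := by grind
      have hm := hmax {k, l} ⟨⟨by grind, Finset.card_pair hkl⟩, h1⟩
      rw [Finset.sum_pair hkl, Finset.sum_pair hki.symm] at hm
      have := hp2 l (by grind) h2
      have : q i = 0 := by simp [hq]
      have : q l = p l := by simp only [hq]; grind
      linarith
    · obtain ⟨k, l, hkl, rfl⟩ := Finset.card_eq_two.1 hP2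
      have hik : i ≠ k := by grind
      have hil : i ≠ l := by grind
      have qi : q i = 0 := by simp [hq]
      have ql : q l = p l := by simp only [hq]; grind
      have qk : q k = p k := by simp only [hq]; grind
      rcases h.swap_singleton_pair hi hPD hik hil hkl with ⟨h1, h2, h3⟩ | ⟨h1, h2, h3⟩
      · have hm := hmax {i, l} ⟨⟨by grind, Finset.card_pair hil⟩, h2⟩
        rw [Finset.sum_pair hkl, Finset.sum_pair hil] at hm
        have := hp1 k (by grind) h1
        linarith
      · have hm := hmax {i, k} ⟨⟨by grind, Finset.card_pair hik⟩, h2⟩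
        rw [Finset.sum_pair hkl, Finset.sum_pair hik] at hm
        have := hp1 l (by grind) h1
        linarith

/-- Two disjoint pairs can be recombined by exchanging one element each. -/
lemma MultiExchange.swap_pairs (h : MultiExchange D v) {a b c d : N}
    (hab : a ≠ b) (hac : a ≠ c) (had : a ≠ d) (hbc : b ≠ c) (hbd : b ≠ d) (hcd : c ≠ d)
    (h1 : D {a, b}) (h2 : D {c, d}) :
    (D {a, c} ∧ D {b, d} ∧ v {a, b} + v {c, d} ≤ v {a, c} + v {b, d}) ∨
    (D {a, d} ∧ D {b, c} ∧ v {a, b} + v {c, d} ≤ v {a, d} + v {b, c}) := by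
  by_contra hcon
  push Not at hcon
  obtain ⟨hn1, hn2⟩ := hcon
  set W : Finset N := {a, b, c, d} with hW
  let C : N → Prop := fun x => D {x} ∧ D (W.erase x) ∧
    v {a, b} + v {c, d} ≤ v {x} + v (W.erase x)
  have step : ∀ x y, x ∈ W → y ∈ W → x ≠ y →
      (x = a ∨ x = b) ∧ (y = c ∨ y = d) ∨ (y = a ∨ y = b) ∧ (x = c ∨ x = d) → C x → C y := by
    rintro x y hx hy hxy hcase ⟨c1, c2, c3⟩
    rcases h.move_to_singleton (x := y) c1 c2 (by grind) (by grind) with ⟨g1, g2, g3⟩ | ⟨g1, g2, g3⟩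
    · exfalso
      have key : ({x, y} = ({a, c} : Finset N) ∧ (W.erase x).erase y = {b, d}) ∨
          ({x, y} = ({b, d} : Finset N) ∧ (W.erase x).erase y = {a, c}) ∨
          ({x, y} = ({a, d} : Finset N) ∧ (W.erase x).erase y = {b, c}) ∨
          ({x, y} = ({b, c} : Finset N) ∧ (W.erase x).erase y = {a, d}) := by
        rcases hcase with ⟨rfl | rfl, rfl | rfl⟩ | ⟨rfl | rfl, rfl | rfl⟩
        · left; constructor <;> ext <;> grind
        · right; right; left; constructor <;> ext <;> grind
        · right; right; right; constructor <;> ext <;> grind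
        · right; left; constructor <;> ext <;> grind
        · left; constructor <;> ext <;> grind
        · right; right; left; constructor <;> ext <;> grind
        · right; right; right; constructor <;> ext <;> grind
        · right; left; constructor <;> ext <;> grind
      rcases key with ⟨e1, e2⟩ | ⟨e1, e2⟩ | ⟨e1, e2⟩ | ⟨e1, e2⟩ <;>
        rw [e2] at g1 g3 <;> rw [e1] at g2 g3
      · have := hn1 g2 g1; linarith
      · have := hn1 g1 g2; linarith
      · have := hn2 g2 g1; linarith
      · have := hn2 g1 g2; linarith
    · have e : insert x ((W.erase x).erase y) = W.erase y := by ext; grind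
      rw [e] at g1 g3
      exact ⟨g2, g1, by linarith⟩
  have start : C a ∨ C b := by
    obtain ⟨J, hJ, g1, g2, g3⟩ := h {a, b} {c, d} {a} (by grind) h1 h2
    by_cases hc : c ∈ J <;> by_cases hd : d ∈ J
    · left
      have e1 : {a, b} \ {a} ∪ J = W.erase a := by ext; grind
      have e2 : {c, d} \ J ∪ {a} = {a} := by ext; grind
      rw [e1] at g1 g3
      rw [e2] at g2 g3
      exact ⟨g2, g1, by linarith⟩
    · exfalso
      have e1 : {a, b} \ {a} ∪ J = {b, c} := by ext; grind
      have e2 : {c, d} \ J ∪ {a} = {a, d} := by ext; grind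
      rw [e1] at g1 g3
      rw [e2] at g2 g3
      have := hn2 g2 g1
      linarith
    · exfalso
      have e1 : {a, b} \ {a} ∪ J = {b, d} := by ext; grind
      have e2 : {c, d} \ J ∪ {a} = {a, c} := by ext; grind
      rw [e1] at g1 g3
      rw [e2] at g2 g3
      have := hn1 g2 g1
      linarith
    · right
      have e1 : {a, b} \ {a} ∪ J = {b} := by ext; grind
      have e2 : {c, d} \ J ∪ {a} = W.erase b := by ext; grind
      rw [e1] at g1 g3
      rw [e2] at g2 g3
      exact ⟨g1, g2, by linarith⟩
  have hc : C c := start.elim (step a c (by grind) (by grind) hac (by grind))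
    (step b c (by grind) (by grind) hbc (by grind))
  have hd : C d := start.elim (step a d (by grind) (by grind) had (by grind))
    (step b d (by grind) (by grind) hbd (by grind))
  have ha : C a := step c a (by grind) (by grind) hac.symm (by grind) hc
  have hb : C b := step c b (by grind) (by grind) hbc.symm (by grind) hc
  have k1 := h.swap_singleton_pair ha.1 h2 hac had hcd
  have k2 := h.swap_singleton_pair hb.1 h2 hbc hbd hcd
  have k3 := h.swap_singleton_pair hc.1 h1 hac.symm hbc.symm hab
  have k4 := h.swap_singleton_pair hd.1 h1 had.symm hbd.symm hab
  rw [Finset.pair_comm c a, Finset.pair_comm c b] at k3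
  rw [Finset.pair_comm d a, Finset.pair_comm d b] at k4
  rcases k1 with ⟨-, k1, k1'⟩ | ⟨-, k1, k1'⟩ <;> rcases k2 with ⟨-, k2, k2'⟩ | ⟨-, k2, k2'⟩ <;>
  rcases k3 with ⟨-, k3, k3'⟩ | ⟨-, k3, k3'⟩ <;> rcases k4 with ⟨-, k4, k4'⟩ | ⟨-, k4, k4'⟩ <;>
  simp only [k1, k2, k3, k4, forall_const] at hn1 hn2 <;> linarith

/-- The exchange between `Y` and a set arising from it by two insertions and at most two
deletions. -/
lemma MultiExchange.split_double_move (h : MultiExchange D v) {Y E F : Finset N} {i j : N}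
    (hij : i ≠ j) (hi : i ∉ Y) (hj : j ∉ Y) (hE : E ⊆ Y) (hF : F ⊆ Y) (hEF : Disjoint E F)
    (hE1 : E.card ≤ 1) (hF1 : F.card ≤ 1) (hY : D Y) (hY2 : D (insert i (insert j Y \ F) \ E)) :
    (D (insert i Y \ E) ∧ D (insert j Y \ F) ∧
      v (insert i (insert j Y \ F) \ E) + v Y ≤ v (insert i Y \ E) + v (insert j Y \ F)) ∨
    (D (insert i Y \ F) ∧ D (insert j Y \ E) ∧
      v (insert i (insert j Y \ F) \ E) + v Y ≤ v (insert i Y \ F) + v (insert j Y \ E)) := by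
  rw [Finset.disjoint_left] at hEF
  rcases Nat.le_one_iff_eq_zero_or_eq_one.1 hE1 with hE0 | hE1 <;>
  rcases Nat.le_one_iff_eq_zero_or_eq_one.1 hF1 with hF0 | hF1
  · obtain rfl := Finset.card_eq_zero.1 hE0
    obtain rfl := Finset.card_eq_zero.1 hF0
    simp only [Finset.sdiff_empty] at *
    obtain ⟨J, hJ, g1, g2, g3⟩ := h _ _ {i} (by grind) hY2 hY
    have e1 : insert i (insert j Y) \ {i} ∪ J = insert j Y := by ext; grind
    have e2 : Y \ J ∪ {i} = insert i Y := by ext; grind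
    rw [e1] at g1 g3
    rw [e2] at g2 g3
    exact Or.inl ⟨g2, g1, by linarith⟩
  · obtain rfl := Finset.card_eq_zero.1 hE0
    obtain ⟨f, rfl⟩ := Finset.card_eq_one.1 hF1
    have e0 : Y.erase f ∪ {f} = Y := by ext; grind
    have e1 : Y.erase f ∪ {i, j} = insert i (insert j Y \ {f}) \ ∅ := by ext; grind
    have e2 : Y.erase f ∪ {i} = insert i Y \ {f} := by ext; grind
    have e3 : Y.erase f ∪ {j} = insert j Y \ {f} := by ext; grind
    have e4 : Y.erase f ∪ {f, j} = insert j Y \ ∅ := by ext; grind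
    have e5 : Y.erase f ∪ {f, i} = insert i Y \ ∅ := by ext; grind
    have := (h.contract (Y.erase f)).swap_singleton_pair (i := f) (j := i) (k := j)
      (by rwa [e0]) (by rwa [e1]) (by grind) (by grind) hij
    rw [e0, e1, e2, e3, e4, e5] at this
    grind
  · obtain rfl := Finset.card_eq_zero.1 hF0
    obtain ⟨f, rfl⟩ := Finset.card_eq_one.1 hE1
    have e0 : Y.erase f ∪ {f} = Y := by ext; grind
    have e1 : Y.erase f ∪ {i, j} = insert i (insert j Y \ ∅) \ {f} := by ext; grind
    have e2 : Y.erase f ∪ {i} = insert i Y \ {f} := by ext; grind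
    have e3 : Y.erase f ∪ {j} = insert j Y \ {f} := by ext; grind
    have e4 : Y.erase f ∪ {f, j} = insert j Y \ ∅ := by ext; grind
    have e5 : Y.erase f ∪ {f, i} = insert i Y \ ∅ := by ext; grind
    have := (h.contract (Y.erase f)).swap_singleton_pair (i := f) (j := i) (k := j)
      (by rwa [e0]) (by rwa [e1]) (by grind) (by grind) hij
    rw [e0, e1, e2, e3, e4, e5] at this
    grind
  · obtain ⟨e, rfl⟩ := Finset.card_eq_one.1 hE1
    obtain ⟨f, rfl⟩ := Finset.card_eq_one.1 hF1
    have hef : e ≠ f := by grind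
    have e0 : (Y.erase e).erase f ∪ {e, f} = Y := by ext; grind
    have e1 : (Y.erase e).erase f ∪ {i, j} = insert i (insert j Y \ {f}) \ {e} := by ext; grind
    have e2 : (Y.erase e).erase f ∪ {i, f} = insert i Y \ {e} := by ext; grind
    have e3 : (Y.erase e).erase f ∪ {j, f} = insert j Y \ {e} := by ext; grind
    have e4 : (Y.erase e).erase f ∪ {i, e} = insert i Y \ {f} := by ext; grind
    have e5 : (Y.erase e).erase f ∪ {j, e} = insert j Y \ {f} := by ext; grind
    have := (h.contract ((Y.erase e).erase f)).swap_pairs (a := i) (b := j) (c := e) (d := f)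
      hij (by grind) (by grind) (by grind) (by grind) hef (by rwa [e1]) (by rwa [e0])
    rw [e0, e1, e2, e3, e4, e5] at this
    tauto

lemma MultiExchange.swap_of_sdiff_eq_singleton (h : MultiExchange D v) {X Y : Finset N} {i : N}
    (hi : X \ Y = {i}) (hX : D X) (hY : D Y) (hne : (Y \ X).Nonempty) :
    ∃ k ∈ Y \ X, D (X.erase i ∪ {k}) ∧ D (insert i Y \ {k}) ∧
      v X + v Y ≤ v (X.erase i ∪ {k}) + v (insert i Y \ {k}) := by
  have hiX : i ∈ X \ Y := by rw [hi]; simp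
  have hXZ : ∀ x, x ∈ X ↔ x ∈ X ∩ Y ∨ x = i := by
    intro x
    have : x ∈ X \ Y ↔ x = i := by rw [hi]; simp
    grind
  have e0 : X ∩ Y ∪ {i} = X := by ext; grind
  have e1 : X ∩ Y ∪ Y \ X = Y := by ext; grind
  have hc := Finset.card_pos.2 hne
  obtain ⟨k, hk, h1, h2, h3⟩ := MultiExchange.swap_singleton ((Y \ X).card - 1)
    (h.contract (X ∩ Y)) (i := i) (T := Y \ X)
    (by rwa [e0]) (by rwa [e1]) (by grind) (by omega)
  have e2 : X ∩ Y ∪ {k} = X.erase i ∪ {k} := by ext; grind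
  have e3 : X ∩ Y ∪ insert i ((Y \ X).erase k) = insert i Y \ {k} := by ext; grind
  rw [e0, e1, e2, e3] at h3
  rw [e2] at h1
  rw [e3] at h2
  exact ⟨k, hk, h1, h2, h3⟩

theorem MultiExchange.singleExchange (h : MultiExchange D v) : SingleExchange D v := by
  classical
  intro X Y i hi hX hY
  induction hn : (X \ Y).card using Nat.strong_induction_on generalizing Y with
  | _ n ih =>
  subst hn
  by_cases h1 : X \ Y = {i}
  · rcases (Y \ X).eq_empty_or_nonempty with h0 | hne
    · have hXZ : ∀ x, x ∈ X ↔ x ∈ X ∩ Y ∨ x = i := by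
        intro x
        have : x ∈ X \ Y ↔ x = i := by rw [h1]; simp
        grind
      have hYX : Y ⊆ X := Finset.sdiff_eq_empty_iff_subset.1 h0
      have e1 : X.erase i ∪ ∅ = Y := by ext; grind
      have e2 : insert i Y \ ∅ = X := by ext; grind
      exact ⟨∅, by simp, by simp, by rwa [e1], by rwa [e2], by rw [e1, e2, add_comm]⟩
    · obtain ⟨k, hk, g⟩ := h.swap_of_sdiff_eq_singleton h1 hX hY hne
      exact ⟨{k}, by simpa using hk, by simp, g⟩
  obtain ⟨j, hj, hji⟩ : ∃ j ∈ X \ Y, j ≠ i := by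
    by_contra hcon
    push Not at hcon
    exact h1 (Finset.eq_singleton_iff_unique_mem.2 ⟨hi, hcon⟩)
  by_contra hcon
  push Not at hcon
  have hprice := fun E (hE : E ⊆ Y \ X ∧ E.card ≤ 1) =>
    exists_separating_price (hcon E hE.1 hE.2)
  choose! p hp1 hp2 using hprice
  have hfin : ∃ E ⊆ Y \ X, E.card ≤ 1 ∧ D (insert j Y \ E) := by
    obtain ⟨J, hJ, -, g, -⟩ := h X Y {j} (by grind) hX hY
    rcases J.eq_empty_or_nonempty with rfl | hne
    · exact ⟨∅, by simp, by simp, by convert g using 1; ext; grind⟩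
    · have e1 : (Y \ J ∪ {j}) \ Y = {j} := by ext; grind
      have e2 : Y \ (Y \ J ∪ {j}) = J := by ext; grind
      obtain ⟨k, hk, -, g, -⟩ := h.swap_of_sdiff_eq_singleton e1 g hY (by rwa [e2])
      exact ⟨{k}, by grind, by simp, g⟩
  obtain ⟨E₀, hE₀, hE₀1, hE₀D⟩ := hfin
  obtain ⟨F, hF, hmax⟩ := Finset.exists_max_image
    ((Y \ X).powerset.filter fun E => E.card ≤ 1 ∧ D (insert j Y \ E))
    (fun E => v (insert j Y \ E) - p E) ⟨E₀, by simp [hE₀, hE₀1, hE₀D]⟩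
  simp only [mem_filter, mem_powerset] at hF hmax
  obtain ⟨hF, hF1, hFD⟩ := hF
  have hiY : i ∉ Y := (Finset.mem_sdiff.1 hi).2
  have hjX : j ∈ X := (Finset.mem_sdiff.1 hj).1
  have hjY : j ∉ Y := (Finset.mem_sdiff.1 hj).2
  have hFY : F ⊆ Y := hF.trans Finset.sdiff_subset
  have hsub : X \ (insert j Y \ F) ⊆ X \ Y := by clear ih hcon hp1 hp2 hmax; grind
  have hjF : j ∉ X \ (insert j Y \ F) := by clear ih hcon hp1 hp2 hmax; grind
  have hiF : i ∈ X \ (insert j Y \ F) := by clear ih hcon hp1 hp2 hmax; grind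
  have hlt : (X \ (insert j Y \ F)).card < (X \ Y).card :=
    Finset.card_lt_card ((Finset.ssubset_iff_of_subset hsub).2 ⟨j, hj, hjF⟩)
  obtain ⟨E, hE, hE1, g1, g2, g3⟩ := ih _ hlt (insert j Y \ F) hiF hFD rfl
  have hEY : E ⊆ Y \ X := by clear ih hcon hp1 hp2 hmax; grind
  have hEF : Disjoint E F := by
    clear ih hcon hp1 hp2 hmax
    rw [Finset.disjoint_left]
    grind
  have a1 := hp1 E ⟨hEY, hE1⟩ g1
  rcases h.split_double_move hji.symm hiY hjY (hEY.trans Finset.sdiff_subset) hFY hEF hE1 hF1 hY g2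
    with ⟨d1, d2, d3⟩ | ⟨d1, d2, d3⟩
  · have := hp2 E ⟨hEY, hE1⟩ d1
    linarith
  · have := hp2 F ⟨hF, hF1⟩ d1
    have := hmax E ⟨hEY, hE1, d2⟩
    linarith

end MultiToSingle

section Conjugation

/-- The conjugate of the restriction of `v` to the subsets of `U`. -/
noncomputable def conjugate {N : Type*} (v : Finset N → ℝ) (U : Finset N) (r : N → ℝ) : ℝ :=
  U.powerset.sup' ⟨∅, empty_mem_powerset _⟩ fun A => v A - ∑ x ∈ A, r x

theorem le_conjugate {N : Type*} {v : Finset N → ℝ} {U A : Finset N} (hA : A ⊆ U) (r : N → ℝ) :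
    v A - ∑ x ∈ A, r x ≤ conjugate v U r :=
  le_sup' (fun A => v A - ∑ x ∈ A, r x) (mem_powerset.2 hA)

theorem exists_eq_conjugate {N : Type*} (v : Finset N → ℝ) (U : Finset N) (r : N → ℝ) :
    ∃ A ⊆ U, conjugate v U r = v A - ∑ x ∈ A, r x := by
  obtain ⟨A, hA, h⟩ := exists_mem_eq_sup' (s := U.powerset) ⟨∅, empty_mem_powerset _⟩
    fun A => v A - ∑ x ∈ A, r x
  exact ⟨A, mem_powerset.1 hA, h⟩

variable {N : Type*} [DecidableEq N] {v : Finset N → ℝ}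

/-- The exchange property of `SingleExchange` for a set function that is finite everywhere. -/
def TotalExchange (v : Finset N → ℝ) : Prop :=
  ∀ X Y, ∀ i ∈ X \ Y, ∃ E ⊆ Y \ X, E.card ≤ 1 ∧
    v X + v Y ≤ v (X.erase i ∪ E) + v (insert i Y \ E)

theorem TotalExchange.contract (h : TotalExchange v) (Z : Finset N) :
    TotalExchange fun A => v (Z ∪ A) := by
  intro X Y i hi
  by_cases hiZ : i ∈ Z
  · refine ⟨∅, by simp, by simp, ?_⟩
    have e1 : Z ∪ (X.erase i ∪ ∅) = Z ∪ X := by grind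
    have e2 : Z ∪ (insert i Y \ ∅) = Z ∪ Y := by grind
    simp only [e1, e2, le_refl]
  · obtain ⟨E, hE, hE1, hv⟩ := h (Z ∪ X) (Z ∪ Y) i (by grind)
    have e1 : (Z ∪ X).erase i ∪ E = Z ∪ (X.erase i ∪ E) := by grind
    have e2 : insert i (Z ∪ Y) \ E = Z ∪ (insert i Y \ E) := by grind
    rw [e1, e2] at hv
    exact ⟨E, by grind, hE1, hv⟩

theorem TotalExchange.delete (h : TotalExchange v) (y : N) :
    TotalExchange fun A => v (A.erase y) := by
  intro X Y i hi
  by_cases hiy : i = y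
  · subst hiy
    refine ⟨∅, by simp, by simp, ?_⟩
    have e1 : (X.erase i ∪ ∅).erase i = X.erase i := by grind
    have e2 : (insert i Y \ ∅).erase i = Y.erase i := by grind
    simp only [e1, e2, le_refl]
  · obtain ⟨E, hE, hE1, hv⟩ := h (X.erase y) (Y.erase y) i (by grind)
    have e1 : (X.erase y).erase i ∪ E = (X.erase i ∪ E).erase y := by grind
    have e2 : insert i (Y.erase y) \ E = (insert i Y \ E).erase y := by grind
    rw [e1, e2] at hv
    exact ⟨E, by grind, hE1, hv⟩

/-- Maximize out the membership of `y`, which costs `t`. -/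
def projection (v : Finset N → ℝ) (y : N) (t : ℝ) (A : Finset N) : ℝ :=
  max (v (A.erase y)) (v (insert y A) - t)

theorem le_projection {y : N} {S T : Finset N} (hST : S.erase y = T.erase y) (t : ℝ) :
    v S - (if y ∈ S then t else 0) ≤ projection v y t T := by
  by_cases hy : y ∈ S
  · have : insert y T = S := by
      rw [← insert_erase hy, hST]; grind
    rw [if_pos hy, projection, this]
    exact le_max_right _ _
  · rw [if_neg hy, sub_zero, projection, ← hST, erase_eq_of_notMem hy]
    exact le_max_left _ _

theorem exists_eq_projection (v : Finset N → ℝ) (y : N) (t : ℝ) (T : Finset N) :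
    ∃ S, S.erase y = T.erase y ∧ projection v y t T = v S - (if y ∈ S then t else 0) := by
  rcases max_choice (v (T.erase y)) (v (insert y T) - t) with h | h
  · exact ⟨T.erase y, by simp, by simp [projection, h]⟩
  · exact ⟨insert y T, by grind, by simp [projection, h]⟩

theorem TotalExchange.project (h : TotalExchange v) (y : N) (t : ℝ) :
    TotalExchange (projection v y t) := by
  intro X Y i hi
  obtain ⟨A, hA, hA'⟩ := exists_eq_projection v y t X
  obtain ⟨B, hB, hB'⟩ := exists_eq_projection v y t Y
  by_cases hiy : i = y
  · subst hiy
    refine ⟨∅, by simp, by simp, ?_⟩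
    have h1 := le_projection (v := v) (T := X.erase i ∪ ∅) (S := A) (y := i) (by grind) t
    have h2 := le_projection (v := v) (T := insert i Y \ ∅) (S := B) (y := i) (by grind) t
    linarith
  · have hiA : i ∈ A \ B := by
      have h1 : i ∈ A.erase y := by grind
      have h2 : i ∉ B.erase y := by grind
      grind
    obtain ⟨E, hE, hE1, hv⟩ := h A B i hiA
    have hAx : ∀ x, x ≠ y → (x ∈ A ↔ x ∈ X) := fun x hx => by
      have := congrArg (x ∈ ·) hA
      simpa [hx] using this
    have hBx : ∀ x, x ≠ y → (x ∈ B ↔ x ∈ Y) := fun x hx => by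
      have := congrArg (x ∈ ·) hB
      simpa [hx] using this
    refine ⟨E.erase y, ?_, (card_erase_le).trans hE1, ?_⟩
    · intro x hx
      have := hAx x; have := hBx x; grind
    have h1 := le_projection (v := v) (S := A.erase i ∪ E) (T := X.erase i ∪ E.erase y) (y := y)
      (by ext x; have := hAx x; grind) t
    have h2 := le_projection (v := v) (S := insert i B \ E) (T := insert i Y \ E.erase y) (y := y)
      (by ext x; have := hBx x; grind) t
    have h3 : (if y ∈ A.erase i ∪ E then t else 0) + (if y ∈ insert i B \ E then t else 0) =
        (if y ∈ A then t else 0) + (if y ∈ B then t else 0) := by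
      have := @hE y
      clear hAx hBx hE hA hB hv h1 h2 hA' hB'
      grind
    linarith

variable [Fintype N]

theorem sum_add_sum_le {A B C D : Finset N} {a b c d : N → ℝ}
    (h : ∀ x, (if x ∈ A then a x else 0) + (if x ∈ B then b x else 0) ≤
      (if x ∈ C then c x else 0) + (if x ∈ D then d x else 0)) :
    ∑ x ∈ A, a x + ∑ x ∈ B, b x ≤ ∑ x ∈ C, c x + ∑ x ∈ D, d x := by
  have key : ∀ (S : Finset N) (s : N → ℝ), ∑ x ∈ S, s x = ∑ x, if x ∈ S then s x else 0 := by
    intro S s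
    simp
  rw [key A, key B, key C, key D, ← sum_add_distrib, ← sum_add_distrib]
  exact sum_le_sum fun x _ => h x

theorem TotalExchange.update_price (h : TotalExchange v) {U A B : Finset N} {r r' : N → ℝ}
    (hr : r' ≤ r) (e : N) (hA : A ⊆ U) (hB : B ⊆ U) :
    ∃ C ⊆ U, ∃ D ⊆ U,
      (v A - ∑ x ∈ A, r x) + (v B - ∑ x ∈ B, r' x) ≤
        (v C - ∑ x ∈ C, Function.update r e (r' e) x) +
          (v D - ∑ x ∈ D, Function.update r' e (r e) x) := by
  by_cases he : e ∈ B \ A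
  · obtain ⟨E, hE, -, hv⟩ := h B A e he
    refine ⟨insert e A \ E, ?_, B.erase e ∪ E, ?_, ?_⟩
    · intro x hx; grind
    · intro x hx; grind
    · have := sum_add_sum_le (A := insert e A \ E) (B := B.erase e ∪ E) (C := A) (D := B)
        (a := Function.update r e (r' e)) (b := Function.update r' e (r e)) (c := r) (d := r')
        (by
          intro x
          have h1 := hr x
          have h2 := @hE x
          clear hr hE hA hB hv
          by_cases hxe : x = e
          · subst hxe; simp at he ⊢; grind
          · simp only [Function.update_of_ne hxe]; grind)
      linarith
  · refine ⟨A, hA, B, hB, ?_⟩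
    have := sum_add_sum_le (A := A) (B := B) (C := A) (D := B)
        (a := Function.update r e (r' e)) (b := Function.update r' e (r e)) (c := r) (d := r')
        (by
          intro x
          have h1 := hr x
          clear hr hA hB
          by_cases hxe : x = e
          · subst hxe; simp at he ⊢; grind
          · simp only [Function.update_of_ne hxe]; grind)
    linarith

theorem TotalExchange.conjugate_update (h : TotalExchange v) (U : Finset N) {r r' : N → ℝ}
    (hr : r' ≤ r) (e : N) :
    conjugate v U r + conjugate v U r' ≤
      conjugate v U (Function.update r e (r' e)) + conjugate v U (Function.update r' e (r e)) := by
  obtain ⟨A, hA, hA'⟩ := exists_eq_conjugate v U r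
  obtain ⟨B, hB, hB'⟩ := exists_eq_conjugate v U r'
  obtain ⟨C, hC, D, hD, hCD⟩ := h.update_price hr e hA hB
  have h1 := le_conjugate (v := v) hC (Function.update r e (r' e))
  have h2 := le_conjugate (v := v) hD (Function.update r' e (r e))
  linarith

theorem TotalExchange.conjugate_piecewise (h : TotalExchange v) (U E : Finset N) :
    ∀ {r r' : N → ℝ}, r' ≤ r → conjugate v U r + conjugate v U r' ≤
      conjugate v U (E.piecewise r' r) + conjugate v U (E.piecewise r r') := by
  induction E using Finset.induction_on with
  | empty => intro r r' _; simp
  | insert e E he ih =>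
    intro r r' hr
    have h1 := @ih (Function.update r e (r' e)) r' (by
      intro x; by_cases hx : x = e
      · subst hx; simp
      · simpa [hx] using hr x)
    have h2 := h.conjugate_update U (r := r) (r' := E.piecewise r r') (by
      intro x; by_cases hx : x ∈ E
      · simp [hx]
      · simpa [hx] using hr x) e
    have e1 : E.piecewise r' (Function.update r e (r' e)) = (insert e E).piecewise r' r := by
      ext x; simp only [Finset.piecewise, Function.update_apply]; grind
    have e2 : E.piecewise (Function.update r e (r' e)) r' = E.piecewise r r' := by
      ext x; simp only [Finset.piecewise, Function.update_apply]; grind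
    have e3 : Function.update r e (E.piecewise r r' e) = Function.update r e (r' e) := by
      simp [he]
    have e4 : Function.update (E.piecewise r r') e (r e) = (insert e E).piecewise r r' := by
      ext x; simp only [Finset.piecewise, Function.update_apply]; grind
    rw [e1, e2] at h1
    rw [e3, e4] at h2
    linarith

theorem TotalExchange.conjugate_sup_add_inf (h : TotalExchange v) (U : Finset N) (p q : N → ℝ) :
    conjugate v U (p ⊔ q) + conjugate v U (p ⊓ q) ≤ conjugate v U p + conjugate v U q := by
  classical
  have := h.conjugate_piecewise U (univ.filter fun x => p x < q x)
    (show p ⊓ q ≤ p ⊔ q from inf_le_sup)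
  have e1 : (univ.filter fun x => p x < q x).piecewise (p ⊓ q) (p ⊔ q) = p := by
    ext x; simp only [Finset.piecewise, mem_filter, mem_univ, true_and, Pi.inf_apply, Pi.sup_apply]
    split_ifs with hx
    · exact inf_eq_left.2 hx.le
    · exact sup_eq_left.2 (not_lt.1 hx)
  have e2 : (univ.filter fun x => p x < q x).piecewise (p ⊔ q) (p ⊓ q) = q := by
    ext x; simp only [Finset.piecewise, mem_filter, mem_univ, true_and, Pi.inf_apply, Pi.sup_apply]
    split_ifs with hx
    · exact sup_eq_right.2 hx.le
    · exact inf_eq_right.2 (not_lt.1 hx)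
  rwa [e1, e2] at this

theorem TotalExchange.split (h : TotalExchange v) {U A B S T : Finset N} (p q : N → ℝ)
    (hA : A ⊆ U) (hB : B ⊆ U) (hAS : Disjoint A S) (hSB : S ⊆ B) (hT : T ⊆ S) :
    ∃ C ⊆ U, ∃ D ⊆ U, C ∩ S = T ∧ D ∩ S = S \ T ∧
      (v A - ∑ x ∈ A, (p ⊔ q) x) + (v B - ∑ x ∈ B \ S, (p ⊓ q) x) ≤
        (v C - ∑ x ∈ C \ S, p x) + (v D - ∑ x ∈ D \ S, q x) := by
  obtain ⟨K, hK⟩ := (Set.finite_range fun w : Finset N × Finset N =>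
    (v w.1 - ∑ x ∈ w.1 \ S, p x) + (v w.2 - ∑ x ∈ w.2 \ S, q x)).bddAbove
  replace hK : ∀ C D, (v C - ∑ x ∈ C \ S, p x) + (v D - ∑ x ∈ D \ S, q x) ≤ K :=
    fun C D => hK ⟨(C, D), rfl⟩
  set L := (v A - ∑ x ∈ A, (p ⊔ q) x) + (v B - ∑ x ∈ B \ S, (p ⊓ q) x) with hL
  obtain ⟨M, hM0, hM⟩ : ∃ M : ℝ, 0 ≤ M ∧ K - L < M :=
    ⟨max 0 (K - L + 1), le_max_left _ _, lt_of_lt_of_le (by linarith) (le_max_right _ _)⟩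
  set s : N → ℝ := fun x => if x ∈ T then -M else M with hs
  have hsum := h.conjugate_sup_add_inf U (S.piecewise s p) (S.piecewise (-s) q)
  obtain ⟨C, hC, hC'⟩ := exists_eq_conjugate v U (S.piecewise s p)
  obtain ⟨D, hD, hD'⟩ := exists_eq_conjugate v U (S.piecewise (-s) q)
  have h1 := le_conjugate (v := v) hA (S.piecewise s p ⊔ S.piecewise (-s) q)
  have h2 := le_conjugate (v := v) hB (S.piecewise s p ⊓ S.piecewise (-s) q)
  have split : ∀ (W : Finset N) (f g : N → ℝ),
      ∑ x ∈ W, S.piecewise f g x = ∑ x ∈ S, (if x ∈ W then f x else 0) + ∑ x ∈ W \ S, g x := by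
    intro W f g
    rw [sum_piecewise, sum_ite_mem, inter_comm]
  have e1 : ∑ x ∈ A, (S.piecewise s p ⊔ S.piecewise (-s) q) x = ∑ x ∈ A, (p ⊔ q) x := by
    refine sum_congr rfl fun x hx => ?_
    have : x ∉ S := disjoint_left.1 hAS hx
    simp [this]
  have e2 : S.piecewise s p ⊓ S.piecewise (-s) q = S.piecewise (fun _ => -M) (p ⊓ q) := by
    ext x
    by_cases hx : x ∈ S
    · by_cases hxT : x ∈ T
      · simp [hx, hs, hxT, hM0]
      · simp [hx, hs, hxT, hM0]
    · simp [hx]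
  rw [e1] at h1
  rw [e2, split] at h2
  rw [e2] at hsum
  rw [split] at hC' hD'
  have e3 : ∑ x ∈ S, (if x ∈ B then -M else 0) = ∑ x ∈ S, -M :=
    sum_congr rfl fun x hx => if_pos (hSB hx)
  rw [e3] at h2
  have pt : ∀ x ∈ S, -M ≤ (if x ∈ C then s x else 0) + (if x ∈ D then (-s) x else 0) := by
    intro x _
    simp only [hs, Pi.neg_apply]
    split_ifs <;> linarith
  have hle := sum_le_sum pt
  rw [sum_add_distrib] at hle
  have good : ∀ x ∈ S, (x ∈ C ↔ x ∈ T) ∧ (x ∈ D ↔ x ∉ T) := by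
    intro x hx
    by_contra hbad
    have hx0 : 0 ≤ (if x ∈ C then s x else 0) + (if x ∈ D then (-s) x else 0) := by
      simp only [hs, Pi.neg_apply]
      by_cases hxT : x ∈ T <;> by_cases hxC : x ∈ C <;> by_cases hxD : x ∈ D <;>
        simp_all
    have h3 := sum_le_sum fun z (hz : z ∈ S.erase x) => pt z (mem_of_mem_erase hz)
    have h4 := add_sum_erase S (fun _ => -M) hx
    have h5 := add_sum_erase S
      (fun x => (if x ∈ C then s x else 0) + (if x ∈ D then (-s) x else 0)) hx
    beta_reduce at h4 h5
    simp only [sum_add_distrib] at h3 h5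
    have := hK C D
    linarith
  refine ⟨C, hC, D, hD, ?_, ?_, ?_⟩
  · ext x; have := good x; have := @hT x; clear good pt hK; grind
  · ext x; have := good x; have := @hT x; clear good pt hK; grind
  · linarith

theorem TotalExchange.exists_common_price (Y : Finset N) : ∀ {v w : Finset N → ℝ},
    TotalExchange v → TotalExchange w → ∃ (q : N → ℝ) (J : Finset N), J ⊆ Y ∧
      ∀ A ⊆ Y, ∀ B ⊆ Y, v A + w B ≤
        v J + w (Y \ J) + ∑ x ∈ A, q x + ∑ x ∈ B, q x - ∑ x ∈ Y, q x := by
  induction Y using Finset.induction_on with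
  | empty =>
    intro v w _ _
    refine ⟨0, ∅, subset_rfl, fun A hA B hB => ?_⟩
    rw [subset_empty.1 hA, subset_empty.1 hB]
    simp
  | insert y Y hy ih =>
    intro v w hv hw
    have hdel : ∀ {A : Finset N}, A ⊆ Y → A.erase y = A := fun hA =>
      erase_eq_of_notMem fun h => hy (hA h)
    obtain ⟨p, J₁, hJ₁, h₁⟩ := ih (hv.delete y) (hw.contract {y})
    obtain ⟨q, J₂, hJ₂, h₂⟩ := ih (hv.contract {y}) (hw.delete y)
    simp only [← insert_eq] at h₁ h₂
    rw [hdel hJ₁] at h₁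
    rw [hdel (sdiff_subset (s := Y) (t := J₂))] at h₂
    replace h₁ : ∀ A ⊆ Y, ∀ B ⊆ Y, v A + w (insert y B) ≤ v J₁ + w (insert y (Y \ J₁)) +
        ∑ x ∈ A, p x + ∑ x ∈ B, p x - ∑ x ∈ Y, p x := fun A hA B hB => by
      have := h₁ A hA B hB
      rwa [hdel hA] at this
    replace h₂ : ∀ A ⊆ Y, ∀ B ⊆ Y, v (insert y A) + w B ≤ v (insert y J₂) + w (Y \ J₂) +
        ∑ x ∈ A, q x + ∑ x ∈ B, q x - ∑ x ∈ Y, q x := fun A hA B hB => by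
      have := h₂ A hA B hB
      rwa [hdel hB] at this
    set V₁ := v J₁ + w (insert y (Y \ J₁)) with hV₁
    set V₂ := v (insert y J₂) + w (Y \ J₂) with hV₂
    have sumY : ∀ J ⊆ Y, ∀ r : N → ℝ, ∑ x ∈ J, r x + ∑ x ∈ Y \ J, r x = ∑ x ∈ Y, r x :=
      fun J hJ r => by rw [add_comm, sum_sdiff hJ]
    have max₁ : ∀ J ⊆ Y, v J + w (insert y (Y \ J)) ≤ V₁ := fun J hJ => by
      have := h₁ J hJ (Y \ J) sdiff_subset
      have := sumY J hJ p
      linarith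
    have max₂ : ∀ J ⊆ Y, v (insert y J) + w (Y \ J) ≤ V₂ := fun J hJ => by
      have := h₂ J hJ (Y \ J) sdiff_subset
      have := sumY J hJ q
      linarith
    have hid : ∀ {A : Finset N}, A ⊆ Y → insert y A \ {y} = A := fun hA => by
      rw [sdiff_singleton_eq_erase, erase_insert fun h => hy (hA h)]
    have cross : ∀ J ⊆ Y, ∀ K ⊆ Y, (v J + w (Y \ J)) +
        (v (insert y K) + w (insert y (Y \ K))) ≤ V₁ + V₂ := by
      intro J hJ K hK
      have aux : ∀ {u : Finset N → ℝ}, TotalExchange u → ∀ (r s : N → ℝ), ∀ A ⊆ Y, ∀ B ⊆ Y,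
          ∃ C ⊆ Y, ∃ D ⊆ Y, (u A - ∑ x ∈ A, (r ⊔ s) x) + (u (insert y B) - ∑ x ∈ B, (r ⊓ s) x) ≤
            (u C - ∑ x ∈ C, r x) + (u (insert y D) - ∑ x ∈ D, s x) := by
        intro u hu r s A hA B hB
        obtain ⟨C, hC, D, hD, hCy, hDy, hCD⟩ := hu.split (U := insert y Y) (A := A)
          (B := insert y B) (S := {y}) (T := ∅) r s (hA.trans (subset_insert _ _))
          (insert_subset_insert _ hB) (disjoint_singleton_right.2 fun h => hy (hA h))
          (by simp) (by simp)
        have hyC : y ∉ C := disjoint_singleton_right.1 (disjoint_iff_inter_eq_empty.2 hCy)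
        have hyD : y ∈ D := by
          rw [sdiff_empty, inter_eq_right] at hDy
          exact singleton_subset_iff.1 hDy
        rw [hid hB, sdiff_singleton_eq_erase, sdiff_singleton_eq_erase,
          erase_eq_of_notMem hyC] at hCD
        refine ⟨C, (subset_insert_iff_of_notMem hyC).1 hC, D.erase y, subset_insert_iff.1 hD, ?_⟩
        rwa [insert_erase hyD]
      obtain ⟨C, hC, D, hD, hCD⟩ := aux hv p q J hJ K hK
      obtain ⟨C', hC', D', hD', hCD'⟩ := aux hw q p (Y \ J) sdiff_subset (Y \ K) sdiff_subset
      have a₁ := h₁ C hC D' hD'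
      have a₂ := h₂ D hD C' hC'
      have s₁ := sumY J hJ (p ⊔ q)
      have s₂ := sumY K hK (p ⊓ q)
      have s₃ : ∑ x ∈ Y, (p ⊔ q) x + ∑ x ∈ Y, (p ⊓ q) x = ∑ x ∈ Y, p x + ∑ x ∈ Y, q x := by
        rw [← sum_add_distrib, ← sum_add_distrib]
        exact sum_congr rfl fun x _ => max_add_min _ _
      rw [sup_comm q p, inf_comm q p] at hCD'
      linarith
    obtain ⟨J₀, hJ₀, hmax⟩ := exists_max_image Y.powerset (fun J => v J + w (Y \ J))
      ⟨∅, empty_mem_powerset _⟩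
    rw [mem_powerset] at hJ₀
    replace hmax : ∀ J ⊆ Y, v J + w (Y \ J) ≤ v J₀ + w (Y \ J₀) := fun J hJ =>
      hmax J (mem_powerset.2 hJ)
    obtain ⟨J, hJ, hJm⟩ : ∃ J ⊆ insert y Y, v J + w (insert y Y \ J) = max V₁ V₂ := by
      rcases max_choice V₁ V₂ with h | h
      · refine ⟨J₁, hJ₁.trans (subset_insert _ _), ?_⟩
        rw [h, insert_sdiff_of_notMem _ fun h => hy (hJ₁ h)]
      · refine ⟨insert y J₂, insert_subset_insert _ hJ₂, ?_⟩
        rw [h, insert_sdiff_insert, sdiff_insert_of_notMem hy]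
    set m := max V₁ V₂ with hm
    have hm₁ : V₁ ≤ m := le_max_left _ _
    have hm₂ : V₂ ≤ m := le_max_right _ _
    set t := m - (v J₀ + w (Y \ J₀)) with ht
    obtain ⟨r, K, hK, hr⟩ := ih (hv.project y t) (hw.project y t)
    have hKm : projection v y t K + projection w y t (Y \ K) ≤ m - t := by
      have b₁ := hmax K hK
      have b₂ := max₁ K hK
      have b₃ := max₂ K hK
      have b₄ := cross J₀ hJ₀ K hK
      rw [projection, projection, hdel hK, hdel (sdiff_subset (s := Y) (t := K))]
      rcases max_choice (v K) (v (insert y K) - t) with h | h <;>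
      rcases max_choice (w (Y \ K)) (w (insert y (Y \ K)) - t) with h' | h' <;>
      rw [h, h'] <;> linarith
    refine ⟨Function.update r y t, J, hJ, fun A hA B hB => ?_⟩
    have price : ∀ A : Finset N, ∑ x ∈ A, Function.update r y t x =
        ∑ x ∈ A.erase y, r x + if y ∈ A then t else 0 := by
      intro A
      by_cases hyA : y ∈ A
      · rw [sum_update_of_mem hyA, sdiff_singleton_eq_erase, if_pos hyA, add_comm]
      · rw [sum_update_of_notMem hyA, erase_eq_of_notMem hyA, if_neg hyA, add_zero]
    have hAB := hr (A.erase y) (subset_insert_iff.1 hA) (B.erase y) (subset_insert_iff.1 hB)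
    have c₁ := le_projection (v := v) (S := A) (T := A.erase y) (y := y) (by simp) t
    have c₂ := le_projection (v := w) (S := B) (T := B.erase y) (y := y) (by simp) t
    rw [hJm, price, price, price, erase_insert hy, if_pos (mem_insert_self y Y)]
    linarith

theorem TotalExchange.exchange_of_disjoint (h : TotalExchange v) {X Y I : Finset N}
    (hXY : Disjoint X Y) (hI : I ⊆ X) :
    ∃ J ⊆ Y, v X + v Y ≤ v (X \ I ∪ J) + v (Y \ J ∪ I) := by
  obtain ⟨q, J, hJ, hq⟩ := exists_common_price Y (h.contract (X \ I)) (h.contract I)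
  refine ⟨J, hJ, ?_⟩
  obtain ⟨C, hC, D, hD, hCX, hDX, hCD⟩ := h.split (U := X ∪ Y) (A := Y) (B := X) (S := X)
    (T := X \ I) q q subset_union_right subset_union_left hXY.symm subset_rfl sdiff_subset
  rw [Finset.sdiff_sdiff_eq_self hI] at hDX
  have key := hq (C \ X) (by grind) (D \ X) (by grind)
  have e₁ : X \ I ∪ C \ X = C := by rw [← hCX]; grind
  have e₂ : I ∪ D \ X = D := by rw [← hDX]; grind
  rw [e₁, e₂, union_comm I] at key
  simp only [sup_idem, inf_idem, sdiff_self, bot_eq_empty, sum_empty] at hCD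
  linarith

theorem TotalExchange.multiExchange (h : TotalExchange v) {X Y I : Finset N} (hI : I ⊆ X \ Y) :
    ∃ J ⊆ Y \ X, v X + v Y ≤ v (X \ I ∪ J) + v (Y \ J ∪ I) := by
  obtain ⟨J, hJ, hv⟩ := (h.contract (X ∩ Y)).exchange_of_disjoint (X := X \ Y) (Y := Y \ X)
    disjoint_sdiff_sdiff hI
  have e₁ : X ∩ Y ∪ X \ Y = X := by grind
  have e₂ : X ∩ Y ∪ Y \ X = Y := by grind
  have e₃ : X ∩ Y ∪ ((X \ Y) \ I ∪ J) = X \ I ∪ J := by ext; grind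
  have e₄ : X ∩ Y ∪ ((Y \ X) \ J ∪ I) = Y \ J ∪ I := by ext; grind
  rw [e₁, e₂, e₃, e₄] at hv
  exact ⟨J, hJ, hv⟩

end Conjugation

section Regularization

variable {N : Type*} [Fintype N] [DecidableEq N] {D : Finset N → Prop} {v w : Finset N → ℝ} {M : ℝ}

/-- `w` is obtained from `v` on the domain `D` by charging `M` for every element by which a set
is changed in order to enter `D`. -/
structure IsRegularization (D : Finset N → Prop) (v : Finset N → ℝ) (M : ℝ)
    (w : Finset N → ℝ) : Prop where
  le : ∀ X Z, D Z → v Z - M * (symmDiff X Z).card ≤ w X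
  attained : ∀ X, ∃ Z, D Z ∧ w X = v Z - M * (symmDiff X Z).card

theorem exists_isRegularization (hD : ∃ Z, D Z) (v : Finset N → ℝ) (M : ℝ) :
    ∃ w, IsRegularization D v M w := by
  classical
  have key : ∀ X, ∃ Z, D Z ∧ ∀ Z', D Z' →
      v Z' - M * (symmDiff X Z').card ≤ v Z - M * (symmDiff X Z).card := by
    intro X
    obtain ⟨Z₀, hZ₀⟩ := hD
    obtain ⟨Z, hZ, hmax⟩ := exists_max_image (univ.filter D)
      (fun Z => v Z - M * (symmDiff X Z).card) ⟨Z₀, by simpa using hZ₀⟩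
    exact ⟨Z, by simpa using hZ, fun Z' hZ' => hmax Z' (by simpa using hZ')⟩
  choose Z hZ hmax using key
  exact ⟨fun X => v (Z X) - M * (symmDiff X (Z X)).card, fun X Z' => hmax X Z',
    fun X => ⟨Z X, hZ X, rfl⟩⟩

theorem card_symmDiff_add_le {P Q R S X Y Z W : Finset N}
    (h : ∀ x, (if x ∈ symmDiff P Q then (1 : ℝ) else 0) + (if x ∈ symmDiff R S then 1 else 0) ≤
      (if x ∈ symmDiff X Z then 1 else 0) + (if x ∈ symmDiff Y W then 1 else 0)) :
    ((symmDiff P Q).card : ℝ) + (symmDiff R S).card ≤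
      (symmDiff X Z).card + (symmDiff Y W).card := by
  simpa using sum_add_sum_le (a := fun _ => (1 : ℝ)) (b := fun _ => (1 : ℝ))
    (c := fun _ => (1 : ℝ)) (d := fun _ => (1 : ℝ)) h

theorem SingleExchange.totalExchange (h : SingleExchange D v) (hM : 0 ≤ M)
    (hw : IsRegularization D v M w) : TotalExchange w := by
  intro X Y k hk
  obtain ⟨Z, hZ, hXZ⟩ := hw.attained X
  obtain ⟨W, hW, hYW⟩ := hw.attained Y
  by_cases hkZW : k ∈ Z \ W
  · obtain ⟨E, hE, hE1, hDZ, hDW, hv⟩ := h Z W k hkZW hZ hW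
    refine ⟨E ∩ (Y \ X), inter_subset_right, (card_le_card inter_subset_left).trans hE1, ?_⟩
    have h1 := hw.le (X.erase k ∪ E ∩ (Y \ X)) _ hDZ
    have h2 := hw.le (insert k Y \ (E ∩ (Y \ X))) _ hDW
    have h3 := card_symmDiff_add_le (P := X.erase k ∪ E ∩ (Y \ X)) (Q := Z.erase k ∪ E)
      (R := insert k Y \ (E ∩ (Y \ X))) (S := insert k W \ E) (X := X) (Y := Y) (Z := Z) (W := W)
      (by
        intro x
        have hx := @hE x
        clear hE h1 h2 hv hDZ hDW hE1 hXZ hYW h hw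
        simp only [mem_symmDiff, mem_sdiff, mem_union, mem_erase, mem_insert, mem_inter]
          at hk hkZW hx ⊢
        by_cases hxk : x = k
        · subst hxk; simp_all
        · by_cases hxE : x ∈ E
          · obtain ⟨hxW, hxZ⟩ := hx hxE
            by_cases hxX : x ∈ X <;> by_cases hxY : x ∈ Y <;> simp_all
          · simp [hxk, hxE])
    have h4 := mul_le_mul_of_nonneg_left h3 hM
    linarith
  · refine ⟨∅, by simp, by simp, ?_⟩
    rw [union_empty, sdiff_empty]
    have h1 := hw.le (X.erase k) _ hZ
    have h2 := hw.le (insert k Y) _ hW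
    have h3 := card_symmDiff_add_le (P := X.erase k) (Q := Z) (R := insert k Y) (S := W)
      (X := X) (Y := Y) (Z := Z) (W := W)
      (by
        intro x
        clear h1 h2 hXZ hYW h hw
        simp only [mem_symmDiff, mem_sdiff, mem_erase, mem_insert] at hk hkZW ⊢
        by_cases hxk : x = k
        · subst hxk
          by_cases hxZ : x ∈ Z <;> by_cases hxW : x ∈ W <;> simp_all
        · simp [hxk])
    have h4 := mul_le_mul_of_nonneg_left h3 hM
    linarith

theorem SingleExchange.multiExchange (h : SingleExchange D v) : MultiExchange D v := by
  intro X Y I hI hX hY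
  obtain ⟨K, hK⟩ := (Set.finite_range v).bddAbove
  replace hK : ∀ Z, v Z ≤ K := fun Z => hK ⟨Z, rfl⟩
  obtain ⟨M, hM, hKM⟩ : ∃ M : ℝ, 0 ≤ M ∧ 2 * K - v X - v Y < M :=
    ⟨max 0 (2 * K - v X - v Y + 1), le_max_left _ _,
      lt_of_lt_of_le (by linarith) (le_max_right _ _)⟩
  obtain ⟨w, hw⟩ := exists_isRegularization ⟨X, hX⟩ v M
  obtain ⟨J, hJ, hJw⟩ := (h.totalExchange hM hw).multiExchange hI
  obtain ⟨Z, hZ, hZw⟩ := hw.attained (X \ I ∪ J)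
  obtain ⟨W, hW, hWw⟩ := hw.attained (Y \ J ∪ I)
  have hX' := hw.le X X hX
  have hY' := hw.le Y Y hY
  simp only [symmDiff_self, bot_eq_empty, card_empty, Nat.cast_zero, mul_zero, sub_zero] at hX' hY'
  have gap : ∀ {P Q : Finset N}, P ≠ Q → M ≤ M * (symmDiff P Q).card := by
    intro P Q hPQ
    have : 1 ≤ (symmDiff P Q).card :=
      card_pos.2 (nonempty_iff_ne_empty.2 fun h => hPQ (symmDiff_eq_bot.1 h))
    exact le_mul_of_one_le_right hM (by exact_mod_cast this)
  have nonneg : ∀ P Q : Finset N, 0 ≤ M * (symmDiff P Q).card := fun P Q => by positivity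
  have hKZ := hK Z
  have hKW := hK W
  have hXZ : X \ I ∪ J = Z := by
    by_contra hne
    have := gap hne
    have := nonneg (Y \ J ∪ I) W
    linarith
  have hYW : Y \ J ∪ I = W := by
    by_contra hne
    have := gap hne
    have := nonneg (X \ I ∪ J) Z
    linarith
  have := nonneg (X \ I ∪ J) Z
  have := nonneg (Y \ J ∪ I) W
  refine ⟨J, hJ, hXZ ▸ hZ, hYW ▸ hW, ?_⟩
  rw [← hXZ] at hZw
  rw [← hYW] at hWw
  simp only [symmDiff_self, bot_eq_empty, card_empty, Nat.cast_zero, mul_zero, sub_zero]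
    at hZw hWw
  linarith

end Regularization

section WithBotReal

variable {N : Type*} {f : Finset N → WithBot ℝ}

theorem add_le_add_iff_unbotD {a b c d : WithBot ℝ} (ha : a ≠ ⊥) (hb : b ≠ ⊥) :
    a + b ≤ c + d ↔
      c ≠ ⊥ ∧ d ≠ ⊥ ∧ a.unbotD 0 + b.unbotD 0 ≤ c.unbotD 0 + d.unbotD 0 := by
  lift a to ℝ using ha
  lift b to ℝ using hb
  induction c with
  | bot => simp [← WithBot.coe_add]
  | coe c =>
    induction d with
    | bot => simp [← WithBot.coe_add]
    | coe d => simp [← WithBot.coe_add]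

theorem mExcM_iff_multiExchange [DecidableEq N] :
    MExcM f ↔ MultiExchange (fun X => f X ≠ ⊥) (fun X => (f X).unbotD 0) := by
  constructor
  · intro h X Y I hI hX hY
    obtain ⟨J, hJ, hf⟩ := h X Y I hI
    exact ⟨J, hJ, (add_le_add_iff_unbotD hX hY).1 hf⟩
  · intro h X Y I hI
    by_cases hX : f X = ⊥
    · exact ⟨∅, by simp, by simp [hX]⟩
    by_cases hY : f Y = ⊥
    · exact ⟨∅, by simp, by simp [hY]⟩
    obtain ⟨J, hJ, hf⟩ := h X Y I hI hX hY
    exact ⟨J, hJ, (add_le_add_iff_unbotD hX hY).2 hf⟩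

theorem mExc_iff_singleExchange [DecidableEq N] :
    MExc f ↔ SingleExchange (fun X => f X ≠ ⊥) (fun X => (f X).unbotD 0) := by
  have e₁ : ∀ (X : Finset N) (i j : N), X.erase i ∪ {j} = insert j (X.erase i) := by
    intro X i j; rw [union_comm, insert_eq]
  have e₂ : ∀ (Y : Finset N) (i j : N), insert i Y \ {j} = (insert i Y).erase j := by
    intro Y i j; rw [sdiff_singleton_eq_erase]
  constructor
  · intro h X Y i hi hX hY
    have hne : ⊥ < f X + f Y := bot_lt_iff_ne_bot.2 (by simp [WithBot.add_eq_bot, hX, hY])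
    rcases le_max_iff.1 (h X Y i hi) with hf | hf
    · refine ⟨∅, by simp, by simp, ?_⟩
      simp only [union_empty, sdiff_empty]
      exact (add_le_add_iff_unbotD hX hY).1 hf
    · obtain ⟨j, hj, hf⟩ := (Finset.le_sup_iff hne).1 hf
      refine ⟨{j}, by simpa using hj, by simp, ?_⟩
      rw [e₁, e₂]
      exact (add_le_add_iff_unbotD hX hY).1 hf
  · intro h X Y i hi
    by_cases hX : f X = ⊥
    · simp [hX]
    by_cases hY : f Y = ⊥
    · simp [hY]
    obtain ⟨E, hE, hE1, hf⟩ := h X Y i hi hX hY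
    replace hf := (add_le_add_iff_unbotD hX hY).2 hf
    rcases E.eq_empty_or_nonempty with rfl | hne
    · rw [union_empty, sdiff_empty] at hf
      exact hf.trans (le_max_left _ _)
    · obtain ⟨j, rfl⟩ := card_eq_one.1 (le_antisymm hE1 hne.card_pos)
      rw [e₁, e₂] at hf
      exact hf.trans (le_max_of_le_right
        (Finset.le_sup (f := fun j => f (insert j (X.erase i)) + f ((insert i Y).erase j))
          (singleton_subset_iff.1 hE)))

end WithBotReal

theorem mnat_concave_iff_multiple_exchange {N : Type*} [Fintype N] [DecidableEq N]
    (f : Finset N → WithBot ℝ) (hdom : ∃ X, f X ≠ ⊥) :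
    MExc f ↔ MExcM f := by
  rw [mExc_iff_singleExchange, mExcM_iff_multiExchange]
  exact ⟨SingleExchange.multiExchange, MultiExchange.singleExchange⟩
end

section
/- A set function f : 2^N → ℝ ∪ {-∞} with dom f ≠ ∅ satisfies the strong no complementarities property (SNC) if and only if it satisfies the gross substitutes property (GS). -/
open Finset

/-- Demand correspondence: the maximizers of `f(Z) - p(Z)` over all `Z ⊆ N`. -/
def Demand {N : Type*} (f : Finset N → WithBot ℝ) (p : N → ℝ) : Set (Finset N) :=
  {X | ∀ Z : Finset N, f Z + ((-(∑ i ∈ Z, p i) : ℝ) : WithBot ℝ)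
        ≤ f X + ((-(∑ i ∈ X, p i) : ℝ) : WithBot ℝ)}

/-- (SNC): strong no complementarities property. -/
def SNC {N : Type*} [DecidableEq N] (f : Finset N → WithBot ℝ) : Prop :=
  ∀ X Y : Finset N, ∀ I ⊆ X \ Y, ∃ J ⊆ Y \ X,
    f X + f Y ≤ f ((X \ I) ∪ J) + f ((Y \ J) ∪ I)

/-- (GS): gross substitutes property. -/
def GS {N : Type*} (f : Finset N → WithBot ℝ) : Prop :=
  ∀ p q : N → ℝ, (∀ i, p i ≤ q i) → ∀ X ∈ Demand f p, ∃ Y ∈ Demand f q,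
    ∀ i ∈ X, p i = q i → i ∈ Y

/-- The surplus `g(Z) - p(Z)` of a bundle `Z` at prices `p`, for a real-valued `g`. -/
def surplus {N : Type*} (g : Finset N → ℝ) (p : N → ℝ) (Z : Finset N) : ℝ :=
  g Z - ∑ i ∈ Z, p i

/-- `X` maximizes the surplus at prices `p`. -/
def IsDemanded {N : Type*} (g : Finset N → ℝ) (p : N → ℝ) (X : Finset N) : Prop :=
  ∀ Z, surplus g p Z ≤ surplus g p X

/-- The gross substitutes property for real-valued set functions. -/
def RealGS {N : Type*} (g : Finset N → ℝ) : Prop :=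
  ∀ p q : N → ℝ, (∀ i, p i ≤ q i) → ∀ X, IsDemanded g p X →
    ∃ Y, IsDemanded g q Y ∧ ∀ i ∈ X, p i = q i → i ∈ Y

/-- The indirect utility: the maximal surplus at prices `p`. -/
noncomputable def indirectUtility {N : Type*} [Fintype N] (g : Finset N → ℝ) (p : N → ℝ) : ℝ :=
  univ.sup' univ_nonempty (surplus g p)

/-- The prices seen by an agent who holds `A ⊆ K`: the current price on its own goods, the
incremented price on the other goods of `K`, and `a` outside `K`. -/
def agentPrice {N : Type*} [DecidableEq N] (K : Finset N) (ε : ℝ) (a p : N → ℝ) (A : Finset N)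
    (i : N) : ℝ :=
  if i ∈ K then (if i ∈ A then p i else p i + ε) else a i

/-- A partition of `K` among two agents with outside prices `a`, `b` in which each agent
holds part of a bundle it demands at its own prices. -/
def AuctionState {N : Type*} [DecidableEq N] (g : Finset N → ℝ) (K : Finset N) (ε : ℝ)
    (a b p : N → ℝ) (A B : Finset N) : Prop :=
  (∀ i, i ∈ K ↔ i ∈ A ∨ i ∈ B) ∧ Disjoint A B ∧
    (∃ Z, IsDemanded g (agentPrice K ε a p A) Z ∧ A ⊆ Z) ∧
    ∃ Z, IsDemanded g (agentPrice K ε b p B) Z ∧ B ⊆ Z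

theorem exists_isDemanded {N : Type*} [Fintype N] (g : Finset N → ℝ) (p : N → ℝ) :
    ∃ X, IsDemanded g p X := by
  obtain ⟨X, -, hX⟩ := exists_max_image univ (surplus g p) univ_nonempty
  exact ⟨X, fun Z => hX Z (mem_univ Z)⟩

theorem surplus_le_indirectUtility {N : Type*} [Fintype N] (g : Finset N → ℝ) (p : N → ℝ)
    (Z : Finset N) :
    surplus g p Z ≤ indirectUtility g p :=
  le_sup' (surplus g p) (mem_univ Z)

theorem IsDemanded.surplus_eq {N : Type*} [Fintype N] {g : Finset N → ℝ} {p : N → ℝ}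
    {X : Finset N} (h : IsDemanded g p X) :
    surplus g p X = indirectUtility g p :=
  le_antisymm (surplus_le_indirectUtility g p X) (sup'_le _ _ fun Z _ => h Z)

section RealValued

variable {N : Type*} [DecidableEq N] {g : Finset N → ℝ}

theorem surplus_update (g : Finset N → ℝ) (p : N → ℝ) (i : N) (t : ℝ) (Z : Finset N) :
    surplus g (Function.update p i t) Z = surplus g p Z - if i ∈ Z then t - p i else 0 := by
  unfold surplus
  split_ifs with h
  · rw [sum_update_of_mem h, sum_eq_add_sum_sdiff_singleton_of_mem h p]
    ring
  · rw [sum_update_of_notMem h]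
    ring

theorem RealGS.indirectUtility_update [Fintype N] (hg : RealGS g) {p q : N → ℝ}
    (hpq : ∀ i, p i ≤ q i) {i : N} (hi : p i = q i) {t : ℝ} (ht : p i ≤ t) :
    indirectUtility g p + indirectUtility g (Function.update q i t) ≤
      indirectUtility g (Function.update p i t) + indirectUtility g q := by
  obtain ⟨Z, hZ⟩ := exists_isDemanded g p
  obtain ⟨W, hW⟩ := exists_isDemanded g (Function.update q i t)
  obtain ⟨V, hV, hmax⟩ := exists_max_image (univ.filter fun T : Finset N => i ∉ T) (surplus g p)
    ⟨∅, by simp⟩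
  rw [← hZ.surplus_eq, ← hW.surplus_eq]
  have hiV : i ∉ V := by simpa using hV
  have h1 := surplus_le_indirectUtility g (Function.update p i t) Z
  have h2 := surplus_le_indirectUtility g q W
  have h3 := surplus_le_indirectUtility g (Function.update p i t) V
  rw [surplus_update] at h1 h3 ⊢
  by_cases hiZ : i ∈ Z
  · by_cases hiW : i ∈ W
    · simp only [hiZ, hiW, if_true] at *
      linarith
    · set s := surplus g p Z - surplus g p V with hs
      have hZ' : IsDemanded g (Function.update p i (p i + s)) Z := by
        intro T
        rw [surplus_update, surplus_update]
        by_cases hiT : i ∈ T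
        · simpa [hiT, hiZ] using hZ T
        · have := hmax T (by simpa using hiT)
          simp only [hiT, hiZ, if_true, if_false]
          linarith
      obtain ⟨Y, hY, hsub⟩ := hg _ (Function.update q i (q i + s)) (by
        intro j
        by_cases hj : j = i
        · subst hj; simp [hi]
        · simpa [hj] using hpq j) Z hZ'
      have hiY : i ∈ Y := hsub i hiZ (by simp [hi])
      have h4 := hY W
      have h5 := surplus_le_indirectUtility g q Y
      rw [surplus_update, surplus_update] at h4
      simp only [hiY, hiW, hiV, if_true, if_false] at *
      linarith
  · simp only [hiZ, if_false] at *
    split_ifs <;> linarith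

theorem RealGS.indirectUtility_piecewise [Fintype N] (hg : RealGS g) {p q r : N → ℝ}
    (hpq : ∀ i, p i ≤ q i) (S : Finset N) (hS : ∀ i ∈ S, p i = q i) (hr : ∀ i ∈ S, p i ≤ r i) :
    indirectUtility g p + indirectUtility g (S.piecewise r q) ≤
      indirectUtility g (S.piecewise r p) + indirectUtility g q := by
  induction S using Finset.induction_on with
  | empty => simp
  | insert j S hj ih =>
    have h1 := ih (fun i hi => hS i (mem_insert_of_mem hi)) fun i hi => hr i (mem_insert_of_mem hi)
    have h2 := hg.indirectUtility_update (p := S.piecewise r p) (q := S.piecewise r q) (i := j)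
      (t := r j) (fun i => by by_cases hi : i ∈ S <;> simp [hi, hpq i])
      (by simpa [hj] using hS j (mem_insert_self _ _))
      (by simpa [hj] using hr j (mem_insert_self _ _))
    rw [piecewise_insert, piecewise_insert]
    linarith

theorem AuctionState.symm {K : Finset N} {ε : ℝ} {a b p : N → ℝ} {A B : Finset N}
    (h : AuctionState g K ε a b p A B) : AuctionState g K ε b a p B A :=
  ⟨fun i => (h.1 i).trans or_comm, h.2.1.symm, h.2.2.2, h.2.2.1⟩

theorem AuctionState.step (hg : RealGS g) {K : Finset N} {ε : ℝ} (hε : 0 ≤ ε) {a b p : N → ℝ}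
    {A B Z : Finset N} (h : AuctionState g K ε a b p A B)
    (hZ : IsDemanded g (agentPrice K ε a p A) Z) (hAZ : A ⊆ Z) :
    AuctionState g K ε a b (fun i => if i ∈ (Z ∩ K) \ A then p i + ε else p i) (Z ∩ K) (K \ Z) := by
  obtain ⟨hK, hd, -, W, hW, hBW⟩ := h
  have hd' : ∀ i ∈ A, i ∉ B := fun i hi hi' => disjoint_left.1 hd hi hi'
  refine ⟨fun i => by grind, disjoint_left.2 fun i => by grind, ⟨Z, ?_, inter_subset_left⟩, ?_⟩
  · convert hZ using 1
    funext i
    unfold agentPrice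
    grind
  · obtain ⟨Y, hY, hsub⟩ := hg _ (agentPrice K ε b
      (fun i => if i ∈ (Z ∩ K) \ A then p i + ε else p i) (K \ Z)) (fun i => by
        unfold agentPrice
        split_ifs <;> grind) W hW
    refine ⟨Y, hY, fun i hi => hsub i (hBW (by grind)) ?_⟩
    unfold agentPrice
    grind

theorem AuctionState.price_le {K : Finset N} {ε R : ℝ} (hR : ∀ Z, |g Z| ≤ R) {a b p : N → ℝ}
    {A B : Finset N} (h : AuctionState g K ε a b p A B) {i : N} (hi : i ∈ A) :
    p i ≤ 2 * R := by
  obtain ⟨hK, -, ⟨Z, hZ, hAZ⟩, -⟩ := h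
  have h1 := hZ (Z.erase i)
  have h2 : ∑ j ∈ Z, agentPrice K ε a p A j
      = ∑ j ∈ Z.erase i, agentPrice K ε a p A j + agentPrice K ε a p A i :=
    (sum_erase_add _ _ (hAZ hi)).symm
  have h3 : agentPrice K ε a p A i = p i := by
    simp [agentPrice, hi, (hK i).2 (Or.inl hi)]
  unfold surplus at h1
  have := abs_le.1 (hR Z)
  have := abs_le.1 (hR (Z.erase i))
  linarith

theorem auctionState_of_low_price [Fintype N] {K : Finset N} {ε R : ℝ} (hR : ∀ Z, |g Z| ≤ R)
    (a b : N → ℝ) {p : N → ℝ} (hp : ∀ i ∈ K, p i < -(2 * R)) :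
    AuctionState g K ε a b p K ∅ := by
  obtain ⟨Z, hZ⟩ := exists_isDemanded g (agentPrice K ε a p K)
  obtain ⟨W, hW⟩ := exists_isDemanded g (agentPrice K ε b p ∅)
  refine ⟨by simp, by simp, ⟨Z, hZ, fun i hi => ?_⟩, W, hW, by simp⟩
  by_contra hiZ
  have h1 := hZ (insert i Z)
  have h3 : agentPrice K ε a p K i = p i := by simp [agentPrice, hi]
  unfold surplus at h1
  rw [sum_insert hiZ, h3] at h1
  have := abs_le.1 (hR Z)
  have := abs_le.1 (hR (insert i Z))
  linarith [hp i hi]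

theorem IsDemanded.surplus_piecewise_le {K : Finset N} {ε : ℝ} (hε : 0 ≤ ε) {a p : N → ℝ}
    {A Z : Finset N} (hZ : IsDemanded g (agentPrice K ε a p A) Z) (hA : Z ∩ K ⊆ A)
    (W : Finset N) :
    surplus g (K.piecewise p a) W ≤ surplus g (K.piecewise p a) Z + ε * #K := by
  have h1 : surplus g (K.piecewise p a) Z = surplus g (agentPrice K ε a p A) Z := by
    unfold surplus
    congr 1
    refine sum_congr rfl fun i hi => ?_
    unfold agentPrice
    by_cases hiK : i ∈ K
    · simp [hiK, hA (mem_inter.2 ⟨hi, hiK⟩)]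
    · simp [hiK]
  have h2 : ∑ i ∈ W, agentPrice K ε a p A i ≤ ∑ i ∈ W, K.piecewise p a i + ε * #K := by
    calc ∑ i ∈ W, agentPrice K ε a p A i
        ≤ ∑ i ∈ W, (K.piecewise p a i + if i ∈ K then ε else 0) := by
          refine sum_le_sum fun i _ => ?_
          unfold agentPrice
          by_cases hiK : i ∈ K
          · by_cases hiA : i ∈ A <;> simp [hiK, hiA, hε]
          · simp [hiK]
      _ = ∑ i ∈ W, K.piecewise p a i + ε * #(W ∩ K) := by
          rw [sum_add_distrib, sum_ite_mem, sum_const, nsmul_eq_mul, mul_comm]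
      _ ≤ _ := by
          gcongr
          exact inter_subset_right
  have h3 := hZ W
  rw [h1]
  unfold surplus at *
  linarith

/-- The ascending auction: two agents with gross substitutes valuations can divide `K` at
prices at which both are satisfied up to `ε * #K`. -/
theorem RealGS.exists_approx_equilibrium [Fintype N] (hg : RealGS g) (K : Finset N) {ε : ℝ}
    (hε : 0 < ε) (a b : N → ℝ) :
    ∃ (p : N → ℝ) (Z W : Finset N), (∀ i ∈ K, i ∈ W ↔ i ∉ Z) ∧
      (∀ T, surplus g (K.piecewise p a) T ≤ surplus g (K.piecewise p a) Z + ε * #K) ∧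
      ∀ T, surplus g (K.piecewise p b) T ≤ surplus g (K.piecewise p b) W + ε * #K := by
  obtain ⟨R, hR⟩ : ∃ R, ∀ Z, |g Z| ≤ R :=
    ⟨univ.sup' univ_nonempty fun Z => |g Z|, fun Z => le_sup' (fun Z => |g Z|) (mem_univ Z)⟩
  let price (n : N → ℕ) (i : N) : ℝ := -(2 * R) - 1 + ε * n i
  let reach : Set ℕ := {T | ∃ n A B, AuctionState g K ε a b (price n) A B ∧ ∑ i ∈ K, n i = T}
  have hne : reach.Nonempty :=
    ⟨0, 0, K, ∅, auctionState_of_low_price hR a b fun i _ => by simp [price], by simp⟩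
  have hbdd : BddAbove reach := by
    refine ⟨#K * ⌈(4 * R + 1) / ε⌉₊, ?_⟩
    rintro T ⟨n, A, B, h, rfl⟩
    rw [← smul_eq_mul]
    refine sum_le_card_nsmul _ _ _ fun i hi => ?_
    have h1 : price n i ≤ 2 * R :=
      ((h.1 i).1 hi).elim (fun hA => h.price_le hR hA) fun hB => h.symm.price_le hR hB
    have h2 : (n i : ℝ) ≤ (4 * R + 1) / ε := by
      rw [le_div_iff₀ hε]
      simp only [price] at h1
      linarith
    exact_mod_cast h2.trans (Nat.le_ceil _)
  have hraise (n : N → ℕ) (S : Finset N) :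
      (fun i => if i ∈ S then price n i + ε else price n i)
        = price fun i => n i + if i ∈ S then 1 else 0 := by
    funext i
    by_cases hi : i ∈ S
    · simp only [hi, if_true, price]
      push_cast
      ring
    · simp [hi, price]
  have hlt (n : N → ℕ) (S : Finset N) (hS : S.Nonempty) (hSK : S ⊆ K) :
      ∑ i ∈ K, n i < ∑ i ∈ K, (n i + if i ∈ S then 1 else 0) := by
    obtain ⟨i, hi⟩ := hS
    exact sum_lt_sum (fun j _ => by simp) ⟨i, hSK hi, by simp [hi]⟩
  obtain ⟨n, A, B, h, hT⟩ := Nat.sSup_mem hne hbdd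
  have hmax : ∀ n' A' B', AuctionState g K ε a b (price n') A' B' →
      ∑ i ∈ K, n' i ≤ ∑ i ∈ K, n i := fun n' A' B' h' =>
    (le_csSup hbdd ⟨n', A', B', h', rfl⟩).trans hT.ge
  obtain ⟨Z, hZ, hAZ⟩ := h.2.2.1
  obtain ⟨W, hW, hBW⟩ := h.2.2.2
  have hZA : Z ∩ K ⊆ A := by
    by_contra hcon
    have h' := h.step hg hε.le hZ hAZ
    rw [hraise] at h'
    exact (hlt n _ (sdiff_nonempty.2 hcon) (sdiff_subset.trans inter_subset_right)).not_ge
      (hmax _ _ _ h')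
  have hWB : W ∩ K ⊆ B := by
    by_contra hcon
    have h' := (h.symm.step hg hε.le hW hBW).symm
    rw [hraise] at h'
    exact (hlt n _ (sdiff_nonempty.2 hcon) (sdiff_subset.trans inter_subset_right)).not_ge
      (hmax _ _ _ h')
  refine ⟨price n, Z, W, fun i hi => ⟨fun hiW hiZ => ?_, fun hiZ => ?_⟩,
    hZ.surplus_piecewise_le hε.le hZA, hW.surplus_piecewise_le hε.le hWB⟩
  · exact disjoint_left.1 h.2.1 (hZA (mem_inter.2 ⟨hiZ, hi⟩)) (hWB (mem_inter.2 ⟨hiW, hi⟩))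
  · exact ((h.1 i).1 hi).elim (fun hA => absurd (hAZ hA) hiZ) fun hB => hBW hB

theorem notMem_of_high_price {R δ : ℝ} (hR : ∀ Z, |g Z| ≤ R) {p : N → ℝ} {Z : Finset N}
    (hZ : ∀ T, surplus g p T ≤ surplus g p Z + δ) {i : N} (hi : 2 * R + δ < p i) : i ∉ Z := by
  intro hiZ
  have h1 := hZ (Z.erase i)
  unfold surplus at h1
  rw [← sum_erase_add _ _ hiZ] at h1
  have := abs_le.1 (hR Z)
  have := abs_le.1 (hR (Z.erase i))
  linarith

theorem mem_of_low_price {R δ : ℝ} (hR : ∀ Z, |g Z| ≤ R) {p : N → ℝ} {Z : Finset N}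
    (hZ : ∀ T, surplus g p T ≤ surplus g p Z + δ) {i : N} (hi : p i < -(2 * R + δ)) : i ∈ Z := by
  by_contra hiZ
  have h1 := hZ (insert i Z)
  unfold surplus at h1
  rw [sum_insert hiZ] at h1
  have := abs_le.1 (hR Z)
  have := abs_le.1 (hR (insert i Z))
  linarith

theorem RealGS.approx_exchange [Fintype N] (hg : RealGS g) {X Y I : Finset N} (hI : I ⊆ X \ Y)
    {η : ℝ} (hη : 0 < η) :
    ∃ J ⊆ Y \ X, g X + g Y ≤ g ((X \ I) ∪ J) + g ((Y \ J) ∪ I) + η := by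
  obtain ⟨R, hR⟩ : ∃ R, ∀ Z, |g Z| ≤ R :=
    ⟨univ.sup' univ_nonempty fun Z => |g Z|, fun Z => le_sup' (fun Z => |g Z|) (mem_univ Z)⟩
  have hR0 : 0 ≤ R := (abs_nonneg _).trans (hR ∅)
  set K := Y \ X with hK
  set ε := η / (2 * (#K + 1)) with hε
  have hε0 : 0 < ε := by positivity
  have hεK : ε * #K ≤ η / 2 := by
    rw [hε, div_mul_eq_mul_div, div_le_iff₀ (by positivity)]
    nlinarith
  set M := 2 * R + η with hM
  let a (i : N) : ℝ := if i ∈ X \ I then -M else M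
  let b (i : N) : ℝ := if i ∈ (X ∩ Y) ∪ I then -M else M
  obtain ⟨p, Z, W, hZW, hZ, hW⟩ := hg.exists_approx_equilibrium K hε0 a b
  have hIX : ∀ i ∈ I, i ∈ X ∧ i ∉ Y := fun i hi => mem_sdiff.1 (hI hi)
  have hZ1 : ∀ i, i ∉ K → (i ∈ Z ↔ i ∈ X \ I) := by
    intro i hiK
    by_cases hi : i ∈ X \ I
    · refine iff_of_true (mem_of_low_price hR hZ ?_) hi
      simp only [hiK, not_false_eq_true, piecewise_eq_of_notMem, a, hi, if_true]
      linarith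
    · refine iff_of_false (notMem_of_high_price hR hZ ?_) hi
      simp only [hiK, not_false_eq_true, piecewise_eq_of_notMem, a, hi, if_false]
      linarith
  have hW1 : ∀ i, i ∉ K → (i ∈ W ↔ i ∈ (X ∩ Y) ∪ I) := by
    intro i hiK
    by_cases hi : i ∈ (X ∩ Y) ∪ I
    · refine iff_of_true (mem_of_low_price hR hW ?_) hi
      simp only [hiK, not_false_eq_true, piecewise_eq_of_notMem, b, hi, if_true]
      linarith
    · refine iff_of_false (notMem_of_high_price hR hW ?_) hi
      simp only [hiK, not_false_eq_true, piecewise_eq_of_notMem, b, hi, if_false]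
      linarith
  have hZeq : (X \ I) ∪ (Z ∩ K) = Z := by
    ext i
    have := hZ1 i
    grind
  have hWeq : (Y \ (Z ∩ K)) ∪ I = W := by
    ext i
    have := hW1 i
    have := hZW i
    grind
  refine ⟨Z ∩ K, inter_subset_right, ?_⟩
  rw [hZeq, hWeq]
  let m : N → ℝ := I.piecewise (fun _ => -M) (K.piecewise p a)
  let r : N → ℝ := fun _ => M
  have hma : I.piecewise r m = K.piecewise p a := by
    funext i
    have := hIX i
    by_cases hi : i ∈ I
    · have hiK : i ∉ K := by grind
      simp [hi, hiK, r, a]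
    · simp [hi, m]
  have hsub := hg.indirectUtility_piecewise (p := m) (q := K.piecewise p b) (r := r)
    (by
      intro i
      by_cases hi : i ∈ I
      · have hiK : i ∉ K := by have := hIX i; grind
        simp [hi, hiK, m, b]
      · by_cases hiK : i ∈ K
        · simp [hi, hiK, m]
        · simp only [hi, hiK, not_false_eq_true, piecewise_eq_of_notMem, m, a, b]
          split_ifs <;> first | linarith | grind) I
    (by
      intro i hi
      have hiK : i ∉ K := by have := hIX i; grind
      simp [hi, hiK, m, b])
    (by
      intro i hi
      simp only [hi, piecewise_eq_of_mem, m, r]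
      linarith)
  rw [hma] at hsub
  have h1 := surplus_le_indirectUtility g m X
  have h2 := surplus_le_indirectUtility g (I.piecewise r (K.piecewise p b)) Y
  have h3 : indirectUtility g (K.piecewise p a) ≤ surplus g (K.piecewise p a) Z + ε * #K :=
    sup'_le _ _ fun T _ => hZ T
  have h4 : indirectUtility g (K.piecewise p b) ≤ surplus g (K.piecewise p b) W + ε * #K :=
    sup'_le _ _ fun T _ => hW T
  have h5 : ∑ i ∈ X, m i + ∑ i ∈ Y, I.piecewise r (K.piecewise p b) i
      = ∑ i ∈ Z, K.piecewise p a i + ∑ i ∈ W, K.piecewise p b i := by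
    have hsum (S : Finset N) (c : N → ℝ) : ∑ i ∈ S, c i = ∑ i, if i ∈ S then c i else 0 := by
      simp
    rw [hsum X, hsum Y, hsum Z, hsum W, ← sum_add_distrib, ← sum_add_distrib]
    refine sum_congr rfl fun i _ => ?_
    have := hIX i
    by_cases hiK : i ∈ K
    · have hiX : i ∉ X := (mem_sdiff.1 hiK).2
      have hiY : i ∈ Y := (mem_sdiff.1 hiK).1
      have hiI : i ∉ I := fun h => hiX (this h).1
      have := hZW i hiK
      by_cases hiZ : i ∈ Z <;> simp_all
    · have e1 := hZ1 i hiK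
      have e2 := hW1 i hiK
      simp only [e1, e2, m, piecewise, hiK, if_false, a, b, r]
      grind
  unfold surplus at *
  linarith

theorem RealGS.exchange [Fintype N] (hg : RealGS g) {X Y I : Finset N} (hI : I ⊆ X \ Y) :
    ∃ J ⊆ Y \ X, g X + g Y ≤ g ((X \ I) ∪ J) + g ((Y \ J) ∪ I) := by
  obtain ⟨J, hJ, hmax⟩ := exists_max_image (Y \ X).powerset
    (fun J => g ((X \ I) ∪ J) + g ((Y \ J) ∪ I)) ⟨∅, by simp⟩
  refine ⟨J, mem_powerset.1 hJ, le_of_forall_pos_le_add fun η hη => ?_⟩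
  obtain ⟨J', hJ', h⟩ := hg.approx_exchange hI hη
  have := hmax J' (mem_powerset.2 hJ')
  linarith

end RealValued

/-- Prices truncated to `[-M, M]`. -/
noncomputable def clipPrice {N : Type*} (M : ℝ) (p : N → ℝ) (i : N) : ℝ := max (-M) (min (p i) M)

theorem clipPrice_mono {N : Type*} (M : ℝ) {p q : N → ℝ} (h : ∀ i, p i ≤ q i) (i : N) :
    clipPrice M p i ≤ clipPrice M q i :=
  max_le_max le_rfl (min_le_min (h i) le_rfl)

section Extension

variable {N : Type*} [Fintype N] [DecidableEq N]

/-- `M` times the size of the symmetric difference of `S` and `Z`. -/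
def distPenalty (M : ℝ) (S Z : Finset N) : ℝ :=
  ∑ i, if (i ∈ S ↔ i ∈ Z) then 0 else M

/-- The extension of `g` from the family `F` to all sets by a linear penalty for leaving `F`. -/
noncomputable def penaltyExtension (F : Finset (Finset N)) (hF : F.Nonempty) (g : Finset N → ℝ)
    (M : ℝ) (S : Finset N) : ℝ :=
  F.sup' hF fun Z => g Z - distPenalty M S Z

/-- The best bundle to hold when `Z` is used, at prices `p` and disposal and purchase cost `M`. -/
noncomputable def bestHolding (M : ℝ) (p : N → ℝ) (Z : Finset N) : Finset N :=
  univ.filter fun i => (i ∈ Z ∧ p i ≤ M) ∨ (i ∉ Z ∧ p i ≤ -M)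

/-- The contribution of `i` to `distPenalty M S Z + ∑ i ∈ S, p i`. -/
noncomputable def holdingCost (M : ℝ) (p : N → ℝ) (S Z : Finset N) (i : N) : ℝ :=
  (if (i ∈ S ↔ i ∈ Z) then 0 else M) + if i ∈ S then p i else 0

theorem distPenalty_add_sum (M : ℝ) (p : N → ℝ) (S Z : Finset N) :
    distPenalty M S Z + ∑ i ∈ S, p i = ∑ i, holdingCost M p S Z i := by
  simp [distPenalty, holdingCost, sum_add_distrib]

theorem holdingCost_bestHolding {M : ℝ} (hM : 0 ≤ M) (p : N → ℝ) (Z : Finset N) (i : N) :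
    holdingCost M p (bestHolding M p Z) Z i
      = (if i ∈ Z then clipPrice M p i else 0) - max (-M - p i) 0 := by
  unfold holdingCost clipPrice bestHolding
  simp only [mem_filter, mem_univ, true_and]
  grind

theorem holdingCost_bestHolding_le {M : ℝ} (p : N → ℝ) (S Z : Finset N) (i : N) :
    holdingCost M p (bestHolding M p Z) Z i ≤ holdingCost M p S Z i := by
  unfold holdingCost bestHolding
  simp only [mem_filter, mem_univ, true_and]
  grind

theorem mem_bestHolding_of_holdingCost_eq {M : ℝ} (hM : 0 ≤ M) (p : N → ℝ) {S Z : Finset N}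
    {i : N} (hi : i ∈ S)
    (h : holdingCost M p (bestHolding M p Z) Z i = holdingCost M p S Z i) :
    i ∈ bestHolding M p Z := by
  rw [holdingCost_bestHolding hM] at h
  unfold holdingCost clipPrice at h
  unfold bestHolding
  simp only [mem_filter, mem_univ, true_and]
  grind

theorem sum_holdingCost_bestHolding {M : ℝ} (hM : 0 ≤ M) (p : N → ℝ) (Z : Finset N) :
    ∑ i, holdingCost M p (bestHolding M p Z) Z i
      = ∑ i ∈ Z, clipPrice M p i - ∑ i, max (-M - p i) 0 := by
  simp [holdingCost_bestHolding hM, sum_sub_distrib]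

theorem realGS_penaltyExtension {F : Finset (Finset N)} (hF : F.Nonempty) {g : Finset N → ℝ}
    (hg : ∀ p q : N → ℝ, (∀ i, p i ≤ q i) →
      ∀ X ∈ F, (∀ Z ∈ F, surplus g p Z ≤ surplus g p X) →
      ∃ Y ∈ F, (∀ Z ∈ F, surplus g q Z ≤ surplus g q Y) ∧ ∀ i ∈ X, p i = q i → i ∈ Y)
    {M : ℝ} (hM : 0 ≤ M) : RealGS (penaltyExtension F hF g M) := by
  have hlower (p : N → ℝ) (S : Finset N) {Z : Finset N} (hZ : Z ∈ F) :
      g Z - ∑ i, holdingCost M p S Z i ≤ surplus (penaltyExtension F hF g M) p S := by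
    have := le_sup' (fun Z => g Z - distPenalty M S Z) hZ
    rw [← distPenalty_add_sum]
    unfold surplus penaltyExtension
    linarith
  have hattain (p : N → ℝ) (S : Finset N) :
      ∃ Z ∈ F, surplus (penaltyExtension F hF g M) p S = g Z - ∑ i, holdingCost M p S Z i := by
    obtain ⟨Z, hZ, h⟩ := exists_mem_eq_sup' hF fun Z => g Z - distPenalty M S Z
    refine ⟨Z, hZ, ?_⟩
    rw [← distPenalty_add_sum]
    unfold surplus penaltyExtension
    rw [h]
    ring
  have hbest (p : N → ℝ) (S Z : Finset N) :
      ∑ i, holdingCost M p (bestHolding M p Z) Z i ≤ ∑ i, holdingCost M p S Z i :=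
    sum_le_sum fun i _ => holdingCost_bestHolding_le p S Z i
  intro p q hpq S hS
  obtain ⟨Z, hZF, hZ⟩ := hattain p S
  have hZdem : ∀ W ∈ F, surplus g (clipPrice M p) W ≤ surplus g (clipPrice M p) Z := by
    intro W hW
    have h1 := (hlower p (bestHolding M p W) hW).trans (hS _)
    have h2 := hbest p S Z
    rw [sum_holdingCost_bestHolding hM] at h1 h2
    unfold surplus at h1 hZ ⊢
    linarith
  have htight : ∀ i, holdingCost M p (bestHolding M p Z) Z i = holdingCost M p S Z i := by
    have h1 := (hlower p (bestHolding M p Z) hZF).trans (hS _)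
    have h2 := (sum_eq_sum_iff_of_le fun i (_ : i ∈ univ) =>
      holdingCost_bestHolding_le p S Z i).1 (le_antisymm (hbest p S Z) (by linarith))
    exact fun i => h2 i (mem_univ i)
  obtain ⟨Y, hYF, hY, hsub⟩ := hg _ _ (clipPrice_mono M hpq) Z hZF hZdem
  refine ⟨bestHolding M q Y, fun T => ?_, fun i hi hpi => ?_⟩
  · obtain ⟨W, hWF, hW⟩ := hattain q T
    have h1 := hlower q (bestHolding M q Y) hYF
    have h2 := hbest q T W
    have h3 := hY W hWF
    rw [sum_holdingCost_bestHolding hM] at h1 h2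
    unfold surplus at h1 h3 hW ⊢
    linarith
  · have hmem := mem_bestHolding_of_holdingCost_eq hM p hi (htight i)
    have hYi : i ∈ Z → i ∈ Y := fun h => hsub i h (by simp [clipPrice, hpi])
    unfold bestHolding at hmem ⊢
    simp only [mem_filter, mem_univ, true_and] at hmem ⊢
    rw [hpi] at hmem
    grind

theorem distPenalty_nonneg {M : ℝ} (hM : 0 ≤ M) (S Z : Finset N) : 0 ≤ distPenalty M S Z :=
  sum_nonneg fun i _ => by split_ifs <;> simp [hM]

theorem distPenalty_self (M : ℝ) (S : Finset N) : distPenalty M S S = 0 := by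
  simp [distPenalty]

theorem le_distPenalty {M : ℝ} (hM : 0 ≤ M) {S Z : Finset N} (h : S ≠ Z) :
    M ≤ distPenalty M S Z := by
  obtain ⟨i, hi⟩ : ∃ i, ¬(i ∈ S ↔ i ∈ Z) := by
    by_contra! hcon
    exact h (Finset.ext hcon)
  calc M = if (i ∈ S ↔ i ∈ Z) then 0 else M := by rw [if_neg hi]
    _ ≤ _ := single_le_sum (f := fun i => if (i ∈ S ↔ i ∈ Z) then 0 else M)
      (fun j _ => by split_ifs <;> simp [hM]) (mem_univ i)

/-- Multiple exchange for a function with effective domain `F` satisfying gross substitutes. -/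
theorem exchange_of_grossSubstitutes {F : Finset (Finset N)} {g : Finset N → ℝ}
    (hg : ∀ p q : N → ℝ, (∀ i, p i ≤ q i) →
      ∀ X ∈ F, (∀ Z ∈ F, surplus g p Z ≤ surplus g p X) →
      ∃ Y ∈ F, (∀ Z ∈ F, surplus g q Z ≤ surplus g q Y) ∧ ∀ i ∈ X, p i = q i → i ∈ Y)
    {X Y I : Finset N} (hX : X ∈ F) (hY : Y ∈ F) (hI : I ⊆ X \ Y) :
    ∃ J ⊆ Y \ X, (X \ I) ∪ J ∈ F ∧ (Y \ J) ∪ I ∈ F ∧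
      g X + g Y ≤ g ((X \ I) ∪ J) + g ((Y \ J) ∪ I) := by
  have hF : F.Nonempty := ⟨X, hX⟩
  obtain ⟨R, hR⟩ : ∃ R, ∀ Z, |g Z| ≤ R :=
    ⟨univ.sup' univ_nonempty fun Z => |g Z|, fun Z => le_sup' (fun Z => |g Z|) (mem_univ Z)⟩
  have hR0 : 0 ≤ R := (abs_nonneg _).trans (hR ∅)
  set M := 4 * R + 1 with hMdef
  have hM : 0 ≤ M := by positivity
  obtain ⟨J, hJ, h⟩ := (realGS_penaltyExtension hF hg hM).exchange hI
  refine ⟨J, hJ, ?_⟩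
  have hself {S : Finset N} (hS : S ∈ F) : g S ≤ penaltyExtension F hF g M S := by
    have := le_sup' (fun Z => g Z - distPenalty M S Z) hS
    rwa [distPenalty_self, sub_zero] at this
  obtain ⟨Z, hZ, hZeq⟩ := exists_mem_eq_sup' hF fun Z => g Z - distPenalty M ((X \ I) ∪ J) Z
  obtain ⟨W, hW, hWeq⟩ := exists_mem_eq_sup' hF fun Z => g Z - distPenalty M ((Y \ J) ∪ I) Z
  have h1 := hself hX
  have h2 := hself hY
  change _ ≤ F.sup' hF _ + F.sup' hF _ at h
  rw [hZeq, hWeq] at h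
  have hZ0 := distPenalty_nonneg hM ((X \ I) ∪ J) Z
  have hW0 := distPenalty_nonneg hM ((Y \ J) ∪ I) W
  have bX := abs_le.1 (hR X)
  have bY := abs_le.1 (hR Y)
  have bZ := abs_le.1 (hR Z)
  have bW := abs_le.1 (hR W)
  have eZ : (X \ I) ∪ J = Z := by
    by_contra hne
    linarith [le_distPenalty hM hne]
  have eW : (Y \ J) ∪ I = W := by
    by_contra hne
    linarith [le_distPenalty hM hne]
  rw [eZ, eW] at h ⊢
  simp only [distPenalty_self, sub_zero] at h
  exact ⟨hZ, hW, by linarith⟩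

end Extension

section WithBotValued

variable {N : Type*}

theorem coe_unbotD_of_ne_bot {x : WithBot ℝ} (h : x ≠ ⊥) : ((x.unbotD 0 : ℝ) : WithBot ℝ) = x := by
  lift x to ℝ using h
  rfl

theorem mem_demand_iff {f : Finset N → WithBot ℝ} (hdom : ∃ X, f X ≠ ⊥) {p : N → ℝ}
    {X : Finset N} :
    X ∈ Demand f p ↔ f X ≠ ⊥ ∧ ∀ Z, f Z ≠ ⊥ →
      surplus (fun S => (f S).unbotD 0) p Z ≤ surplus (fun S => (f S).unbotD 0) p X := by
  have key {Z W : Finset N} (hZ : f Z ≠ ⊥) (hW : f W ≠ ⊥) :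
      f Z + ((-(∑ i ∈ Z, p i) : ℝ) : WithBot ℝ) ≤ f W + ((-(∑ i ∈ W, p i) : ℝ) : WithBot ℝ) ↔
        surplus (fun S => (f S).unbotD 0) p Z ≤ surplus (fun S => (f S).unbotD 0) p W := by
    rw [← coe_unbotD_of_ne_bot hZ, ← coe_unbotD_of_ne_bot hW, ← WithBot.coe_add,
      ← WithBot.coe_add, WithBot.coe_le_coe]
    simp only [surplus, sub_eq_add_neg]
  constructor
  · intro h
    have hX : f X ≠ ⊥ := by
      intro hX
      obtain ⟨Z, hZ⟩ := hdom
      have h1 := h Z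
      rw [hX, WithBot.bot_add, le_bot_iff, WithBot.add_eq_bot] at h1
      exact h1.elim hZ (WithBot.coe_ne_bot)
    exact ⟨hX, fun Z hZ => (key hZ hX).1 (h Z)⟩
  · rintro ⟨hX, h⟩ Z
    by_cases hZ : f Z = ⊥
    · rw [hZ, WithBot.bot_add]
      exact bot_le
    · exact (key hZ hX).2 (h Z hZ)

theorem demand_nonempty [Fintype N] (f : Finset N → WithBot ℝ) (p : N → ℝ) :
    (Demand f p).Nonempty := by
  obtain ⟨X, -, hX⟩ := exists_max_image univ
    (fun Z => f Z + ((-(∑ i ∈ Z, p i) : ℝ) : WithBot ℝ)) univ_nonempty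
  exact ⟨X, fun Z => hX Z (mem_univ Z)⟩

theorem SNC.gs [Fintype N] [DecidableEq N] {f : Finset N → WithBot ℝ} (hdom : ∃ X, f X ≠ ⊥)
    (h : SNC f) : GS f := by
  intro p q hpq X hX
  obtain ⟨Y, hY⟩ := demand_nonempty f q
  set I := (X \ Y).filter fun i => p i = q i with hIdef
  have hI : I ⊆ X \ Y := filter_subset _ _
  obtain ⟨J, hJ, hle⟩ := h X Y I hI
  rw [mem_demand_iff hdom] at hX hY
  obtain ⟨hX0, hX⟩ := hX
  obtain ⟨hY0, hY⟩ := hY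
  have hne : f ((X \ I) ∪ J) + f ((Y \ J) ∪ I) ≠ ⊥ := by
    refine ne_bot_of_le_ne_bot ?_ hle
    rw [Ne, WithBot.add_eq_bot]
    tauto
  rw [Ne, WithBot.add_eq_bot, not_or] at hne
  obtain ⟨hA, hB⟩ := hne
  rw [← coe_unbotD_of_ne_bot hX0, ← coe_unbotD_of_ne_bot hY0, ← coe_unbotD_of_ne_bot hA,
    ← coe_unbotD_of_ne_bot hB, ← WithBot.coe_add, ← WithBot.coe_add, WithBot.coe_le_coe] at hle
  refine ⟨(Y \ J) ∪ I, (mem_demand_iff hdom).2 ⟨hB, fun Z hZ => (hY Z hZ).trans ?_⟩, ?_⟩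
  · have h1 := hX _ hA
    have hIX : I ⊆ X := hI.trans sdiff_subset
    have hJY : J ⊆ Y := hJ.trans sdiff_subset
    have e1 : ∑ i ∈ (X \ I) ∪ J, p i = ∑ i ∈ X \ I, p i + ∑ i ∈ J, p i :=
      sum_union (disjoint_left.2 fun i => by grind)
    have e2 : ∑ i ∈ (Y \ J) ∪ I, q i = ∑ i ∈ Y \ J, q i + ∑ i ∈ I, q i :=
      sum_union (disjoint_left.2 fun i => by grind)
    have e3 := sum_sdiff (f := p) hIX
    have e4 := sum_sdiff (f := q) hJY
    have e5 : ∑ i ∈ I, p i = ∑ i ∈ I, q i := sum_congr rfl fun i hi => (mem_filter.1 hi).2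
    have e6 : ∑ i ∈ J, p i ≤ ∑ i ∈ J, q i := sum_le_sum fun i _ => hpq i
    unfold surplus at h1 ⊢
    linarith
  · intro i hi hpi
    grind

theorem GS.snc [Fintype N] [DecidableEq N] {f : Finset N → WithBot ℝ} (hdom : ∃ X, f X ≠ ⊥)
    (h : GS f) : SNC f := by
  classical
  intro X Y I hI
  by_cases hX : f X = ⊥
  · exact ⟨∅, empty_subset _, by simp [hX]⟩
  by_cases hY : f Y = ⊥
  · exact ⟨∅, empty_subset _, by simp [hY]⟩
  obtain ⟨J, hJ, hA, hB, hle⟩ := exchange_of_grossSubstitutes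
    (F := univ.filter fun Z => f Z ≠ ⊥) (g := fun S => (f S).unbotD 0) (by
      intro p q hpq X hX hmax
      simp only [mem_filter, mem_univ, true_and] at hX hmax ⊢
      obtain ⟨Y, hY, hsub⟩ := h p q hpq X ((mem_demand_iff hdom).2 ⟨hX, hmax⟩)
      obtain ⟨hY0, hYmax⟩ := (mem_demand_iff hdom).1 hY
      exact ⟨Y, hY0, hYmax, hsub⟩)
    (by simpa using hX) (by simpa using hY) hI
  refine ⟨J, hJ, ?_⟩
  rw [← coe_unbotD_of_ne_bot hX, ← coe_unbotD_of_ne_bot hY,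
    ← coe_unbotD_of_ne_bot (mem_filter.1 hA).2, ← coe_unbotD_of_ne_bot (mem_filter.1 hB).2]
  exact_mod_cast hle

end WithBotValued

theorem snc_iff_gs {N : Type*} [Fintype N] [DecidableEq N]
    (f : Finset N → WithBot ℝ) (hdom : ∃ X, f X ≠ ⊥) :
    SNC f ↔ GS f :=
  ⟨SNC.gs hdom, GS.snc hdom⟩
end

section
/- Let f : 2^N → ℝ ∪ {-∞} be a set function whose effective domain dom f satisfies the exchange property (B♮-EXC). If f satisfies the multiple exchange property (M♮-EXC_m), then f satisfies the exchange property (M♮-EXC). -/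
open Finset

/-- (B♮-EXC): exchange property for set families. -/
def BExc {N : Type*} [DecidableEq N] (F : Set (Finset N)) : Prop :=
  ∀ X ∈ F, ∀ Y ∈ F, ∀ i ∈ X \ Y,
    (X.erase i ∈ F ∧ insert i Y ∈ F) ∨
      ∃ j ∈ Y \ X, insert j (X.erase i) ∈ F ∧ (insert i Y).erase j ∈ F

namespace MExcM

variable {N : Type*} [DecidableEq N] {f : Finset N → WithBot ℝ}

/-- Three-term local exchange, two added elements against none. -/
lemma add_le_of_pair (hf : MExcM f) {Z : Finset N} {a b : N} (ha : a ∉ Z)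
    (hab : a ≠ b) :
    f Z + f (insert a (insert b Z)) ≤ f (insert a Z) + f (insert b Z) := by
  obtain ⟨J, hJ, h⟩ := hf (insert a (insert b Z)) Z {a} (by grind)
  obtain rfl : J = ∅ := by grind
  have e1 : (insert a (insert b Z)) \ {a} ∪ ∅ = insert b Z := by grind
  have e2 : Z \ ∅ ∪ {a} = insert a Z := by grind
  rw [e1, e2] at h
  rwa [add_comm (f Z), add_comm (f (insert a Z))]

/-- Three-term local exchange, two added elements against one. -/
lemma add_le_of_triple (hf : MExcM f) {Z : Finset N} {a b c : N} (ha : a ∉ Z) (hc : c ∉ Z)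
    (hab : a ≠ b) (hac : a ≠ c) :
    f (insert c Z) + f (insert a (insert b Z)) ≤
      max (f (insert a Z) + f (insert b (insert c Z)))
        (f (insert b Z) + f (insert a (insert c Z))) := by
  obtain ⟨J, hJ, h⟩ := hf (insert a (insert b Z)) (insert c Z) {a} (by grind)
  rw [add_comm] at h
  refine h.trans ?_
  by_cases hcJ : c ∈ J
  · obtain rfl : J = {c} := by grind
    have e1 : (insert a (insert b Z)) \ {a} ∪ {c} = insert b (insert c Z) := by grind
    have e2 : (insert c Z) \ {c} ∪ {a} = insert a Z := by grind
    rw [e1, e2, add_comm]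
    exact le_max_left _ _
  · obtain rfl : J = ∅ := by grind
    have e1 : (insert a (insert b Z)) \ {a} ∪ ∅ = insert b Z := by grind
    have e2 : (insert c Z) \ ∅ ∪ {a} = insert a (insert c Z) := by grind
    rw [e1, e2]
    exact le_max_right _ _

/-- Single-element exchange between two disjoint pairs, including the unbalanced outcomes. -/
lemma pair_pair_le_s13 (hf : MExcM f) {Z : Finset N} {i j k l : N} (hi : i ∉ Z) (hij : i ≠ j)
    (hik : i ≠ k) (hil : i ≠ l) :
    f (insert i (insert j Z)) + f (insert k (insert l Z)) ≤
        f (insert i (insert k Z)) + f (insert j (insert l Z)) ∨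
      f (insert i (insert j Z)) + f (insert k (insert l Z)) ≤
        f (insert i (insert l Z)) + f (insert j (insert k Z)) ∨
      f (insert i (insert j Z)) + f (insert k (insert l Z)) ≤
        f (insert i Z) + f (insert j (insert k (insert l Z))) ∨
      f (insert i (insert j Z)) + f (insert k (insert l Z)) ≤
        f (insert j Z) + f (insert i (insert k (insert l Z))) := by
  obtain ⟨J, hJ, h⟩ := hf (insert i (insert j Z)) (insert k (insert l Z)) {i} (by grind)
  by_cases hkJ : k ∈ J <;> by_cases hlJ : l ∈ J
  · have e1 : (insert i (insert j Z)) \ {i} ∪ J = insert j (insert k (insert l Z)) := by grind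
    have e2 : (insert k (insert l Z)) \ J ∪ {i} = insert i Z := by grind
    rw [e1, e2, add_comm (f (insert j _))] at h
    exact .inr (.inr (.inl h))
  · have e1 : (insert i (insert j Z)) \ {i} ∪ J = insert j (insert k Z) := by grind
    have e2 : (insert k (insert l Z)) \ J ∪ {i} = insert i (insert l Z) := by grind
    rw [e1, e2, add_comm (f (insert j _))] at h
    exact .inr (.inl h)
  · have e1 : (insert i (insert j Z)) \ {i} ∪ J = insert j (insert l Z) := by grind
    have e2 : (insert k (insert l Z)) \ J ∪ {i} = insert i (insert k Z) := by grind
    rw [e1, e2, add_comm (f (insert j _))] at h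
    exact .inl h
  · have e1 : (insert i (insert j Z)) \ {i} ∪ J = insert j Z := by grind
    have e2 : (insert k (insert l Z)) \ J ∪ {i} = insert i (insert k (insert l Z)) := by grind
    rw [e1, e2] at h
    exact .inr (.inr (.inr h))

/-- Single-element exchange between a triple and a disjoint singleton. -/
lemma single_triple_le (hf : MExcM f) {Z : Finset N} {i j k l : N} (hk : k ∉ Z) (hik : i ≠ k)
    (hjk : j ≠ k) (hkl : k ≠ l) :
    f (insert i Z) + f (insert j (insert k (insert l Z))) ≤
        f (insert i (insert k Z)) + f (insert j (insert l Z)) ∨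
      f (insert i Z) + f (insert j (insert k (insert l Z))) ≤
        f (insert k Z) + f (insert i (insert j (insert l Z))) := by
  obtain ⟨J, hJ, h⟩ := hf (insert j (insert k (insert l Z))) (insert i Z) {k} (by grind)
  rw [add_comm] at h
  by_cases hiJ : i ∈ J
  · have e1 : (insert j (insert k (insert l Z))) \ {k} ∪ J = insert i (insert j (insert l Z)) := by
      grind
    have e2 : (insert i Z) \ J ∪ {k} = insert k Z := by grind
    rw [e1, e2, add_comm (f (insert i (insert j _)))] at h
    exact .inr h
  · have e1 : (insert j (insert k (insert l Z))) \ {k} ∪ J = insert j (insert l Z) := by grind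
    have e2 : (insert i Z) \ J ∪ {k} = insert i (insert k Z) := by grind
    rw [e1, e2, add_comm (f (insert j _))] at h
    exact .inl h

end MExcM

lemma WithBot.ne_bot_of_add_le_add {a b c d : WithBot ℝ} (ha : a ≠ ⊥) (hb : b ≠ ⊥)
    (h : a + b ≤ c + d) : c ≠ ⊥ ∧ d ≠ ⊥ := by
  constructor <;> rintro rfl <;> simp_all

/-- Four-point condition from the three-term relations when three of the four singleton values
are finite. -/
lemma pair_pair_le_of_triangles {fi fj fk fl pij pkl pik pjl pil pjk : WithBot ℝ}
    (hi : fi ≠ ⊥) (hk : fk ≠ ⊥) (hl : fl ≠ ⊥)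
    (h1 : fk + pij ≤ max (fi + pjk) (fj + pik)) (h2 : fl + pij ≤ max (fi + pjl) (fj + pil))
    (h3 : fi + pkl ≤ max (fk + pil) (fl + pik)) (h4 : fj + pkl ≤ max (fk + pjl) (fl + pjk)) :
    pij + pkl ≤ max (pik + pjl) (pil + pjk) := by
  by_contra! hlt
  obtain ⟨hB, hC⟩ := max_lt_iff.1 hlt
  have hA := WithBot.add_ne_bot.1 (ne_bot_of_gt hB)
  lift fi to ℝ using hi
  lift fk to ℝ using hk
  lift fl to ℝ using hl
  obtain ⟨hij, hkl⟩ := hA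
  lift pij to ℝ using hij
  lift pkl to ℝ using hkl
  induction fj using WithBot.recBotCoe <;> induction pik using WithBot.recBotCoe <;>
  induction pjl using WithBot.recBotCoe <;> induction pil using WithBot.recBotCoe <;>
  induction pjk using WithBot.recBotCoe <;>
  simp only [WithBot.bot_add, WithBot.add_bot, le_bot_iff, ← WithBot.coe_add, WithBot.coe_ne_bot,
    le_max_iff, WithBot.coe_le_coe, WithBot.coe_lt_coe, or_false, false_or, or_self]
    at h1 h2 h3 h4 hB hC <;>
  grind

/-- Three-term local exchange between two disjoint pairs. -/
lemma MExcM.add_le_of_quadruple {N : Type*} [DecidableEq N] {f : Finset N → WithBot ℝ}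
    (hf : MExcM f) {Z : Finset N} {i j k l : N} (hi : i ∉ Z) (hj : j ∉ Z)
    (hk : k ∉ Z) (hl : l ∉ Z) (hij : i ≠ j) (hik : i ≠ k) (hil : i ≠ l) (hjk : j ≠ k)
    (hjl : j ≠ l) (hkl : k ≠ l) :
    f (insert i (insert j Z)) + f (insert k (insert l Z)) ≤
      max (f (insert i (insert k Z)) + f (insert j (insert l Z)))
        (f (insert i (insert l Z)) + f (insert j (insert k Z))) := by
  wlog h : f (insert i (insert j Z)) + f (insert k (insert l Z)) ≤
      f (insert i Z) + f (insert j (insert k (insert l Z))) generalizing i j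
  · rcases hf.pair_pair_le_s13 hi hij hik hil with h' | h' | h' | h'
    · exact le_max_of_le_left h'
    · exact le_max_of_le_right h'
    · exact absurd h' h
    · have := this hj hi hij.symm hjk hjl hik hil (by rwa [Finset.insert_comm j i])
      rw [Finset.insert_comm j i, max_comm, add_comm (f (insert j (insert l Z))),
        add_comm (f (insert j (insert k Z)))] at this
      exact this
  by_contra! hlt
  have hA := WithBot.add_ne_bot.1 (ne_bot_of_gt hlt)
  obtain ⟨hB, hC⟩ := max_lt_iff.1 hlt
  have hfi := WithBot.ne_bot_of_add_le_add hA.1 hA.2 h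
  have hfk : f (insert k Z) ≠ ⊥ := by
    rcases hf.single_triple_le hk hik hjk hkl with h' | h'
    · exact absurd (h.trans h') hB.not_ge
    · exact (WithBot.ne_bot_of_add_le_add hfi.1 hfi.2 h').1
  have hfl : f (insert l Z) ≠ ⊥ := by
    rw [Finset.insert_comm k l] at hfi
    rcases hf.single_triple_le (i := i) (j := j) hl hil hjl hkl.symm with h' | h' <;>
      rw [Finset.insert_comm l k] at h'
    · exact absurd (h.trans h') hC.not_ge
    · exact (WithBot.ne_bot_of_add_le_add hfi.1 (Finset.insert_comm k l Z ▸ hfi.2) h').1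
  refine hlt.not_ge (pair_pair_le_of_triangles hfi.1 hfk hfl (fj := f (insert j Z)) ?_ ?_ ?_ ?_)
  · exact hf.add_le_of_triple hi hk hij hik
  · exact hf.add_le_of_triple hi hl hij hil
  · have := hf.add_le_of_triple hk hi hkl hik.symm
    rwa [Finset.insert_comm l i, Finset.insert_comm k i] at this
  · have := hf.add_le_of_triple hk hj hkl hjk.symm
    rwa [Finset.insert_comm l j, Finset.insert_comm k j] at this

/-- Local exchange `Y ↦ Y + a + b - u - v` where each of `u`, `v` may be absent. -/
lemma MExcM.local_exchange {N : Type*} [DecidableEq N] {f : Finset N → WithBot ℝ}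
    (hf : MExcM f) {Y : Finset N} {a b : N} (ha : a ∉ Y) (hb : b ∉ Y) (hab : a ≠ b)
    {u v : Option N} (hu : u.toFinset ⊆ Y) (hv : v.toFinset ⊆ Y \ u.toFinset) :
    f Y + f (insert b (insert a Y \ u.toFinset) \ v.toFinset) ≤
      max (f (insert a Y \ u.toFinset) + f (insert b Y \ v.toFinset))
        (f (insert a Y \ v.toFinset) + f (insert b Y \ u.toFinset)) := by
  rcases u with _ | u <;> rcases v with _ | v <;>
    simp only [Option.toFinset_none, Option.toFinset_some, sdiff_empty] at hu hv ⊢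
  · rw [Finset.insert_comm b a, max_self]
    exact hf.add_le_of_pair ha hab
  · have h := hf.add_le_of_triple (Z := Y.erase v) (a := a) (b := b) (c := v)
      (by grind) (by grind) hab (by grind)
    rw [show insert v (Y.erase v) = Y by grind] at h
    rw [show insert b (insert a Y) \ {v} = insert a (insert b (Y.erase v)) by grind,
      show insert a Y \ {v} = insert a (Y.erase v) by grind,
      show insert b Y \ {v} = insert b (Y.erase v) by grind]
    rwa [max_comm, add_comm (f (insert a Y))]
  · have h := hf.add_le_of_triple (Z := Y.erase u) (a := a) (b := b) (c := u)
      (by grind) (by grind) hab (by grind)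
    rw [show insert u (Y.erase u) = Y by grind] at h
    rw [show insert b (insert a Y \ {u}) = insert a (insert b (Y.erase u)) by grind,
      show insert a Y \ {u} = insert a (Y.erase u) by grind,
      show insert b Y \ {u} = insert b (Y.erase u) by grind]
    rwa [add_comm (f (insert a Y))]
  · have h := hf.add_le_of_quadruple (Z := (Y.erase u).erase v) (i := v) (j := u) (k := a) (l := b)
      (by grind) (by grind) (by grind) (by grind) (by grind) (by grind) (by grind) (by grind)
      (by grind) hab
    rw [show insert v (insert u ((Y.erase u).erase v)) = Y by grind] at h
    rw [show insert b (insert a Y \ {u}) \ {v} = insert a (insert b ((Y.erase u).erase v)) by grind,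
      show insert a Y \ {u} = insert v (insert a ((Y.erase u).erase v)) by grind,
      show insert b Y \ {u} = insert v (insert b ((Y.erase u).erase v)) by grind,
      show insert a Y \ {v} = insert u (insert a ((Y.erase u).erase v)) by grind,
      show insert b Y \ {v} = insert u (insert b ((Y.erase u).erase v)) by grind]
    rwa [add_comm (f (insert u (insert a _)))]

/-- Local exchange `Y ↦ Y + i - u - v`. -/
lemma MExcM.local_exchange_erase {N : Type*} [DecidableEq N] {f : Finset N → WithBot ℝ}
    (hf : MExcM f) {Y : Finset N} {i u v : N} (hu : u ∈ Y) (hv : v ∈ Y) (huv : u ≠ v)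
    (hi : i ∉ Y) :
    f Y + f ((insert i (Y.erase u)).erase v) ≤
      max (f (Y.erase u) + f ((insert i Y).erase v))
        (f (Y.erase v) + f ((insert i Y).erase u)) := by
  have h := hf.add_le_of_triple (Z := (Y.erase u).erase v) (a := v) (b := u) (c := i)
      (by grind) (by grind) (by grind) (by grind)
  rw [show insert v (insert u ((Y.erase u).erase v)) = Y by grind,
    show insert v ((Y.erase u).erase v) = Y.erase u by grind,
    show insert u ((Y.erase u).erase v) = Y.erase v by grind,
    show insert u (insert i ((Y.erase u).erase v)) = (insert i Y).erase v by grind,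
    show insert v (insert i ((Y.erase u).erase v)) = (insert i Y).erase u by grind,
    add_comm] at h
  rwa [show (insert i (Y.erase u)).erase v = insert i ((Y.erase u).erase v) by grind]

/-- Descent step: if every exchange `v ∈ S` strictly decreases `x + y`, a suitable `u ∈ S`
maximizing `γ` up to a potential yields a pair `x`, `γ u` for which this persists. -/
lemma exists_descent {ι : Type*} {S : Finset ι} {x y : WithBot ℝ} {α β γ : ι → WithBot ℝ}
    {δ : ι → ι → WithBot ℝ} (hx : x ≠ ⊥) (hy : y ≠ ⊥) (hαβ : ∀ v ∈ S, α v + β v < x + y)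
    (hγ : ∃ v ∈ S, γ v ≠ ⊥) :
    ∃ u ∈ S, γ u ≠ ⊥ ∧ ∀ v ∈ S, y + δ u v ≤ max (γ u + β v) (γ v + β u) →
      α v + δ u v < x + γ u := by
  lift x to ℝ using hx
  lift y to ℝ using hy
  have hq : ∀ v ∈ S, ∃ q : ℝ, (α v ≠ ⊥ → α v + q = x) ∧ β v < y + q := by
    intro v hv
    have h := hαβ v hv
    generalize α v = a at h ⊢
    generalize β v = b at h ⊢
    induction a using WithBot.recBotCoe with
    | bot =>
      induction b using WithBot.recBotCoe with
      | bot => exact ⟨0, by simp, by norm_cast; exact WithBot.bot_lt_coe _⟩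
      | coe b => exact ⟨b - y + 1, by simp, by norm_cast; linarith⟩
    | coe a =>
      refine ⟨x - a, fun _ => by norm_cast; ring, ?_⟩
      induction b using WithBot.recBotCoe with
      | bot => norm_cast; exact WithBot.bot_lt_coe _
      | coe b => norm_cast at h ⊢; linarith
  choose! q hq1 hq2 using hq
  obtain ⟨w, hw, hγw⟩ := hγ
  obtain ⟨u, hu, hmax⟩ := S.exists_max_image (fun v => γ v + ((-q v : ℝ) : WithBot ℝ)) ⟨w, hw⟩
  have hγu : γ u ≠ ⊥ := by
    intro h
    have := hmax w hw
    simp [h, hγw] at this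
  refine ⟨u, hu, hγu, fun v hv hloc => ?_⟩
  have hm := hmax v hv
  have h1 := hq1 v hv
  have h2 := hq2 v hv
  have h3 := hq2 u hu
  beta_reduce at hm
  generalize γ u = gu at *
  generalize γ v = gv at *
  generalize α v = av at *
  generalize β v = bv at *
  generalize β u = bu at *
  generalize δ u v = d at *
  lift gu to ℝ using hγu
  induction av using WithBot.recBotCoe with
  | bot => rw [WithBot.bot_add]; exact_mod_cast WithBot.bot_lt_coe _
  | coe av =>
  induction d using WithBot.recBotCoe with
  | bot => rw [WithBot.add_bot]; exact_mod_cast WithBot.bot_lt_coe _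
  | coe d =>
  have h1 := h1 (WithBot.coe_ne_bot)
  norm_cast at h1 ⊢
  rcases le_max_iff.1 hloc with h | h
  · induction bv using WithBot.recBotCoe with
    | bot => simp [← WithBot.coe_add] at h
    | coe bv => norm_cast at h h2; linarith
  · induction bu using WithBot.recBotCoe with
    | bot => simp [← WithBot.coe_add] at h
    | coe bu =>
    induction gv using WithBot.recBotCoe with
    | bot => simp [← WithBot.coe_add] at h
    | coe gv => norm_cast at h h3 hm; linarith

/-- When `X \ Y` is a singleton and `Y \ X` is nonempty, a proper exchange exists. -/
lemma MExcM.exists_exchange_of_sdiff_eq_singleton {N : Type*} [DecidableEq N]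
    {f : Finset N → WithBot ℝ} (hf : MExcM f) (hdom : BExc {X : Finset N | f X ≠ ⊥})
    {X Y : Finset N} {i : N} (hX : f X ≠ ⊥) (hY : f Y ≠ ⊥) (hi : X \ Y = {i})
    (hne : (Y \ X).Nonempty) :
    ∃ j ∈ Y \ X, f X + f Y ≤ f (insert j (X.erase i)) + f ((insert i Y).erase j) := by
  induction hn : (Y \ X).card using Nat.strong_induction_on generalizing Y with
  | _ n ih =>
  subst hn
  have hiX : i ∈ X ∧ i ∉ Y := mem_sdiff.1 (hi ▸ mem_singleton_self i)
  have hXY : ∀ x ∈ X, x ∉ Y → x = i := fun x h h' => by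
    simpa [hi] using (mem_sdiff.2 ⟨h, h'⟩ : x ∈ X \ Y)
  obtain ⟨v, hv⟩ := hne
  by_cases hone : Y \ X = {v}
  · refine ⟨v, hv, ?_⟩
    have hYX : ∀ y ∈ Y, y ∉ X → y = v := fun x h h' => by
      simpa [hone] using (mem_sdiff.2 ⟨h, h'⟩ : x ∈ Y \ X)
    rw [show insert v (X.erase i) = Y by grind, show (insert i Y).erase v = X by grind, add_comm]
  obtain ⟨w, hw, hwv⟩ : ∃ w ∈ Y \ X, w ≠ v := by
    by_contra! h
    exact hone (eq_singleton_iff_unique_mem.2 ⟨hv, h⟩)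
  by_contra! hcon
  have hdel : ∃ u ∈ Y \ X, f (Y.erase u) ≠ ⊥ := by
    rcases hdom Y hY X hX v hv with h | ⟨j, hj, -, hXj⟩
    · exact ⟨v, hv, h.1⟩
    · obtain rfl : j = i := by simpa [hi] using hj
      rcases hdom Y hY _ hXj w (by grind) with h | ⟨k, hk, -⟩
      · exact ⟨w, hw, h.1⟩
      · grind
  obtain ⟨u, hu, hfu, hdesc⟩ := exists_descent (S := Y \ X)
    (δ := fun u v => f ((insert i (Y.erase u)).erase v)) hX hY hcon hdel
  have hne' : (Y.erase u \ X).Nonempty := by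
    by_cases huv : u = v
    · exact ⟨w, by grind⟩
    · exact ⟨v, by grind⟩
  obtain ⟨j, hj, hle⟩ := ih (Y.erase u \ X).card
    (Finset.card_lt_card ⟨by grind, fun h => by have := h hu; grind⟩) hfu (by grind) hne' rfl
  refine hle.not_gt (hdesc j (by grind) (hf.local_exchange_erase (by grind) (by grind) (by grind) hiX.2))

/-- The exchange property in terms of an optional exchanged element. -/
lemma MExcM.exists_option_exchange {N : Type*} [DecidableEq N]
    {f : Finset N → WithBot ℝ} (hf : MExcM f) (hdom : BExc {X : Finset N | f X ≠ ⊥})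
    {X Y : Finset N} {i : N} (hX : f X ≠ ⊥) (hY : f Y ≠ ⊥) (hi : i ∈ X \ Y) :
    ∃ v ∈ insertNone (Y \ X),
      f X + f Y ≤ f (X.erase i ∪ v.toFinset) + f (insert i Y \ v.toFinset) := by
  induction hn : (X \ Y).card using Nat.strong_induction_on generalizing Y with
  | _ n ih =>
  subst hn
  by_cases hone : X \ Y = {i}
  · rcases (Y \ X).eq_empty_or_nonempty with he | hne
    · refine ⟨none, by simp, ?_⟩
      have h1 : ∀ x ∈ X, x ∉ Y → x = i := fun x h h' => by
        simpa [hone] using (mem_sdiff.2 ⟨h, h'⟩ : x ∈ X \ Y)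
      have h2 : Y ⊆ X := sdiff_eq_empty_iff_subset.1 he
      rw [Option.toFinset_none, union_empty, sdiff_empty, show X.erase i = Y by grind,
        show insert i Y = X by grind, add_comm]
    · obtain ⟨j, hj, h⟩ := hf.exists_exchange_of_sdiff_eq_singleton hdom hX hY hone hne
      refine ⟨some j, by simpa using hj, ?_⟩
      rwa [Option.toFinset_some, union_comm, ← insert_eq, sdiff_singleton_eq_erase]
  obtain ⟨a, ha, hai⟩ : ∃ a ∈ X \ Y, a ≠ i := by
    by_contra! h
    exact hone (eq_singleton_iff_unique_mem.2 ⟨hi, h⟩)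
  by_contra! hcon
  have hmove : ∃ v ∈ insertNone (Y \ X), f (insert a Y \ v.toFinset) ≠ ⊥ := by
    rcases hdom X hX Y hY a ha with h | ⟨j, hj, -, h⟩
    · exact ⟨none, by simp, by simpa using h.2⟩
    · exact ⟨some j, by simpa using hj, by simpa [sdiff_singleton_eq_erase] using h⟩
  obtain ⟨u, hu, hfu, hdesc⟩ := exists_descent (S := insertNone (Y \ X))
    (δ := fun u v => f (insert i (insert a Y \ u.toFinset) \ v.toFinset)) hX hY hcon hmove
  have huY : u.toFinset ⊆ Y \ X := by
    intro x hx
    exact mem_insertNone.1 hu x (by simpa using hx)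
  have hlt : (X \ (insert a Y \ u.toFinset)).card < (X \ Y).card :=
    Finset.card_lt_card ⟨by grind, fun h => by have := h ha; grind⟩
  obtain ⟨v, hv, hle⟩ := ih _ hlt hfu (by grind) rfl
  have hvY : v.toFinset ⊆ (insert a Y \ u.toFinset) \ X := by
    intro x hx
    exact mem_insertNone.1 hv x (by simpa using hx)
  have hv' : v ∈ insertNone (Y \ X) := by
    refine mem_insertNone.2 fun x hx => ?_
    have := hvY (Option.mem_toFinset.2 hx)
    grind
  exact hle.not_gt (hdesc v hv' (hf.local_exchange (by grind) (by grind) hai (by grind) (by grind)))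

theorem mexcm_implies_mexc_of_dom_bexc {N : Type*} [Fintype N] [DecidableEq N]
    (f : Finset N → WithBot ℝ) (hdom : BExc {X : Finset N | f X ≠ ⊥})
    (hf : MExcM f) : MExc f := by
  intro X Y i hi
  by_cases hX : f X = ⊥
  · simp [hX]
  by_cases hY : f Y = ⊥
  · simp [hY]
  obtain ⟨_ | j, hv, h⟩ := hf.exists_option_exchange hdom hX hY hi
  · exact le_max_of_le_left (by simpa using h)
  · rw [Option.toFinset_some, union_comm, ← insert_eq, sdiff_singleton_eq_erase] at h
    exact le_max_of_le_right (h.trans (le_sup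
      (f := fun j => f (insert j (X.erase i)) + f ((insert i Y).erase j)) (by simpa using hv)))
end
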